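/- arXiv:2409.15258 — 3 statements merged into one kernel-verified Lean document; each statement's English description precedes it below -/
import Mathlib

section
/- Let 0 < α < 1/2 and let n be such that α²n ≥ 7 and αn > 220. Then every n-vertex rainbow K_4-saturated graph has at least (7/2)n − 8αn edges. -/
open SimpleGraph

/-- A proper edge-coloring of `G`: distinct edges sharing a vertex get distinct colors. -/
def IsProperEdgeColoring {V : Type} (G : SimpleGraph V) (c : Sym2 V → ℕ) : Prop :=
  ∀ e₁ ∈ G.edgeSet, ∀ e₂ ∈ G.edgeSet, e₁ ≠ e₂ → (∃ v, v ∈ e₁ ∧ v ∈ e₂) → c e₁ ≠ c e₂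

/-- `G` contains a rainbow copy of `H` under the edge-coloring `c`. -/
def HasRainbowCopy {V W : Type} (G : SimpleGraph V) (H : SimpleGraph W)
    (c : Sym2 V → ℕ) : Prop :=
  ∃ f : W → V, Function.Injective f ∧ (∀ a b, H.Adj a b → G.Adj (f a) (f b)) ∧
    ∀ e₁ ∈ H.edgeSet, ∀ e₂ ∈ H.edgeSet, e₁ ≠ e₂ → c (Sym2.map f e₁) ≠ c (Sym2.map f e₂)

/-- `G` is (properly) rainbow `H`-saturated. -/
def IsRainbowSat {V W : Type} (G : SimpleGraph V) (H : SimpleGraph W) : Prop :=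
  (∃ c : Sym2 V → ℕ, IsProperEdgeColoring G c ∧ ¬ HasRainbowCopy G H c) ∧
  ∀ u v : V, u ≠ v → ¬ G.Adj u v →
    ∀ c : Sym2 V → ℕ,
      IsProperEdgeColoring (G ⊔ SimpleGraph.fromEdgeSet {s(u, v)}) c →
      HasRainbowCopy (G ⊔ SimpleGraph.fromEdgeSet {s(u, v)}) H c


namespace RS
open Classical

variable {V : Type}

/-- Some opposite pair of the four-clique `a b p q` is monochromatic. -/
def Kill (c : Sym2 V → ℕ) (a b p q : V) : Prop :=
  c s(a, b) = c s(p, q) ∨ c s(a, p) = c s(b, q) ∨ c s(a, q) = c s(b, p)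

def K4 (G : SimpleGraph V) (a b p q : V) : Prop :=
  G.Adj a b ∧ G.Adj a p ∧ G.Adj a q ∧ G.Adj b p ∧ G.Adj b q ∧ G.Adj p q

def Proper (G : SimpleGraph V) (c : Sym2 V → ℕ) : Prop :=
  ∀ a b d, G.Adj a b → G.Adj a d → b ≠ d → c s(a, b) ≠ c s(a, d)

def Good (G : SimpleGraph V) (c : Sym2 V → ℕ) : Prop :=
  Proper G c ∧ ∀ a b p q, K4 G a b p q → Kill c a b p q

def Sat (G : SimpleGraph V) : Prop :=
  ∀ u v, u ≠ v → ¬ G.Adj u v → ∀ c : Sym2 V → ℕ, Good G c →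
    (∀ x, G.Adj u x → c s(u, x) ≠ c s(u, v)) →
    (∀ x, G.Adj v x → c s(v, x) ≠ c s(u, v)) →
    (∀ p q, G.Adj u p → G.Adj u q → G.Adj v p → G.Adj v q → G.Adj p q → Kill c u v p q) → False

lemma proper_of (G : SimpleGraph V) (c : Sym2 V → ℕ) (h : IsProperEdgeColoring G c) :
    Proper G c := by
  intro a b d hb hd hne
  refine h s(a, b) hb s(a, d) hd ?_ ⟨a, by simp, by simp⟩
  intro h
  simp only [Sym2.eq_iff] at h
  grind

lemma of_proper (G : SimpleGraph V) (c : Sym2 V → ℕ) (h : Proper G c) :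
    IsProperEdgeColoring G c := by
  intro e₁ h1 e₂ h2 hne ⟨v, hv1, hv2⟩
  obtain ⟨a, rfl⟩ := Sym2.mem_iff_exists.1 hv1
  obtain ⟨b, rfl⟩ := Sym2.mem_iff_exists.1 hv2
  exact h v a b h1 h2 (by rintro rfl; exact hne rfl)

lemma rainbow_of (G : SimpleGraph V) (c : Sym2 V → ℕ) (hp : Proper G c) (a b p q : V)
    (hk : K4 G a b p q) (hn : ¬ Kill c a b p q) :
    HasRainbowCopy G (⊤ : SimpleGraph (Fin 4)) c := by
  obtain ⟨h1, h2, h3, h4, h5, h6⟩ := hk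
  have n1 := h1.ne
  have n2 := h2.ne
  have n3 := h3.ne
  have n4 := h4.ne
  have n5 := h5.ne
  have n6 := h6.ne
  have k1 := hp a b p h1 h2 n4
  have k2 := hp a b q h1 h3 n5
  have k3 := hp a p q h2 h3 n6
  have k4 := hp b a p h1.symm h4 n2
  have k5 := hp b a q h1.symm h5 n3
  have k6 := hp b p q h4 h5 n6
  have k7 := hp p a b h2.symm h4.symm n1
  have k8 := hp p a q h2.symm h6 n3
  have k9 := hp p b q h4.symm h6 n5
  have k10 := hp q a b h3.symm h5.symm n1
  have k11 := hp q a p h3.symm h6.symm n2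
  have k12 := hp q b p h5.symm h6.symm n4
  have s1 : s(b, a) = s(a, b) := Sym2.eq_swap
  have s2 : s(p, a) = s(a, p) := Sym2.eq_swap
  have s3 : s(q, a) = s(a, q) := Sym2.eq_swap
  have s4 : s(p, b) = s(b, p) := Sym2.eq_swap
  have s5 : s(q, b) = s(b, q) := Sym2.eq_swap
  have s6 : s(q, p) = s(p, q) := Sym2.eq_swap
  unfold Kill at hn
  push Not at hn
  refine ⟨![a, b, p, q], ?_, ?_, ?_⟩
  · intro i j hij
    fin_cases i <;> fin_cases j <;> simp_all
  · intro i j hij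
    fin_cases i <;> fin_cases j <;> simp_all [G.adj_comm]
  · intro e₁ h1 e₂ h2 hne
    induction e₁ with | _ i j
    induction e₂ with | _ k l
    have hij : i ≠ j := by simpa using h1
    have hkl : k ≠ l := by simpa using h2
    rw [Ne, Sym2.eq_iff] at hne
    simp only [Sym2.map_mk]
    have hcase : ∀ i : Fin 4, i = 0 ∨ i = 1 ∨ i = 2 ∨ i = 3 := by decide
    rcases hcase i with rfl | rfl | rfl | rfl <;> rcases hcase j with rfl | rfl | rfl | rfl <;>
      (try (exact absurd rfl hij)) <;>
      rcases hcase k with rfl | rfl | rfl | rfl <;> rcases hcase l with rfl | rfl | rfl | rfl <;>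
      (try (exact absurd rfl hkl)) <;>
      (try (exact absurd (Or.inl ⟨rfl, rfl⟩) hne)) <;>
      (try (exact absurd (Or.inr ⟨rfl, rfl⟩) hne)) <;>
      simp only [Matrix.cons_val] <;> clear hne hij hkl h1 h2 <;> grind

lemma not_rainbow_of (G : SimpleGraph V) (c : Sym2 V → ℕ)
    (h : ∀ a b p q, K4 G a b p q → Kill c a b p q) :
    ¬ HasRainbowCopy G (⊤ : SimpleGraph (Fin 4)) c := by
  rintro ⟨f, hf, hadj, hr⟩
  have hA : ∀ i j : Fin 4, i ≠ j → G.Adj (f i) (f j) := fun i j hij => hadj i j hij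
  have := h (f 0) (f 1) (f 2) (f 3) ⟨hA _ _ (by decide), hA _ _ (by decide), hA _ _ (by decide),
    hA _ _ (by decide), hA _ _ (by decide), hA _ _ (by decide)⟩
  rcases this with h | h | h
  · exact hr s(0, 1) (by simp) s(2, 3) (by simp) (by decide) h
  · exact hr s(0, 2) (by simp) s(1, 3) (by simp) (by decide) h
  · exact hr s(0, 3) (by simp) s(1, 2) (by simp) (by decide) h

lemma sat_of (G : SimpleGraph V) (h : IsRainbowSat G (⊤ : SimpleGraph (Fin 4))) :
    (∃ c, Good G c) ∧ Sat G := by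
  obtain ⟨⟨c, hc, hn⟩, hs⟩ := h
  refine ⟨⟨c, proper_of G c hc, ?_⟩, ?_⟩
  · intro a b p q hk
    by_contra hcon
    exact hn (rainbow_of G c (proper_of G c hc) a b p q hk hcon)
  · intro u v huv hadj c' hg hu hv hk
    have key : ∀ x y, (G ⊔ SimpleGraph.fromEdgeSet {s(u, v)}).Adj x y ↔
        (G.Adj x y ∨ (x = u ∧ y = v) ∨ (x = v ∧ y = u)) := by
      intro x y
      simp only [SimpleGraph.sup_adj, SimpleGraph.fromEdgeSet_adj, Set.mem_singleton_iff,
        Sym2.eq_iff]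
      grind
    have hp : Proper (G ⊔ SimpleGraph.fromEdgeSet {s(u, v)}) c' := by
      intro a b d hab had hbd
      rw [key] at hab had
      have s1 : s(v, u) = s(u, v) := Sym2.eq_swap
      rcases hab with hab | ⟨rfl, rfl⟩ | ⟨rfl, rfl⟩ <;>
        rcases had with had | ⟨h1, h2⟩ | ⟨h1, h2⟩
      · exact hg.1 a b d hab had hbd
      · subst h1 h2; exact hu b hab
      · subst h1 h2; rw [s1]; exact hv b hab
      · exact (hu d had).symm
      · grind
      · grind
      · rw [s1]; exact (hv d had).symm
      · grind
      · grind
    refine not_rainbow_of _ c' ?_ (hs u v huv hadj c' (of_proper _ _ hp))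
    have hk' : ∀ p q, G.Adj u p → G.Adj u q → G.Adj v p → G.Adj v q → G.Adj p q →
        (c' s(u, v) = c' s(p, q) ∨ c' s(u, p) = c' s(v, q) ∨ c' s(u, q) = c' s(v, p)) := hk
    have sw : ∀ x y : V, c' s(x, y) = c' s(y, x) := fun x y => by rw [Sym2.eq_swap]
    rintro a b p q ⟨h1, h2, h3, h4, h5, h6⟩
    have n1 := h1.ne
    have n2 := h2.ne
    have n3 := h3.ne
    have n4 := h4.ne
    have n5 := h5.ne
    have n6 := h6.ne
    rw [key] at h1 h2 h3 h4 h5 h6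
    unfold Kill
    by_cases hall : G.Adj a b ∧ G.Adj a p ∧ G.Adj a q ∧ G.Adj b p ∧ G.Adj b q ∧ G.Adj p q
    · exact hg.2 a b p q hall
    have sy : ∀ x y, G.Adj x y → G.Adj y x := fun x y h => h.symm
    clear hs hn hc key hp hg hu hv hk
    grind

lemma exists_fresh [Fintype V] (c : Sym2 V → ℕ) : ∃ M, ∀ e, c e < M := by
  refine ⟨Finset.univ.sup c + 1, fun e => ?_⟩
  exact Nat.lt_succ_of_le (Finset.le_sup (f := c) (Finset.mem_univ e))

/-- General recolouring lemma. -/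
lemma recolor [Fintype V] {G : SimpleGraph V} {c : Sym2 V → ℕ} (hG : Good G c) (hS : Sat G)
    {u v : V} (huv : u ≠ v) (hadj : ¬ G.Adj u v) (γ : ℕ) (ρ : Sym2 V → ℕ)
    (hγu : ∀ x, G.Adj u x → ρ s(u, x) = 0 → c s(u, x) ≠ γ)
    (hγv : ∀ x, G.Adj v x → ρ s(v, x) = 0 → c s(v, x) ≠ γ)
    (hm : ∀ a b d, G.Adj a b → G.Adj a d → b ≠ d → ρ s(a, b) = ρ s(a, d) → ρ s(a, b) = 0)
    (hc : ∀ a b p q, K4 G a b p q → (c s(a, b) = c s(p, q) ∧ ρ s(a, b) = ρ s(p, q)) ∨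
      (c s(a, p) = c s(b, q) ∧ ρ s(a, p) = ρ s(b, q)) ∨
      (c s(a, q) = c s(b, p) ∧ ρ s(a, q) = ρ s(b, p)))
    (hn : ∀ p q, G.Adj u p → G.Adj u q → G.Adj v p → G.Adj v q → G.Adj p q →
      (γ = c s(p, q) ∧ ρ s(p, q) = 0) ∨
      (ρ s(u, p) = ρ s(v, q) ∧ (ρ s(u, p) = 0 → c s(u, p) = c s(v, q))) ∨
      (ρ s(u, q) = ρ s(v, p) ∧ (ρ s(u, q) = 0 → c s(u, q) = c s(v, p)))) : False := by
  obtain ⟨M0, hM0⟩ := exists_fresh c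
  obtain ⟨M, hM, hMγ⟩ : ∃ M, (∀ e, c e < M) ∧ γ < M :=
    ⟨M0 + γ + 1, fun e => by have := hM0 e; omega, by omega⟩
  set c' : Sym2 V → ℕ := fun e => if e = s(u, v) then γ else if ρ e = 0 then c e else M + ρ e
    with hc'
  have hE : ∀ x y, G.Adj x y → c' s(x, y) = if ρ s(x, y) = 0 then c s(x, y) else M + ρ s(x, y) := by
    intro x y hxy
    have : s(x, y) ≠ s(u, v) := by
      rw [Ne, Sym2.eq_iff]
      rintro (⟨rfl, rfl⟩ | ⟨rfl, rfl⟩)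
      · exact hadj hxy
      · exact hadj hxy.symm
    simp [hc', this]
  have hguv : c' s(u, v) = γ := by simp [hc']
  refine hS u v huv hadj c' ⟨?_, ?_⟩ ?_ ?_ ?_
  · intro a b d hab had hbd
    rw [hE _ _ hab, hE _ _ had]
    have h1 := hG.1 a b d hab had hbd
    have h2 := hm a b d hab had hbd
    have h3 := hM s(a, b)
    have h4 := hM s(a, d)
    split_ifs <;> omega
  · rintro a b p q hk
    have := hc a b p q hk
    obtain ⟨h1, h2, h3, h4, h5, h6⟩ := hk
    unfold Kill
    rw [hE _ _ h1, hE _ _ h2, hE _ _ h3, hE _ _ h4, hE _ _ h5, hE _ _ h6]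
    rcases this with ⟨e1, e2⟩ | ⟨e1, e2⟩ | ⟨e1, e2⟩
    · left; rw [e1, e2]
    · right; left; rw [e1, e2]
    · right; right; rw [e1, e2]
  · intro x hx
    rw [hE _ _ hx, hguv]
    have := hγu x hx
    split_ifs with h
    · exact this h
    · omega
  · intro x hx
    rw [hE _ _ hx, hguv]
    have := hγv x hx
    split_ifs with h
    · exact this h
    · omega
  · intro p q h1 h2 h3 h4 h5
    have := hn p q h1 h2 h3 h4 h5
    unfold Kill
    rw [hguv, hE _ _ h1, hE _ _ h2, hE _ _ h3, hE _ _ h4, hE _ _ h5]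
    rcases this with ⟨e1, e2⟩ | ⟨e1, e2⟩ | ⟨e1, e2⟩
    · left; rw [if_pos e2, e1]
    · right; left
      rw [e1] at e2 ⊢
      split_ifs with h
      · exact e2 h
      · rfl
    · right; right
      rw [e1] at e2 ⊢
      split_ifs with h
      · exact e2 h
      · rfl

lemma common [Fintype V] {G : SimpleGraph V} {c : Sym2 V → ℕ} (hG : Good G c) (hS : Sat G)
    {u v : V} (huv : u ≠ v) (hadj : ¬ G.Adj u v) :
    ∃ p q, G.Adj u p ∧ G.Adj u q ∧ G.Adj v p ∧ G.Adj v q ∧ G.Adj p q := by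
  by_contra hcon
  push Not at hcon
  obtain ⟨M, hM⟩ := exists_fresh c
  refine recolor hG hS huv hadj M (fun _ => 0) ?_ ?_ ?_ ?_ ?_
  · intro x _ _; exact (hM _).ne
  · intro x _ _; exact (hM _).ne
  · intros; rfl
  · intro a b p q hk
    simpa [Kill] using hG.2 a b p q hk
  · intro p q h1 h2 h3 h4 h5
    exact absurd h5 (hcon p q h1 h2 h3 h4)

end RS

namespace RS
open Classical

variable {V : Type}

/-- every clique through the edge `v x` has a killing pair avoiding that edge -/
def Rec (G : SimpleGraph V) (c : Sym2 V → ℕ) (v x : V) : Prop :=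
  ∀ y z, K4 G v x y z → c s(v, y) = c s(x, z) ∨ c s(v, z) = c s(x, y)

def Nb3 (G : SimpleGraph V) (v p q s : V) : Prop :=
  p ≠ q ∧ p ≠ s ∧ q ≠ s ∧ ∀ x, G.Adj v x ↔ x = p ∨ x = q ∨ x = s

lemma rec_K4 {G : SimpleGraph V} {c : Sym2 V → ℕ} (hG : Good G c) {v x : V}
    (h : Rec G c v x) {a b p q : V} (hk : K4 G a b p q) :
    (c s(a, b) = c s(p, q) ∧ s(a, b) ≠ s(v, x) ∧ s(p, q) ≠ s(v, x)) ∨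
    (c s(a, p) = c s(b, q) ∧ s(a, p) ≠ s(v, x) ∧ s(b, q) ≠ s(v, x)) ∨
    (c s(a, q) = c s(b, p) ∧ s(a, q) ≠ s(v, x) ∧ s(b, p) ≠ s(v, x)) := by
  have hkill := hG.2 a b p q hk
  unfold Kill at hkill
  have sw : ∀ x y : V, c s(x, y) = c s(y, x) := fun x y => by rw [Sym2.eq_swap]
  have sy : ∀ x y, G.Adj x y → G.Adj y x := fun x y h => h.symm
  obtain ⟨h1, h2, h3, h4, h5, h6⟩ := hk
  have n1 := h1.ne
  have n2 := h2.ne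
  have n3 := h3.ne
  have n4 := h4.ne
  have n5 := h5.ne
  have n6 := h6.ne
  simp only [ne_eq, Sym2.eq_iff]
  unfold Rec K4 at h
  by_cases hv : (v = a ∨ v = b ∨ v = p ∨ v = q) ∧ (x = a ∨ x = b ∨ x = p ∨ x = q)
  · obtain ⟨rfl | rfl | rfl | rfl, rfl | rfl | rfl | rfl⟩ := hv <;> grind
  · grind

lemma rec_two {G : SimpleGraph V} {c : Sym2 V → ℕ} (hG : Good G c) {v p q s : V}
    (h : Nb3 G v p q s) :
    (Rec G c v p ∧ Rec G c v q) ∨ (Rec G c v p ∧ Rec G c v s) ∨ (Rec G c v q ∧ Rec G c v s) := by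
  have sw : ∀ x y : V, c s(x, y) = c s(y, x) := fun x y => by rw [Sym2.eq_swap]
  have sy : ∀ x y, G.Adj x y → G.Adj y x := fun x y h => h.symm
  obtain ⟨n1, n2, n3, hN⟩ := h
  have hne : ∀ x y, G.Adj x y → x ≠ y := fun x y h => h.ne
  by_cases hT : G.Adj p q ∧ G.Adj p s ∧ G.Adj q s
  · have := hG.2 v p q s ⟨by grind, by grind, by grind, hT.1, hT.2.1, hT.2.2⟩
    unfold Kill at this
    unfold Rec K4
    rcases this with h | h | h
    · right; right; constructor <;> intro y z ⟨h1, h2, h3, h4, h5, h6⟩ <;>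
        rw [hN] at h2 h3 <;> grind
    · right; left; constructor <;> intro y z ⟨h1, h2, h3, h4, h5, h6⟩ <;>
        rw [hN] at h2 h3 <;> grind
    · left; constructor <;> intro y z ⟨h1, h2, h3, h4, h5, h6⟩ <;>
        rw [hN] at h2 h3 <;> grind
  · left
    unfold Rec K4
    constructor <;> intro y z ⟨h1, h2, h3, h4, h5, h6⟩ <;>
        rw [hN] at h2 h3 <;> grind

lemma recolor2 [Fintype V] {G : SimpleGraph V} {c : Sym2 V → ℕ} (hG : Good G c) (hS : Sat G)
    {v v' : V} (huv : v ≠ v') (hadj : ¬ G.Adj v v') (γ : ℕ) (x x' : V) (hx : G.Adj v x)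
    (hx' : G.Adj v' x') (k k' : ℕ) (hk : k ≠ 0) (hk' : k' ≠ 0) (hkk : k = k' → x ≠ x')
    (hr : Rec G c v x) (hr' : Rec G c v' x')
    (hγu : ∀ y, G.Adj v y → y ≠ x → c s(v, y) ≠ γ)
    (hγv : ∀ y, G.Adj v' y → y ≠ x' → c s(v', y) ≠ γ)
    (hn : ∀ p q, G.Adj v p → G.Adj v q → G.Adj v' p → G.Adj v' q → G.Adj p q → γ = c s(p, q) ∨
      (k = k' ∧ p = x ∧ q = x') ∨ (k = k' ∧ q = x ∧ p = x')) : False := by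
  have sy : ∀ x y, G.Adj x y → G.Adj y x := fun x y h => h.symm
  have hne : ∀ x y, G.Adj x y → x ≠ y := fun x y h => h.ne
  refine recolor hG hS huv hadj γ
    (fun e => if e = s(v, x) then k else if e = s(v', x') then k' else 0) ?_ ?_ ?_ ?_ ?_
  · intro y hy h
    apply hγu y hy
    rintro rfl
    simp [hk] at h
  · intro y hy h
    apply hγv y hy
    rintro rfl
    simp only [Sym2.eq_iff] at h
    grind
  · intro a b d hab had hbd h
    simp only [Sym2.eq_iff] at h ⊢
    grind
  · intro a b p q hK
    have r1 := rec_K4 hG hr hK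
    have r2 := rec_K4 hG hr' hK
    by_cases hv : v = a ∨ v = b ∨ v = p ∨ v = q
    · have : ∀ y z, (y = a ∨ y = b ∨ y = p ∨ y = q) → (z = a ∨ z = b ∨ z = p ∨ z = q) →
        s(y, z) ≠ s(v', x') := by
        have hav : v' ≠ a ∧ v' ≠ b ∧ v' ≠ p ∧ v' ≠ q := by
          obtain ⟨h1, h2, h3, h4, h5, h6⟩ := hK
          grind
        intro y z hy hz
        rw [Ne, Sym2.eq_iff]
        grind
      clear r2
      have t1 := this a b (by simp) (by simp)
      have t2 := this a p (by simp) (by simp)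
      have t3 := this a q (by simp) (by simp)
      have t4 := this b p (by simp) (by simp)
      have t5 := this b q (by simp) (by simp)
      have t6 := this p q (by simp) (by simp)
      clear hγu hγv hn hr hr'
      rcases r1 with ⟨e1, e2, e3⟩ | ⟨e1, e2, e3⟩ | ⟨e1, e2, e3⟩ <;> simp [*]
    · have : ∀ y z, (y = a ∨ y = b ∨ y = p ∨ y = q) → (z = a ∨ z = b ∨ z = p ∨ z = q) →
        s(y, z) ≠ s(v, x) := by
        intro y z hy hz
        rw [Ne, Sym2.eq_iff]
        grind
      clear r1
      have t1 := this a b (by simp) (by simp)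
      have t2 := this a p (by simp) (by simp)
      have t3 := this a q (by simp) (by simp)
      have t4 := this b p (by simp) (by simp)
      have t5 := this b q (by simp) (by simp)
      have t6 := this p q (by simp) (by simp)
      clear hγu hγv hn hr hr'
      rcases r2 with ⟨e1, e2, e3⟩ | ⟨e1, e2, e3⟩ | ⟨e1, e2, e3⟩ <;> simp [*]
  · intro p q h1 h2 h3 h4 h5
    rcases hn p q h1 h2 h3 h4 h5 with h | ⟨h, rfl, rfl⟩ | ⟨h, rfl, rfl⟩
    · left
      refine ⟨h, ?_⟩
      simp only [Sym2.eq_iff]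
      grind
    · right; left
      simp only [Sym2.eq_iff]
      grind
    · right; right
      simp only [Sym2.eq_iff]
      grind

lemma third {G : SimpleGraph V} {v p q s x y : V} (h : Nb3 G v p q s) (hx : G.Adj v x)
    (hy : G.Adj v y) (hxy : x ≠ y) : ∃ t, Nb3 G v x y t := by
  obtain ⟨n1, n2, n3, hN⟩ := h
  rw [hN] at hx hy
  rcases hx with rfl | rfl | rfl <;> rcases hy with rfl | rfl | rfl <;>
    first
    | exact absurd rfl hxy
    | exact ⟨p, by unfold Nb3; grind⟩
    | exact ⟨q, by unfold Nb3; grind⟩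
    | exact ⟨s, by unfold Nb3; grind⟩

lemma same_nb [Fintype V] {G : SimpleGraph V} {c : Sym2 V → ℕ} (hG : Good G c) (hS : Sat G)
    {v v' p q s s' : V} (huv : v ≠ v') (hadj : ¬ G.Adj v v') (h : Nb3 G v p q s)
    (h' : Nb3 G v' p q s') (hpq : G.Adj p q) : s = s' := by
  by_contra hss
  obtain ⟨M, hM⟩ := exists_fresh c
  have r := rec_two hG h
  have r' := rec_two hG h'
  have sw : ∀ x y : V, c s(x, y) = c s(y, x) := fun x y => by rw [Sym2.eq_swap]
  have hne : ∀ x y, G.Adj x y → x ≠ y := fun x y h => h.ne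
  have hNv := h.2.2.2
  have hNv' := h'.2.2.2
  have npq := hpq.ne
  have hcom : ∀ x y, G.Adj v x → G.Adj v y → G.Adj v' x → G.Adj v' y → G.Adj x y →
      (x = p ∧ y = q) ∨ (x = q ∧ y = p) := by
    intro x y h1 h2 h3 h4 h5
    have := h5.ne
    have := h.2.1
    have := h.2.2.1
    rw [hNv] at h1 h2
    rw [hNv'] at h3 h4
    grind
  have A1 : ¬ (Rec G c v p ∧ Rec G c v' q) := by
    rintro ⟨r1, r2⟩
    refine recolor2 hG hS huv hadj M p q (by simp [hNv]) (by simp [hNv']) 1 1 (by simp) (by simp)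
      (fun _ => npq) r1 r2 (fun y _ _ => (hM _).ne) (fun y _ _ => (hM _).ne) ?_
    intro x y h1 h2 h3 h4 h5
    have := hcom x y h1 h2 h3 h4 h5
    tauto
  have A2 : ¬ (Rec G c v q ∧ Rec G c v' p) := by
    rintro ⟨r1, r2⟩
    refine recolor2 hG hS huv hadj M q p (by simp [hNv]) (by simp [hNv']) 1 1 (by simp) (by simp)
      (fun _ => npq.symm) r1 r2 (fun y _ _ => (hM _).ne) (fun y _ _ => (hM _).ne) ?_
    intro x y h1 h2 h3 h4 h5
    have := hcom x y h1 h2 h3 h4 h5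
    tauto
  have hr : Rec G c v s ∧ Rec G c v' s' := by tauto
  have prop : ∀ w, G.Adj w p → G.Adj w q → c s(w, p) ≠ c s(p, q) ∧ c s(w, q) ≠ c s(p, q) := by
    intro w h1 h2
    constructor
    · rw [sw w p]; exact hG.1 p w q h1.symm hpq h2.ne
    · rw [sw w q, sw p q]; exact hG.1 q w p h2.symm hpq.symm h1.ne
  have pv := prop v (by simp [hNv]) (by simp [hNv])
  have pv' := prop v' (by simp [hNv']) (by simp [hNv'])
  refine recolor2 hG hS huv hadj (c s(p, q)) s s' (by simp [hNv]) (by simp [hNv']) 1 2 (by simp)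
      (by simp) (by simp) hr.1 hr.2 ?_ ?_ ?_
  · intro y hy hys
    rw [hNv] at hy
    rcases hy with rfl | rfl | rfl
    · exact pv.1
    · exact pv.2
    · exact absurd rfl hys
  · intro y hy hys
    rw [hNv'] at hy
    rcases hy with rfl | rfl | rfl
    · exact pv'.1
    · exact pv'.2
    · exact absurd rfl hys
  · intro x y h1 h2 h3 h4 h5
    left
    rcases hcom x y h1 h2 h3 h4 h5 with ⟨rfl, rfl⟩ | ⟨rfl, rfl⟩
    · rfl
    · exact sw _ _

lemma triangle_aux [Fintype V] {G : SimpleGraph V} {c : Sym2 V → ℕ} (hG : Good G c) (hS : Sat G)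
    {v v' p q s : V} (huv : v ≠ v') (hadj : ¬ G.Adj v v') (h : Nb3 G v p q s)
    (h' : Nb3 G v' p q s) (hqs : ¬ G.Adj q s) : False := by
  obtain ⟨M, hM⟩ := exists_fresh c
  obtain ⟨n1, n2, n3, hN⟩ := h
  obtain ⟨-, -, -, hN'⟩ := h'
  have sy : ∀ x y, G.Adj x y → G.Adj y x := fun x y h => h.symm
  have hne : ∀ x y, G.Adj x y → x ≠ y := fun x y h => h.ne
  have m1 : v ≠ p ∧ v ≠ q ∧ v ≠ s := ⟨hne _ _ (by simp [hN]), hne _ _ (by simp [hN]), hne _ _ (by simp [hN])⟩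
  have m2 : v' ≠ p ∧ v' ≠ q ∧ v' ≠ s := ⟨hne _ _ (by simp [hN']), hne _ _ (by simp [hN']), hne _ _ (by simp [hN'])⟩
  refine recolor hG hS huv hadj M
    (fun e => if e = s(v, p) ∨ e = s(v', q) then 1 else if e = s(v, s) ∨ e = s(v', p) then 2 else 0)
    ?_ ?_ ?_ ?_ ?_
  · intro y hy h
    exact (hM _).ne
  · intro y hy h
    exact (hM _).ne
  · intro a b d hab had hbd h
    simp only [Sym2.eq_iff] at h ⊢
    grind
  · intro a b x y hK
    have hkill := hG.2 a b x y hK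
    have nv : ∀ w, (w = v ∨ w = v') → w ≠ a ∧ w ≠ b ∧ w ≠ x ∧ w ≠ y := by
      have aux : ∀ w x1 x2 x3, (w = v ∨ w = v') → ¬ K4 G w x1 x2 x3 := by
        intro w x1 x2 x3 hw ⟨h1, h2, h3, h4, h5, h6⟩
        have hw' : ∀ x, G.Adj w x → x = p ∨ x = q ∨ x = s := by
          rcases hw with rfl | rfl
          · intro x hx; exact (hN x).1 hx
          · intro x hx; exact (hN' x).1 hx
        replace h1 := hw' _ h1
        replace h2 := hw' _ h2
        replace h3 := hw' _ h3
        have := h4.ne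
        have := h5.ne
        have := h6.ne
        clear hN hN'
        grind
      intro w hw
      obtain ⟨h1, h2, h3, h4, h5, h6⟩ := hK
      refine ⟨?_, ?_, ?_, ?_⟩ <;> rintro rfl
      · exact aux w b x y hw ⟨h1, h2, h3, h4, h5, h6⟩
      · exact aux w a x y hw ⟨h1.symm, h4, h5, h2, h3, h6⟩
      · exact aux w a b y hw ⟨h2.symm, h4.symm, h6, h1, h3, h5⟩
      · exact aux w a b x hw ⟨h3.symm, h5.symm, h6.symm, h1, h2, h4⟩
    have t1 := nv v (by simp)
    have t2 := nv v' (by simp)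
    unfold Kill at hkill
    have key : ∀ y1 y2, (y1 ≠ v ∧ y1 ≠ v' ∧ y2 ≠ v ∧ y2 ≠ v') → (if s(y1, y2) = s(v, p) ∨ s(y1, y2) = s(v', q) then 1 else if s(y1, y2) = s(v, s) ∨ s(y1, y2) = s(v', p) then 2 else 0) = 0 := by
      intro y1 y2 hy
      simp only [Sym2.eq_iff]
      grind
    rw [key a b (by grind), key x y (by grind), key a x (by grind), key b y (by grind), key a y (by grind), key b x (by grind)]
    simpa using hkill
  · intro x y h1 h2 h3 h4 h5
    right
    rw [hN] at h1 h2
    have := h5.ne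
    simp only [Sym2.eq_iff]
    rcases h1 with rfl | rfl | rfl <;> rcases h2 with rfl | rfl | rfl <;> grind

lemma lemT [Fintype V] {G : SimpleGraph V} {c : Sym2 V → ℕ} (hG : Good G c) (hS : Sat G)
    (S : Finset V) (h3 : ∀ v ∈ S, ∃ p q s, Nb3 G v p q s)
    (hi : ∀ v ∈ S, ∀ w ∈ S, ¬ G.Adj v w) : S.card ≤ 3 := by
  by_contra hcard
  push Not at hcard
  have sw : ∀ x y : V, c s(x, y) = c s(y, x) := fun x y => by rw [Sym2.eq_swap]
  obtain ⟨v, hv⟩ := Finset.card_pos.1 (by omega : 0 < S.card)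
  obtain ⟨p, q, s, hN⟩ := h3 v hv
  obtain ⟨v1, hv1, hne1⟩ := Finset.exists_mem_ne (by omega : 1 < S.card) v
  -- every member has the same neighbourhood and the neighbourhood is a triangle
  have main : ∀ w ∈ S, w ≠ v → Nb3 G w p q s ∧ G.Adj p q ∧ G.Adj p s ∧ G.Adj q s := by
    intro w hw hwv
    have hadj := hi v hv w hw
    obtain ⟨x, y, a1, a2, a3, a4, a5⟩ := common hG hS hwv.symm hadj
    obtain ⟨p', q', s', hN'⟩ := h3 w hw
    obtain ⟨t, ht⟩ := third hN a1 a2 a5.ne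
    obtain ⟨t', ht'⟩ := third hN' a3 a4 a5.ne
    obtain rfl := same_nb hG hS hwv.symm hadj ht ht' a5
    have e1 : G.Adj y t := by
      by_contra hcon
      exact triangle_aux hG hS hwv.symm hadj ht ht' hcon
    have perm : ∀ u, Nb3 G u x y t → Nb3 G u y x t := by
      intro u ⟨m1, m2, m3, m4⟩
      exact ⟨m1.symm, m3, m2, fun z => by rw [m4]; tauto⟩
    have e2 : G.Adj x t := by
      by_contra hcon
      exact triangle_aux hG hS hwv.symm hadj (perm _ ht) (perm _ ht') hcon
    obtain ⟨m1, m2, m3, m4⟩ := ht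
    obtain ⟨n1, n2, n3, n4⟩ := hN
    have hset : ∀ z, (z = p ∨ z = q ∨ z = s) ↔ (z = x ∨ z = y ∨ z = t) := by
      intro z; rw [← m4, ← n4]
    have cl : ∀ z z', (z = x ∨ z = y ∨ z = t) → (z' = x ∨ z' = y ∨ z' = t) → z ≠ z' → G.Adj z z' := by
      rintro z z' (rfl | rfl | rfl) (rfl | rfl | rfl) hzz
      · exact absurd rfl hzz
      · exact a5
      · exact e2
      · exact a5.symm
      · exact absurd rfl hzz
      · exact e1
      · exact e2.symm
      · exact e1.symm
      · exact absurd rfl hzz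
    refine ⟨⟨n1, n2, n3, fun z => by rw [hset, ← ht'.2.2.2]⟩, cl _ _ ?_ ?_ n1, cl _ _ ?_ ?_ n2, cl _ _ ?_ ?_ n3⟩ <;>
      rw [← hset] <;> simp
  obtain ⟨-, t1, t2, t3⟩ := main v1 hv1 hne1
  have main2 : ∀ w ∈ S, G.Adj w p ∧ G.Adj w q ∧ G.Adj w s := by
    intro w hw
    have : Nb3 G w p q s := by
      by_cases h : w = v
      · rw [h]; exact hN
      · exact (main w hw h).1
    simp [this.2.2.2]
  let φ : V → ℕ := fun w => if c s(w, p) = c s(q, s) then 0 else if c s(w, q) = c s(p, s) then 1 else 2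
  have hφ : ∀ w ∈ S, φ w ∈ Finset.range 3 := by
    intro w _
    simp only [φ, Finset.mem_range]
    split_ifs <;> omega
  obtain ⟨w, hw, w', hw', hne, heq⟩ :=
    Finset.exists_ne_map_eq_of_card_lt_of_maps_to (by simpa using hcard) hφ
  obtain ⟨i1, i2, i3⟩ := main2 w hw
  obtain ⟨j1, j2, j3⟩ := main2 w' hw'
  have k := hG.2 w p q s ⟨i1, i2, i3, t1, t2, t3⟩
  have k' := hG.2 w' p q s ⟨j1, j2, j3, t1, t2, t3⟩
  unfold Kill at k k'
  have o1 := hG.1 p w w' i1.symm j1.symm hne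
  have o2 := hG.1 q w w' i2.symm j2.symm hne
  have o3 := hG.1 s w w' i3.symm j3.symm hne
  rw [sw p, sw p] at o1
  rw [sw q, sw q] at o2
  rw [sw s, sw s] at o3
  simp only [φ] at heq
  split_ifs at heq <;> grind

end RS

namespace RS
open Classical

variable {V : Type}

def InK (a b p q x : V) : Prop := x = a ∨ x = b ∨ x = p ∨ x = q

lemma K4.adj {G : SimpleGraph V} {a b p q x y : V} (h : K4 G a b p q) (hx : InK a b p q x)
    (hy : InK a b p q y) (hxy : x ≠ y) : G.Adj x y := by
  obtain ⟨h1, h2, h3, h4, h5, h6⟩ := h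
  rcases hx with rfl | rfl | rfl | rfl <;> rcases hy with rfl | rfl | rfl | rfl <;>
    first
    | exact absurd rfl hxy
    | assumption
    | (apply SimpleGraph.Adj.symm; assumption)

lemma K4.re {G : SimpleGraph V} {a b p q x y : V} (h : K4 G a b p q) (hx : InK a b p q x)
    (hy : InK a b p q y) (hxy : x ≠ y) : ∃ s t, K4 G x y s t := by
  have sy : ∀ x y, G.Adj x y → G.Adj y x := fun x y h => h.symm
  obtain ⟨h1, h2, h3, h4, h5, h6⟩ := h
  unfold K4
  rcases hx with rfl | rfl | rfl | rfl <;> rcases hy with rfl | rfl | rfl | rfl <;>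
    first
    | exact absurd rfl hxy
    | exact ⟨p, q, by grind⟩
    | exact ⟨b, q, by grind⟩
    | exact ⟨b, p, by grind⟩
    | exact ⟨a, q, by grind⟩
    | exact ⟨a, p, by grind⟩
    | exact ⟨a, b, by grind⟩

lemma InK.all {a b p q : V} {P : V → V → Prop}
    (h : ∀ x y, InK a b p q x → InK a b p q y → P x y) :
    P a b ∧ P a p ∧ P a q ∧ P b p ∧ P b q ∧ P p q := by
  unfold InK at h
  exact ⟨h _ _ (by simp) (by simp), h _ _ (by simp) (by simp), h _ _ (by simp) (by simp),
   h _ _ (by simp) (by simp), h _ _ (by simp) (by simp), h _ _ (by simp) (by simp)⟩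

def InA (G : SimpleGraph V) (b d x : V) : Prop := G.Adj x b ∧ G.Adj x d
def InR (G : SimpleGraph V) (b d r : V) : Prop := r ≠ b ∧ r ≠ d ∧ ¬ InA G b d r
def Z (G : SimpleGraph V) (b d x : V) : Prop := ∀ r, InR G b d r → ¬ G.Adj x r
def B1 (G : SimpleGraph V) (b d y s : V) : Prop := s = y ∨ (G.Adj y s ∧ InA G b d s)
def Far (G : SimpleGraph V) (b d y z : V) : Prop :=
  ∀ s t, B1 G b d y s → B1 G b d z t → s ≠ t ∧ ¬ G.Adj s t

def Closed (G : SimpleGraph V) (c : Sym2 V → ℕ) (F : Sym2 V → Prop) : Prop :=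
  ∀ a b p q, K4 G a b p q → (c s(a, b) = c s(p, q) ∧ (F s(a, b) ↔ F s(p, q))) ∨
      (c s(a, p) = c s(b, q) ∧ (F s(a, p) ↔ F s(b, q))) ∨
      (c s(a, q) = c s(b, p) ∧ (F s(a, q) ↔ F s(b, p)))

def Linkable (G : SimpleGraph V) (c : Sym2 V → ℕ) (b d y : V) : Prop :=
  ∃ F : Sym2 V → Prop, F s(y, b) ∧ (∀ p q, F s(p, q) → p = b ∨ B1 G b d y p) ∧
    (∀ p q q', F s(p, q) → F s(p, q') → q = q') ∧ Closed G c F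

def PT (G : SimpleGraph V) (c : Sym2 V → ℕ) (b d y r : V) : Prop :=
  InA G b d y ∧ InR G b d r ∧ G.Adj y r ∧
  (∀ x, G.Adj y x → x = b ∨ x = d ∨ x = r ∨ InA G b d x) ∧
  (∀ x, InA G b d x → G.Adj y x → c s(y, x) ≠ c s(b, d)) ∧
  (∀ p q, ¬ K4 G y r p q) ∧ Rec G c y b

def NZ (G : SimpleGraph V) (c : Sym2 V → ℕ) (b d y : V) : Prop :=
  InA G b d y ∧ (∀ x, InA G b d x → G.Adj y x → c s(y, x) ≠ c s(b, d)) ∧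
  (∀ r, InR G b d r → G.Adj y r → ∀ p q, ¬ K4 G y r p q)

lemma InA_swap {G : SimpleGraph V} {b d x : V} : InA G b d x ↔ InA G d b x := and_comm
lemma InR_swap {G : SimpleGraph V} {b d x : V} : InR G b d x ↔ InR G d b x := by
  unfold InR; rw [InA_swap]; tauto
lemma Z_swap {G : SimpleGraph V} {b d x : V} : Z G b d x ↔ Z G d b x := by
  unfold Z; simp only [InR_swap (b := b)]
lemma B1_swap {G : SimpleGraph V} {b d x y : V} : B1 G b d x y ↔ B1 G d b x y := by
  unfold B1; rw [InA_swap]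
lemma Far_swap {G : SimpleGraph V} {b d x y : V} : Far G b d x y ↔ Far G d b x y := by
  unfold Far; simp only [B1_swap (b := b)]
lemma Far.symm {G : SimpleGraph V} {b d x y : V} (h : Far G b d x y) : Far G b d y x := by
  intro s t hs ht
  have := h t s ht hs
  exact ⟨this.1.symm, fun h => this.2 h.symm⟩
lemma NZ_swap {G : SimpleGraph V} {c : Sym2 V → ℕ} {b d x : V} : NZ G c b d x ↔ NZ G c d b x := by
  unfold NZ; simp only [InR_swap (b := b), InA_swap (b := b), Sym2.eq_swap (a := b)]

lemma PT.nz {G : SimpleGraph V} {c : Sym2 V → ℕ} {b d y r : V} (h : PT G c b d y r) :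
    NZ G c b d y := by
  obtain ⟨h1, h2, h3, h4, h5, h6, h7⟩ := h
  refine ⟨h1, h5, ?_⟩
  intro r' hr' ha
  rcases h4 r' ha with h | h | h | h
  · exact absurd h hr'.1
  · exact absurd h hr'.2.1
  · subst h; exact h6
  · exact absurd h hr'.2.2

lemma Far.ne {G : SimpleGraph V} {b d x y : V} (h : Far G b d x y) : x ≠ y :=
  (h x y (Or.inl rfl) (Or.inl rfl)).1
lemma Far.nadj {G : SimpleGraph V} {b d x y : V} (h : Far G b d x y) : ¬ G.Adj x y :=
  (h x y (Or.inl rfl) (Or.inl rfl)).2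
lemma Far.notA {G : SimpleGraph V} {b d x y z : V} (h : Far G b d x y) (hx : G.Adj x z)
    (hy : G.Adj y z) : ¬ InA G b d z := fun hz =>
  (h z z (Or.inr ⟨hx, hz⟩) (Or.inr ⟨hy, hz⟩)).1 rfl

lemma link_of_rec {G : SimpleGraph V} {c : Sym2 V → ℕ} {b d y : V} (hG : Good G c)
    (h : Rec G c y b) (hyb : y ≠ b) : Linkable G c b d y := by
  refine ⟨fun e => e = s(y, b), rfl, ?_, ?_, ?_⟩
  · intro p q h
    rw [Sym2.eq_iff] at h
    unfold B1; tauto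
  · intro p q q' h1 h2
    rw [Sym2.eq_iff] at h1 h2
    grind
  · intro a b' p q hk
    have := rec_K4 hG h hk
    rcases this with ⟨e1, e2, e3⟩ | ⟨e1, e2, e3⟩ | ⟨e1, e2, e3⟩ <;> simp [*]

/-- common neighbours of two far vertices one of which has no neighbour in R -/
lemma far_common {G : SimpleGraph V} {b d y z : V} (hf : Far G b d y z)
    (hZ : Z G b d y ∨ Z G b d z) {p : V} (hy : G.Adj y p) (hz : G.Adj z p) : p = b ∨ p = d := by
  have := hf.notA hy hz
  by_contra hcon
  push Not at hcon
  have hR : InR G b d p := ⟨hcon.1, hcon.2, this⟩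
  rcases hZ with h | h
  · exact h p hR hy
  · exact h p hR hz

lemma link [Fintype V] {G : SimpleGraph V} {c : Sym2 V → ℕ} (hG : Good G c) (hS : Sat G)
    {b d y z : V} (hbd : b ≠ d) (hyA : InA G b d y) (hzA : InA G b d z) (hf : Far G b d y z)
    (hcom : ∀ p q, G.Adj y p → G.Adj z p → G.Adj y q → G.Adj z q → G.Adj p q →
      (p = b ∧ q = d) ∨ (p = d ∧ q = b))
    (hy : Linkable G c b d y) (hz : Linkable G c d b z) : False := by
  obtain ⟨F, f1, f2, f3, f4⟩ := hy
  obtain ⟨F', g1, g2, g3, g4⟩ := hz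
  obtain ⟨M, hM⟩ := exists_fresh c
  simp only [B1_swap (b := d)] at g2
  have sF : ∀ x y, F s(x, y) → F s(y, x) := fun x y h => by rw [Sym2.eq_swap]; exact h
  have sF' : ∀ x y, F' s(x, y) → F' s(y, x) := fun x y h => by rw [Sym2.eq_swap]; exact h
  have bA : ¬ InA G b d b := fun h => h.1.ne rfl
  have dA : ¬ InA G b d d := fun h => h.2.ne rfl
  have nb : ¬ B1 G b d z b := by
    rintro (rfl | h)
    · exact bA hzA
    · exact bA h.2
  have nd : ¬ B1 G b d y d := by
    rintro (rfl | h)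
    · exact dA hyA
    · exact dA h.2
  have disj : ∀ w, (w = b ∨ B1 G b d y w) → (w = d ∨ B1 G b d z w) → False := by
    rintro w (rfl | h1) (h2 | h2)
    · exact hbd h2
    · exact nb h2
    · subst h2; exact nd h1
    · exact (hf w w h1 h2).1 rfl
  refine recolor hG hS hf.ne hf.nadj M (fun e => if F e ∨ F' e then 1 else 0) ?_ ?_ ?_ ?_ ?_
  · intro x _ _; exact (hM _).ne
  · intro x _ _; exact (hM _).ne
  · intro a x x' h1 h2 h3 h4
    by_contra h5
    have e1 : F s(a, x) ∨ F' s(a, x) := by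
      by_contra h; simp [h] at h5
    have e2 : F s(a, x') ∨ F' s(a, x') := by
      by_contra h
      simp [h, e1] at h4
    rcases e1 with e1 | e1 <;> rcases e2 with e2 | e2
    · exact h3 (f3 _ _ _ e1 e2)
    · exact disj a (f2 _ _ e1) (g2 _ _ e2)
    · exact disj a (f2 _ _ e2) (g2 _ _ e1)
    · exact h3 (g3 _ _ _ e1 e2)
  · intro a x p q hk
    have nE : ∀ s t w, G.Adj s t → w ∈ s(s, t) → F s(s, t) → ∃ w, w ∈ s(s, t) ∧ B1 G b d y w := by
      intro s t w hst hw hF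
      rcases f2 _ _ hF with h | h
      · rcases f2 _ _ (sF _ _ hF) with h' | h'
        · exact absurd (h.trans h'.symm) hst.ne
        · exact ⟨t, by simp, h'⟩
      · exact ⟨s, by simp, h⟩
    have nE' : ∀ s t w, G.Adj s t → w ∈ s(s, t) → F' s(s, t) → ∃ w, w ∈ s(s, t) ∧ B1 G b d z w := by
      intro s t w hst hw hF
      rcases g2 _ _ hF with h | h
      · rcases g2 _ _ (sF' _ _ hF) with h' | h'
        · exact absurd (h.trans h'.symm) hst.ne
        · exact ⟨t, by simp, h'⟩
      · exact ⟨s, by simp, h⟩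
    have irr : ∀ s, ¬ F s(s, s) ∨ True := by simp
    by_cases hw : ∃ w, InK a x p q w ∧ B1 G b d y w
    · obtain ⟨w, w1, w2⟩ := hw
      have : ∀ s t, InK a x p q s → InK a x p q t → s ≠ t → ¬ F' s(s, t) := by
        intro s t hs ht hst hF
        obtain ⟨w', m1, m2⟩ := nE' s t s (hk.adj hs ht hst) (by simp) hF
        have hk' : InK a x p q w' := by
          rcases Sym2.mem_iff.1 m1 with rfl | rfl
          · exact hs
          · exact ht
        by_cases h : w = w'
        · exact (hf w w' w2 m2).1 h
        · exact (hf w w' w2 m2).2 (hk.adj w1 hk' h)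
      obtain ⟨t1, t2, t3, t4, t5, t6⟩ := InK.all this
      have := f4 a x p q hk
      obtain ⟨h1, h2, h3, h4, h5, h6⟩ := hk
      replace t1 := t1 h1.ne
      replace t2 := t2 h2.ne
      replace t3 := t3 h3.ne
      replace t4 := t4 h4.ne
      replace t5 := t5 h5.ne
      replace t6 := t6 h6.ne
      rcases this with ⟨e1, e2⟩ | ⟨e1, e2⟩ | ⟨e1, e2⟩
      · left; simp [t1, t6, e1, e2]
      · right; left; simp [t2, t5, e1, e2]
      · right; right; simp [t3, t4, e1, e2]
    · have : ∀ s t, InK a x p q s → InK a x p q t → s ≠ t → ¬ F s(s, t) := by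
        intro s t hs ht hst hF
        obtain ⟨w', m1, m2⟩ := nE s t s (hk.adj hs ht hst) (by simp) hF
        have hk' : InK a x p q w' := by
          rcases Sym2.mem_iff.1 m1 with rfl | rfl
          · exact hs
          · exact ht
        exact hw ⟨w', hk', m2⟩
      obtain ⟨t1, t2, t3, t4, t5, t6⟩ := InK.all this
      have := g4 a x p q hk
      obtain ⟨h1, h2, h3, h4, h5, h6⟩ := hk
      replace t1 := t1 h1.ne
      replace t2 := t2 h2.ne
      replace t3 := t3 h3.ne
      replace t4 := t4 h4.ne
      replace t5 := t5 h5.ne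
      replace t6 := t6 h6.ne
      rcases this with ⟨e1, e2⟩ | ⟨e1, e2⟩ | ⟨e1, e2⟩
      · left; simp [t1, t6, e1, e2]
      · right; left; simp [t2, t5, e1, e2]
      · right; right; simp [t3, t4, e1, e2]
  · intro p q h1 h2 h3 h4 h5
    rcases hcom p q h1 h3 h2 h4 h5 with ⟨rfl, rfl⟩ | ⟨rfl, rfl⟩
    · right; left; simp [f1, g1]
    · right; right; simp [f1, g1]

/-- an edge of colour `c(bd)` at an `NZ` vertex lies in no clique -/
lemma nz_edge {G : SimpleGraph V} {c : Sym2 V → ℕ} (hG : Good G c) {b d y : V}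
    (hbd : G.Adj b d) (hy : NZ G c b d y) {x s t : V} (hk : K4 G y x s t) :
    c s(y, x) ≠ c s(b, d) := by
  obtain ⟨h1, h2, h3⟩ := hy
  have hyx := hk.1
  by_cases hb : x = b
  · subst hb
    rw [Sym2.eq_swap]
    exact hG.1 x y d h1.1.symm hbd h1.2.ne
  by_cases hd : x = d
  · subst hd
    rw [Sym2.eq_swap, Sym2.eq_swap (a := b)]
    exact hG.1 x y b h1.2.symm hbd.symm h1.1.ne
  by_cases hA : InA G b d x
  · exact h2 x hA hyx
  · exact absurd hk (h3 x ⟨hb, hd, hA⟩ hyx s t)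

lemma zlink_a [Fintype V] {G : SimpleGraph V} {c : Sym2 V → ℕ} (hG : Good G c) (hS : Sat G)
    {b d y z : V} (hbd : G.Adj b d) (hyz : y ≠ z) (hadj : ¬ G.Adj y z)
    (hy : NZ G c b d y) (hz : NZ G c b d z)
    (hcom : ∀ p q, G.Adj y p → G.Adj z p → G.Adj y q → G.Adj z q → G.Adj p q →
      (p = b ∧ q = d) ∨ (p = d ∧ q = b)) : False := by
  have key : ∀ w, (w = y ∨ w = z) → ∀ x s t, K4 G w x s t → c s(w, x) ≠ c s(b, d) := by
    rintro w (rfl | rfl) x s t hk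
    · exact nz_edge hG hbd hy hk
    · exact nz_edge hG hbd hz hk
  have yb := hy.1.1.ne
  have yd := hy.1.2.ne
  have zb := hz.1.1.ne
  have zd := hz.1.2.ne
  refine recolor hG hS hyz hadj (c s(b, d)) (fun e => if c e = c s(b, d) ∧ y ∈ e then 1 else
    if c e = c s(b, d) ∧ z ∈ e then 2 else 0) ?_ ?_ ?_ ?_ ?_
  · intro x hx h1 h2
    simp [h2] at h1
  · intro x hx h1 h2
    simp [h2] at h1
    grind
  · intro a x x' h1 h2 h3 h4
    have := hG.1 a x x' h1 h2 h3
    grind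
  · intro a x p q hk
    have : ∀ s t, InK a x p q s → InK a x p q t → s ≠ t → (if c s(s, t) = c s(b, d) ∧ y ∈ s(s, t) then 1 else
        if c s(s, t) = c s(b, d) ∧ z ∈ s(s, t) then 2 else 0) = 0 := by
      intro s t hs ht hst
      have : ¬ (c s(s, t) = c s(b, d) ∧ (y ∈ s(s, t) ∨ z ∈ s(s, t))) := by
        rintro ⟨h1, h2⟩
        have h3 : (s = y ∨ s = z) ∨ (t = y ∨ t = z) := by
          simp only [Sym2.mem_iff] at h2; tauto
        rcases h3 with h3 | h3
        · obtain ⟨s', t', hk'⟩ := hk.re hs ht hst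
          exact key s h3 t s' t' hk' h1
        · obtain ⟨s', t', hk'⟩ := hk.re ht hs hst.symm
          rw [Sym2.eq_swap] at h1
          exact key t h3 s s' t' hk' h1
      split_ifs <;> tauto
    obtain ⟨t1, t2, t3, t4, t5, t6⟩ := InK.all this
    have := hG.2 a x p q hk
    unfold Kill at this
    obtain ⟨h1, h2, h3, h4, h5, h6⟩ := hk
    rw [t1 h1.ne, t2 h2.ne, t3 h3.ne, t4 h4.ne, t5 h5.ne, t6 h6.ne]
    simpa using this
  · intro p q h1 h2 h3 h4 h5
    left
    have e : s(p, q) = s(b, d) := by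
      rcases hcom p q h1 h3 h2 h4 h5 with ⟨rfl, rfl⟩ | ⟨rfl, rfl⟩
      · rfl
      · exact Sym2.eq_swap
    rw [e]
    simp [*]

lemma zlink_b [Fintype V] {G : SimpleGraph V} {c : Sym2 V → ℕ} (hG : Good G c) (hS : Sat G)
    {b d y z r : V} (hbd : G.Adj b d) (hf : Far G b d y z)
    (hy : PT G c b d y r) (hz : PT G c b d z r) (hrb : G.Adj r b) : False := by
  have hrd : ¬ G.Adj r d := fun h => hy.2.1.2.2 ⟨hrb, h⟩
  have hyz := hf.ne
  have hadj := hf.nadj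
  have yb := hy.1.1.ne
  have yd := hy.1.2.ne
  have zb := hz.1.1.ne
  have zd := hz.1.2.ne
  have hyN := hy.nz
  have hzN := hz.nz
  obtain ⟨y1, y2, y3, y4, y5, y6, y7⟩ := hy
  obtain ⟨z1, z2, z3, z4, z5, z6, z7⟩ := hz
  have zr := z3.ne
  have yr := y3.ne
  have rb := hrb.ne
  refine recolor hG hS hyz hadj (c s(b, d))
    (fun e => if e = s(y, r) ∨ e = s(z, b) then 1 else
      if c e = c s(b, d) ∧ z ∈ e then 2 else 0) ?_ ?_ ?_ ?_ ?_
  · intro x hx h1 h2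
    have hxr : x ≠ r := by rintro rfl; simp at h1
    rcases y4 x hx with rfl | rfl | rfl | h
    · exact nz_edge hG hbd hyN (s := d) (t := d) (by
        exfalso
        revert h2; rw [imp_false, Sym2.eq_swap]
        exact hG.1 x y d y1.1.symm hbd yd) h2
    · exact nz_edge hG hbd hyN (s := b) (t := b) (by
        exfalso
        revert h2; rw [imp_false, Sym2.eq_swap, Sym2.eq_swap (a := b)]
        exact hG.1 x y b y1.2.symm hbd.symm yb) h2
    · exact hxr rfl
    · exact y5 x h hx h2
  · intro x hx h1 h2
    simp [h2] at h1
    grind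
  · intro a x x' h1 h2 h3 h4
    have := hG.1 a x x' h1 h2 h3
    simp only [Sym2.eq_iff] at h4 ⊢
    have sy : ∀ x y, G.Adj x y → G.Adj y x := fun x y h => h.symm
    clear y4 y5 y6 y7 z4 z5 z6 z7 hyN hzN
    grind
  · intro a x p q hk
    have : ∀ s t, InK a x p q s → InK a x p q t → s ≠ t → s(s, t) ≠ s(z, b) →
        (if s(s, t) = s(y, r) ∨ s(s, t) = s(z, b) then 1 else
        if c s(s, t) = c s(b, d) ∧ z ∈ s(s, t) then 2 else 0) = 0 := by
      intro s t hs ht hst hne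
      have e1 : s(s, t) ≠ s(y, r) := by
        intro h
        rcases Sym2.eq_iff.1 h with ⟨rfl, rfl⟩ | ⟨rfl, rfl⟩
        · obtain ⟨s', t', hk'⟩ := hk.re hs ht hst
          exact y6 _ _ hk'
        · obtain ⟨s', t', hk'⟩ := hk.re ht hs hst.symm
          exact y6 _ _ hk'
      have e2 : ¬ (c s(s, t) = c s(b, d) ∧ z ∈ s(s, t)) := by
        rintro ⟨h1, h2⟩
        rcases Sym2.mem_iff.1 h2 with rfl | rfl
        · obtain ⟨s', t', hk'⟩ := hk.re hs ht hst
          exact nz_edge hG hbd hzN hk' h1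
        · obtain ⟨s', t', hk'⟩ := hk.re ht hs hst.symm
          rw [Sym2.eq_swap] at h1
          exact nz_edge hG hbd hzN hk' h1
      rw [if_neg (by tauto), if_neg e2]
    obtain ⟨t1, t2, t3, t4, t5, t6⟩ := InK.all this
    have := rec_K4 hG z7 hk
    obtain ⟨h1, h2, h3, h4, h5, h6⟩ := hk
    replace t1 := t1 h1.ne
    replace t2 := t2 h2.ne
    replace t3 := t3 h3.ne
    replace t4 := t4 h4.ne
    replace t5 := t5 h5.ne
    replace t6 := t6 h6.ne
    rcases this with ⟨e1, e2, e3⟩ | ⟨e1, e2, e3⟩ | ⟨e1, e2, e3⟩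
    · left; exact ⟨e1, by rw [t1 e2, t6 e3]⟩
    · right; left; exact ⟨e1, by rw [t2 e2, t5 e3]⟩
    · right; right; exact ⟨e1, by rw [t3 e2, t4 e3]⟩
  · intro p q h1 h2 h3 h4 h5
    have nn := h5.ne
    have hp := hf.notA h1 h3
    have hq := hf.notA h2 h4
    have hp' := y4 p h1
    have hq' := y4 q h2
    have sy : ∀ x y, G.Adj x y → G.Adj y x := fun x y h => h.symm
    have hcase : (p = b ∧ q = d) ∨ (p = d ∧ q = b) ∨ (p = r ∧ q = b) ∨ (p = b ∧ q = r) := by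
      clear y5 y6 y7 z4 z5 z6 z7 hyN hzN y4
      grind
    have ebd : ¬ (s(b, d) = s(y, r) ∨ s(b, d) = s(z, b)) := by
      simp only [Sym2.eq_iff]; grind
    rcases hcase with ⟨rfl, rfl⟩ | ⟨rfl, rfl⟩ | ⟨rfl, rfl⟩ | ⟨rfl, rfl⟩
    · left; refine ⟨rfl, ?_⟩; rw [if_neg ebd, if_neg (by simp [zb, zd])]
    · left; rw [Sym2.eq_swap (a := p)]; refine ⟨rfl, ?_⟩; rw [if_neg ebd, if_neg (by simp [zb, zd])]
    · right; left; simp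
    · right; right; simp

end RS

namespace RS
open Classical

variable {V : Type}

lemma edge_kill {G : SimpleGraph V} {c : Sym2 V → ℕ} (hG : Good G c) {b d x p : V}
    (hbd : G.Adj b d) (hx : InA G b d x) (hp : InA G b d p) (h : G.Adj x p) :
    c s(x, p) = c s(b, d) ∨ c s(x, b) = c s(p, d) ∨ c s(x, d) = c s(p, b) :=
  hG.2 x p b d ⟨h, hx.1, hx.2, hp.1, hp.2, hbd⟩

/-- a vertex is determined by the colour of its edge to `w` -/
lemma col_inj {G : SimpleGraph V} {c : Sym2 V → ℕ} (hG : Good G c) {w x p : V}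
    (hx : G.Adj x w) (hp : G.Adj p w) (h : c s(x, w) = c s(p, w)) : x = p := by
  by_contra hne
  have := hG.1 w x p hx.symm hp.symm hne
  rw [Sym2.eq_swap, Sym2.eq_swap (a := w)] at this
  exact this h

lemma col_inj' {G : SimpleGraph V} {c : Sym2 V → ℕ} (hG : Good G c) {w x p : V}
    (hx : G.Adj w x) (hp : G.Adj w p) (h : c s(w, x) = c s(w, p)) : x = p := by
  by_contra hne
  exact hG.1 w x p hx hp hne h

lemma deg_le [Fintype V] {G : SimpleGraph V} {c : Sym2 V → ℕ} (hG : Good G c) {b d x : V}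
    (hbd : G.Adj b d) (hx : InA G b d x) :
    (Finset.univ.filter (fun p => G.Adj x p ∧ InA G b d p)).card ≤ 3 := by
  have : ∀ p ∈ Finset.univ.filter (fun p => G.Adj x p ∧ InA G b d p),
      (if c s(x, p) = c s(b, d) then 0 else if c s(x, b) = c s(p, d) then 1 else 2) ∈ Finset.range 3 := by
    intro p _
    split_ifs <;> simp
  have := Finset.card_le_card_of_injOn _ this ?_
  · simpa using this
  intro p hp q hq heq
  simp only [Finset.coe_filter, Finset.mem_univ, true_and, Set.mem_setOf_eq] at hp hq
  have e1 := edge_kill hG hbd hx hp.2 hp.1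
  have e2 := edge_kill hG hbd hx hq.2 hq.1
  have i1 := col_inj' hG hp.1 hq.1
  have i2 := col_inj hG hp.2.1 hq.2.1
  have i3 := col_inj hG hp.2.2 hq.2.2
  beta_reduce at heq
  split_ifs at heq <;> grind

lemma exists_far [Fintype V] {G : SimpleGraph V} {c : Sym2 V → ℕ} (hG : Good G c) {b d y : V}
    (hbd : G.Adj b d) (hy : InA G b d y) (S : Finset V) (hS : ∀ z ∈ S, InA G b d z)
    (hc : 64 < S.card) : ∃ z ∈ S, Far G b d y z := by
  by_contra hcon
  push Not at hcon
  let N : V → Finset V := fun x => if InA G b d x then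
    insert x (Finset.univ.filter (fun p => G.Adj x p ∧ InA G b d p)) else ∅
  have hN : ∀ x, (N x).card ≤ 4 := by
    intro x
    simp only [N]
    split_ifs with h
    · exact (Finset.card_insert_le _ _).trans (by have := deg_le hG hbd h; omega)
    · simp
  have hNm : ∀ x p, InA G b d x → B1 G b d x p → p ∈ N x := by
    intro x p hx hp
    simp only [N, if_pos hx, Finset.mem_insert, Finset.mem_filter, Finset.mem_univ, true_and]
    exact hp
  have hsub : S ⊆ ((N y).biUnion N).biUnion N := by
    intro z hz
    have hzA := hS z hz
    have := hcon z hz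
    unfold Far at this
    push Not at this
    obtain ⟨s, t, hs, ht, hst⟩ := this
    have hsA : InA G b d s := by
      rcases hs with rfl | h
      · exact hy
      · exact h.2
    have htA : InA G b d t := by
      rcases ht with rfl | h
      · exact hzA
      · exact h.2
    simp only [Finset.mem_biUnion]
    refine ⟨t, ⟨s, hNm _ _ hy hs, hNm _ _ hsA ?_⟩, hNm _ _ htA ?_⟩
    · by_cases h : s = t
      · exact Or.inl h.symm
      · exact Or.inr ⟨hst h, htA⟩
    · rcases ht with rfl | h
      · exact Or.inl rfl
      · exact Or.inr ⟨h.1.symm, hzA⟩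
  have c1 : ((N y).biUnion N).card ≤ 4 * 4 :=
    (Finset.card_biUnion_le_card_mul _ _ 4 (fun x _ => hN x)).trans (Nat.mul_le_mul_right _ (hN y))
  have c2 : (((N y).biUnion N).biUnion N).card ≤ 16 * 4 :=
    (Finset.card_biUnion_le_card_mul _ _ 4 (fun x _ => hN x)).trans (Nat.mul_le_mul_right _ c1)
  have := Finset.card_le_card hsub
  omega

lemma pt_pair [Fintype V] {G : SimpleGraph V} {c : Sym2 V → ℕ} (hG : Good G c) (hS : Sat G)
    {b d y z r r' : V} (hbd : G.Adj b d) (hf : Far G b d y z)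
    (hy : PT G c b d y r) (hz : PT G c b d z r') : ¬ G.Adj r b ∧ G.Adj r d := by
  have hcom0 : ∀ p, G.Adj y p → G.Adj z p → p = b ∨ p = d ∨ (p = r ∧ p = r') := by
    intro p h1 h2
    have h3 := hf.notA h1 h2
    have h4 := hy.2.2.2.1 p h1
    have h5 := hz.2.2.2.1 p h2
    tauto
  by_contra hcon
  by_cases hrb : G.Adj r b
  · by_cases hr : r = r'
    · subst hr
      exact zlink_b hG hS hbd hf hy hz hrb
    · refine zlink_a hG hS hbd hf.ne hf.nadj hy.nz hz.nz ?_
      intro p q h1 h2 h3 h4 h5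
      have := hcom0 p h1 h2
      have := hcom0 q h3 h4
      have := h5.ne
      grind
  · have hrd : ¬ G.Adj r d := fun h => hcon ⟨hrb, h⟩
    refine zlink_a hG hS hbd hf.ne hf.nadj hy.nz hz.nz ?_
    intro p q h1 h2 h3 h4 h5
    have := hcom0 p h1 h2
    have := hcom0 q h3 h4
    have := h5.ne
    have := h5.symm
    grind

noncomputable def N2 [Fintype V] (G : SimpleGraph V) (c : Sym2 V → ℕ) (b d : V) : Finset V :=
  Finset.univ.filter (fun y => InA G b d y ∧ Z G b d y ∧ Linkable G c b d y)

noncomputable def N4 [Fintype V] (G : SimpleGraph V) (c : Sym2 V → ℕ) (b d : V) : Finset V :=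
  Finset.univ.filter (fun y => ∃ r, PT G c b d y r)

lemma mem_N2 [Fintype V] {G : SimpleGraph V} {c : Sym2 V → ℕ} {b d y : V} :
    y ∈ N2 G c b d ↔ InA G b d y ∧ Z G b d y ∧ Linkable G c b d y := by simp [N2]

lemma mem_N4 [Fintype V] {G : SimpleGraph V} {c : Sym2 V → ℕ} {b d y : V} :
    y ∈ N4 G c b d ↔ ∃ r, PT G c b d y r := by simp [N4]

lemma link_N [Fintype V] {G : SimpleGraph V} {c : Sym2 V → ℕ} (hG : Good G c) (hS : Sat G)
    {b d : V} (hbd : G.Adj b d) (S T : Finset V)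
    (hSS : ∀ y ∈ S, InA G b d y ∧ Linkable G c b d y)
    (hT : ∀ y ∈ T, InA G b d y ∧ Linkable G c d b y)
    (hZ : ∀ y ∈ S, ∀ z ∈ T, Z G b d y ∨ Z G b d z) (c1 : 64 < S.card) (c2 : 64 < T.card) :
    False := by
  obtain ⟨y, hy⟩ := Finset.card_pos.1 (by omega : 0 < S.card)
  obtain ⟨z, hz, hf⟩ := exists_far hG hbd (hSS y hy).1 T (fun z hz => (hT z hz).1) c2
  refine link hG hS hbd.ne (hSS y hy).1 (hT z hz).1 hf ?_ (hSS y hy).2 (hT z hz).2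
  intro p q h1 h2 h3 h4 h5
  have := far_common hf (hZ y hy z hz) h1 h2
  have := far_common hf (hZ y hy z hz) h3 h4
  have := h5.ne
  grind

lemma N4_prop [Fintype V] {G : SimpleGraph V} {c : Sym2 V → ℕ} (hG : Good G c) (hS : Sat G)
    {b d : V} (hbd : G.Adj b d) (hc : 64 < (N4 G c b d).card) {y : V} (hy : y ∈ N4 G c b d) :
    ∃ r, PT G c b d y r ∧ ¬ G.Adj r b ∧ G.Adj r d := by
  obtain ⟨r, hr⟩ := mem_N4.1 hy
  obtain ⟨z, hz, hf⟩ := exists_far hG hbd hr.1 (N4 G c b d)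
    (fun z hz => (mem_N4.1 hz).choose_spec.1) hc
  obtain ⟨r', hr'⟩ := mem_N4.1 hz
  exact ⟨r, hr, pt_pair hG hS hbd hf hr hr'⟩

lemma dich [Fintype V] {G : SimpleGraph V} {c : Sym2 V → ℕ} (hG : Good G c) (hS : Sat G)
    {b d : V} (hbd : G.Adj b d) :
    ((N2 G c b d).card ≤ 64 ∧ (N4 G c b d).card ≤ 64) ∨
    ((N2 G c d b).card ≤ 64 ∧ (N4 G c d b).card ≤ 64) := by
  have a2 : ∀ y ∈ N2 G c b d, InA G b d y ∧ Linkable G c b d y := fun y hy =>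
    ⟨(mem_N2.1 hy).1, (mem_N2.1 hy).2.2⟩
  have a2' : ∀ y ∈ N2 G c d b, InA G b d y ∧ Linkable G c d b y := fun y hy =>
    ⟨InA_swap.1 (mem_N2.1 hy).1, (mem_N2.1 hy).2.2⟩
  have a4 : ∀ y ∈ N4 G c b d, InA G b d y ∧ Linkable G c b d y := fun y hy => by
    obtain ⟨r, hr⟩ := mem_N4.1 hy
    exact ⟨hr.1, link_of_rec hG hr.2.2.2.2.2.2 hr.1.1.ne⟩
  have a4' : ∀ y ∈ N4 G c d b, InA G b d y ∧ Linkable G c d b y := fun y hy => by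
    obtain ⟨r, hr⟩ := mem_N4.1 hy
    exact ⟨InA_swap.1 hr.1, link_of_rec hG hr.2.2.2.2.2.2 hr.1.1.ne⟩
  have z2 : ∀ y ∈ N2 G c b d, Z G b d y := fun y hy => (mem_N2.1 hy).2.1
  have z2' : ∀ y ∈ N2 G c d b, Z G b d y := fun y hy => Z_swap.1 (mem_N2.1 hy).2.1
  by_contra hcon
  have h1 : 64 < (N2 G c b d).card ∨ 64 < (N4 G c b d).card := by
    by_contra h; apply hcon; left; omega
  have h2 : 64 < (N2 G c d b).card ∨ 64 < (N4 G c d b).card := by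
    by_contra h; apply hcon; right; omega
  rcases h1 with h1 | h1
  · rcases h2 with h2 | h2
    · exact link_N hG hS hbd _ _ a2 a2' (fun y hy z hz => Or.inl (z2 y hy)) h1 h2
    · exact link_N hG hS hbd _ _ a2 a4' (fun y hy z hz => Or.inl (z2 y hy)) h1 h2
  · rcases h2 with h2 | h2
    · exact link_N hG hS hbd _ _ a4 a2' (fun y hy z hz => Or.inr (z2' z hz)) h1 h2
    · obtain ⟨y, hy⟩ := Finset.card_pos.1 (by omega : 0 < (N4 G c b d).card)
      obtain ⟨z, hz, hf⟩ := exists_far hG hbd (a4 y hy).1 _ (fun z hz => (a4' z hz).1) h2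
      obtain ⟨r, hr, r1, r2⟩ := N4_prop hG hS hbd h1 hy
      obtain ⟨r', hr', r1', r2'⟩ := N4_prop hG hS hbd.symm h2 hz
      refine zlink_a hG hS hbd hf.ne hf.nadj hr.nz (NZ_swap.1 hr'.nz) ?_
      have hcom0 : ∀ p, G.Adj y p → G.Adj z p → p = b ∨ p = d := by
        intro p h1 h2
        have h3 := hf.notA h1 h2
        have h3' := fun h => h3 (InA_swap.1 h)
        have h4 := hr.2.2.2.1 p h1
        have h5 := hr'.2.2.2.1 p h2
        have : r ≠ r' := by rintro rfl; exact r1 r2'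
        grind
      intro p q h1 h2 h3 h4 h5
      have := hcom0 p h1 h2
      have := hcom0 q h3 h4
      have := h5.ne
      grind

end RS

namespace RS
open Classical

variable {V : Type}

def Ze (G : SimpleGraph V) (c : Sym2 V → ℕ) (b d x p : V) : Prop :=
  G.Adj x p ∧ InA G b d x ∧ InA G b d p ∧ c s(x, p) = c s(b, d)

def Ou (G : SimpleGraph V) (c : Sym2 V → ℕ) (b d : V) (idx : V → ℕ) (x p : V) : Prop :=
  G.Adj x p ∧ InA G b d x ∧ InA G b d p ∧ c s(x, p) ≠ c s(b, d) ∧ c s(x, b) = c s(p, d) ∧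
  ¬ (c s(x, d) = c s(p, b) ∧ idx p < idx x)

lemma Ze.symm {G : SimpleGraph V} {c : Sym2 V → ℕ} {b d x p : V} (h : Ze G c b d x p) :
    Ze G c b d p x := ⟨h.1.symm, h.2.2.1, h.2.1, by rw [Sym2.eq_swap]; exact h.2.2.2⟩

lemma tri {G : SimpleGraph V} {c : Sym2 V → ℕ} (hG : Good G c) {b d x p : V} (idx : V → ℕ)
    (hbd : G.Adj b d) (hx : InA G b d x) (hp : InA G b d p) (h : G.Adj x p) :
    Ze G c b d x p ∨ Ou G c b d idx x p ∨ Ou G c b d idx p x := by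
  have := edge_kill hG hbd hx hp h
  have sw : c s(x, p) = c s(p, x) := by rw [Sym2.eq_swap]
  have h' := h.symm
  unfold Ze Ou
  by_cases h0 : c s(x, p) = c s(b, d)
  · exact Or.inl ⟨h, hx, hp, h0⟩
  · have h0' : c s(p, x) ≠ c s(b, d) := by rwa [← sw]
    right
    by_cases h1 : c s(x, b) = c s(p, d)
    · by_cases h2 : c s(x, d) = c s(p, b) ∧ idx p < idx x
      · right
        refine ⟨h', hp, hx, h0', h2.1.symm, ?_⟩
        rintro ⟨-, h3⟩
        omega
      · left; exact ⟨h, hx, hp, h0, h1, h2⟩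
    · right
      refine ⟨h', hp, hx, h0', ?_, ?_⟩
      · grind
      · rintro ⟨h3, -⟩
        exact h1 h3.symm

lemma ze_unique {G : SimpleGraph V} {c : Sym2 V → ℕ} (hG : Good G c) {b d x p q : V}
    (h1 : Ze G c b d x p) (h2 : Ze G c b d x q) : p = q :=
  col_inj' hG h1.1 h2.1 (h1.2.2.2.trans h2.2.2.2.symm)

lemma ou_unique {G : SimpleGraph V} {c : Sym2 V → ℕ} (hG : Good G c) {b d x p q : V} {idx : V → ℕ}
    (h1 : Ou G c b d idx x p) (h2 : Ou G c b d idx x q) : p = q :=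
  col_inj hG h1.2.2.1.2 h2.2.2.1.2 (h1.2.2.2.2.1.symm.trans h2.2.2.2.2.1)

lemma in_unique {G : SimpleGraph V} {c : Sym2 V → ℕ} (hG : Good G c) {b d x p q : V} {idx : V → ℕ}
    (h1 : Ou G c b d idx p x) (h2 : Ou G c b d idx q x) : p = q :=
  col_inj hG h1.2.1.1 h2.2.1.1 (h1.2.2.2.2.1.trans h2.2.2.2.2.1.symm)

lemma ou_asymm {G : SimpleGraph V} {c : Sym2 V → ℕ} {b d x p : V} {idx : V → ℕ}
    (hi : Function.Injective idx)
    (h1 : Ou G c b d idx x p) (h2 : Ou G c b d idx p x) : False := by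
  have n := h1.1.ne
  obtain ⟨-, -, -, -, e1, e2⟩ := h1
  obtain ⟨-, -, -, -, f1, f2⟩ := h2
  have : idx x ≠ idx p := fun h => n (hi h)
  have : ¬ idx p < idx x := fun h => e2 ⟨f1.symm, h⟩
  have : ¬ idx x < idx p := fun h => f2 ⟨e1.symm, h⟩
  omega

def Wit (G : SimpleGraph V) (c : Sym2 V → ℕ) (F : Sym2 V → Prop) (u v : V) : Prop :=
  ∃ p q, K4 G u v p q ∧ c s(u, v) = c s(p, q) ∧ ¬ F s(p, q) ∧
    ¬ (c s(u, p) = c s(v, q) ∧ (F s(u, p) ↔ F s(v, q))) ∧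
    ¬ (c s(u, q) = c s(v, p) ∧ (F s(u, q) ↔ F s(v, p)))

lemma wit_symm {G : SimpleGraph V} {c : Sym2 V → ℕ} {F : Sym2 V → Prop} {u v : V}
    (h : Wit G c F u v) : Wit G c F v u := by
  obtain ⟨p, q, ⟨k1, k2, k3, k4, k5, k6⟩, h1, h2, h3, h4⟩ := h
  refine ⟨p, q, ⟨k1.symm, k4, k5, k2, k3, k6⟩, by rw [Sym2.eq_swap]; exact h1, h2, ?_, ?_⟩
  · rintro ⟨e1, e2⟩; exact h4 ⟨e1.symm, e2.symm⟩
  · rintro ⟨e1, e2⟩; exact h3 ⟨e1.symm, e2.symm⟩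

lemma not_closed {G : SimpleGraph V} {c : Sym2 V → ℕ} (hG : Good G c) {F : Sym2 V → Prop}
    (h : ¬ Closed G c F) : ∃ u v, F s(u, v) ∧ Wit G c F u v := by
  unfold Closed at h
  push Not at h
  obtain ⟨a, b, p, q, hk, h1, h2, h3⟩ := h
  have hK := hG.2 a b p q hk
  obtain ⟨k1, k2, k3, k4, k5, k6⟩ := hk
  have sw : ∀ x y : V, s(x, y) = s(y, x) := fun x y => Sym2.eq_swap
  rcases hK with h | h | h
  · by_cases hF : F s(a, b)
    · refine ⟨a, b, hF, p, q, ⟨k1, k2, k3, k4, k5, k6⟩, h, ?_, ?_, ?_⟩ <;> grind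
    · refine ⟨p, q, by grind, a, b, ⟨k6, k2.symm, k4.symm, k3.symm, k5.symm, k1⟩, h.symm, ?_, ?_, ?_⟩ <;> grind
  · by_cases hF : F s(a, p)
    · refine ⟨a, p, hF, b, q, ⟨k2, k1, k3, k4.symm, k6, k5⟩, h, ?_, ?_, ?_⟩ <;> grind
    · refine ⟨b, q, by grind, a, p, ⟨k5, k1.symm, k4, k3.symm, k6.symm, k2⟩, h.symm, ?_, ?_, ?_⟩ <;> grind
  · by_cases hF : F s(a, q)
    · refine ⟨a, q, hF, b, p, ⟨k3, k1, k2, k5.symm, k6.symm, k4⟩, h, ?_, ?_, ?_⟩ <;> grind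
    · refine ⟨b, p, by grind, a, q, ⟨k4, k1.symm, k5, k2.symm, k6, k3⟩, h.symm, ?_, ?_, ?_⟩ <;> grind

def Gr (G : SimpleGraph V) (c : Sym2 V → ℕ) (b d : V) (idx : V → ℕ) (y w : V) : Prop :=
  ∃ x0 xi, Ze G c b d y x0 ∧ Ou G c b d idx xi y ∧ Ou G c b d idx x0 xi ∧ ¬ Z G b d w ∧
    (w = x0 ∨ (c s(w, d) = c s(y, b) ∧ Ou G c b d idx w x0 ∧ Ze G c b d w xi))

/-- the final saturation step in the structure lemma -/
lemma bad_final [Fintype V] {G : SimpleGraph V} {c : Sym2 V → ℕ} (hG : Good G c) (hS : Sat G)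
    {b d y x0 xi p : V} {idx : V → ℕ} (hbd : G.Adj b d)
    (hyN : ∀ x, G.Adj y x → x = b ∨ x = d ∨ x = x0 ∨ x = xi)
    (hpN : ∀ x, G.Adj p x → x = b ∨ x = d ∨ x = x0 ∨ x = xi)
    (hyp : y ≠ p) (hadj : ¬ G.Adj y p)
    (z1 : Ze G c b d y x0) (o1 : Ou G c b d idx xi y) (o2 : Ou G c b d idx x0 xi)
    (o3 : Ou G c b d idx p x0) (z2 : Ze G c b d p xi)
    (e1 : c s(y, b) = c s(x0, xi)) (e2 : c s(p, d) = c s(y, b)) : False := by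
  have sw : ∀ x y : V, c s(x, y) = c s(y, x) := fun x y => by rw [Sym2.eq_swap]
  have P : ∀ a x x', G.Adj a x → G.Adj a x' → x ≠ x' → c s(a, x) ≠ c s(a, x') := hG.1
  obtain ⟨a1, a2, a3, a4⟩ := z1
  obtain ⟨b1, b2, -, b4, b5, -⟩ := o1
  obtain ⟨c1, -, -, c4, c5, -⟩ := o2
  obtain ⟨d1, d2, -, d4, d5, -⟩ := o3
  obtain ⟨f1, -, -, f4⟩ := z2
  have K1 := hG.2 y x0 xi d ⟨a1, b1.symm, a2.2, c1, a3.2, b2.2⟩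
  have K2 := hG.2 x0 xi p b ⟨c1, d1.symm, a3.1, f1.symm, b2.1, d2.1⟩
  unfold Kill at K1 K2
  -- distinctness
  have n1 := c1.ne
  have n2 := hbd.ne
  have q1 : c s(y, x0) ≠ c s(xi, d) := by
    rw [a4, sw b d, sw xi d]; exact P d b xi hbd.symm b2.2.symm b2.1.ne.symm
  have q2 : c s(y, d) ≠ c s(x0, xi) := by
    rw [← e1]; exact P y d b a2.2 a2.1 n2.symm
  have r1 : c s(y, xi) = c s(x0, d) := by tauto
  have q3 : c s(x0, xi) ≠ c s(p, b) := by
    rw [← e1, ← e2]; exact P p d b d2.2 d2.1 n2.symm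
  have q4 : c s(x0, b) ≠ c s(xi, p) := by
    rw [sw xi p, f4, sw x0 b]; exact P b x0 d a3.1.symm hbd a3.2.ne
  have r2 : c s(x0, p) = c s(xi, b) := by tauto
  refine recolor hG hS hyp hadj (c s(x0, b)) (fun _ => 0) ?_ ?_ ?_ ?_ ?_
  · intro x hx _
    rcases hyN x hx with rfl | rfl | rfl | rfl
    · rw [sw y, sw x0]; exact P x y x0 a2.1.symm a3.1.symm a1.ne
    · rw [← b5, sw xi, sw x0]; exact P b xi x0 b2.1.symm a3.1.symm n1.symm
    · rw [sw y]; exact P x y b a1.symm a3.1 a2.1.ne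
    · rw [r1]; exact P x0 d b a3.2 a3.1 n2.symm
  · intro x hx _
    rcases hpN x hx with rfl | rfl | rfl | rfl
    · rw [sw p, sw x0]; exact P x p x0 d2.1.symm a3.1.symm d1.ne
    · rw [e2, sw y, sw x0]; exact P b y x0 a2.1.symm a3.1.symm a1.ne
    · rw [sw p]; exact P x p b d1.symm a3.1 d2.1.ne
    · rw [f4, sw x0]; exact P b d x0 hbd a3.1.symm a3.2.ne.symm
  · intros; rfl
  · intro a x s t hk
    simpa [Kill] using hG.2 a x s t hk
  · intro s t h1 h2 h3 h4 h5
    have n := h5.ne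
    simp only [and_true, true_and, true_imp_iff]
    rcases hyN s h1 with rfl | rfl | rfl | rfl <;> rcases hyN t h2 with rfl | rfl | rfl | rfl <;>
      grind

lemma bad_structure [Fintype V] {G : SimpleGraph V} {c : Sym2 V → ℕ} (hG : Good G c) (hS : Sat G)
    {b d y x0 : V} (idx : V → ℕ) (hbd : G.Adj b d) (hyA : InA G b d y) (hyZ : Z G b d y)
    (hz : Ze G c b d y x0) (hmo : ∀ p, ¬ Ou G c b d idx y p) (hL : ¬ Linkable G c b d y) :
    ∃ w, Gr G c b d idx y w := by
  have sw : ∀ x y : V, c s(x, y) = c s(y, x) := fun x y => by rw [Sym2.eq_swap]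
  have hnb : ∀ x, G.Adj y x → x = b ∨ x = d ∨ (InA G b d x ∧ (x = x0 ∨ Ou G c b d idx x y)) := by
    intro x hx
    by_cases h1 : x = b
    · exact Or.inl h1
    by_cases h2 : x = d
    · exact Or.inr (Or.inl h2)
    right; right
    have hA : InA G b d x := by
      by_contra h
      exact hyZ x ⟨h1, h2, h⟩ hx
    refine ⟨hA, ?_⟩
    rcases tri hG idx hbd hyA hA hx with h | h | h
    · exact Or.inl (ze_unique hG h hz)
    · exact absurd h (hmo x)
    · exact Or.inr h
  have ndy : y ≠ b := hyA.1.ne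
  -- cliques through `y b`
  have hcl : ∀ s t, K4 G y b s t → (c s(y, s) = c s(b, t) ∧ ((s = d ∨ t = d))) ∨
      (c s(y, t) = c s(b, s) ∧ (s = d ∨ t = d)) ∨
      (s = x0 ∧ Ou G c b d idx t y) ∨ (t = x0 ∧ Ou G c b d idx s y) := by
    intro s t ⟨k1, k2, k3, k4, k5, k6⟩
    have m1 := k4.ne
    have m2 := k5.ne
    have m3 := k6.ne
    rcases hnb s k2 with rfl | rfl | ⟨hs, hs'⟩
    · exact absurd rfl m1
    · rcases hnb t k3 with rfl | rfl | ⟨ht, ht'⟩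
      · exact absurd rfl m2
      · exact absurd rfl m3
      · rcases ht' with rfl | ht'
        · right; left; exact ⟨hz.2.2.2, Or.inl rfl⟩
        · left; exact ⟨by rw [sw b, ht'.2.2.2.2.1], Or.inl rfl⟩
    · rcases hnb t k3 with rfl | rfl | ⟨ht, ht'⟩
      · exact absurd rfl m2
      · rcases hs' with rfl | hs'
        · left; exact ⟨hz.2.2.2, Or.inr rfl⟩
        · right; left; exact ⟨by rw [sw b, hs'.2.2.2.2.1], Or.inr rfl⟩
      · right; right
        rcases hs' with rfl | hs' <;> rcases ht' with rfl | ht'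
        · exact absurd rfl m3
        · exact Or.inl ⟨rfl, ht'⟩
        · exact Or.inr ⟨rfl, hs'⟩
        · exact absurd (in_unique hG hs' ht') m3
  have hnR : ¬ Rec G c y b := fun h => hL (link_of_rec hG h ndy)
  obtain ⟨xi, hxi, hx0xi, hbx0, hbxi, e1⟩ : ∃ xi, Ou G c b d idx xi y ∧ G.Adj x0 xi ∧ G.Adj b x0 ∧
      G.Adj b xi ∧ c s(y, b) = c s(x0, xi) := by
    unfold Rec at hnR
    push Not at hnR
    obtain ⟨s, t, hk, h1, h2⟩ := hnR
    have hK := hG.2 _ _ _ _ hk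
    have h3 : c s(y, b) = c s(s, t) := by
      rcases hK with h | h | h
      · exact h
      · exact absurd h h1
      · exact absurd h h2
    rcases hcl s t hk with h | h | ⟨rfl, h⟩ | ⟨rfl, h⟩
    · exact absurd h.1 h1
    · exact absurd h.1 h2
    · exact ⟨t, h, hk.2.2.2.2.2, hk.2.2.2.1, hk.2.2.2.2.1, h3⟩
    · exact ⟨s, h, hk.2.2.2.2.2.symm, hk.2.2.2.2.1, hk.2.2.2.1, by rw [h3, sw]⟩
  have x0A := hz.2.2.1
  have xiA := hxi.2.1
  have nyx0 := hz.1.ne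
  have nyxi := hxi.1.ne
  have nx := hx0xi.ne
  have o2 : Ou G c b d idx x0 xi := by
    rcases tri hG idx hbd x0A xiA hx0xi with h | h | h
    · exact absurd (ze_unique hG hz.symm h) nyxi.symm
    · exact h
    · exact absurd (ou_unique hG hxi h) nyx0
  by_cases hZx0 : Z G b d x0
  swap
  · exact ⟨x0, x0, xi, hz, hxi, o2, hZx0, Or.inl rfl⟩
  have dA : d ≠ y ∧ d ≠ x0 ∧ d ≠ xi ∧ d ≠ b :=
    ⟨hyA.2.ne.symm, x0A.2.ne.symm, xiA.2.ne.symm, hbd.ne.symm⟩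
  have bA : b ≠ y ∧ b ≠ x0 ∧ b ≠ xi := ⟨hyA.1.ne.symm, x0A.1.ne.symm, xiA.1.ne.symm⟩
  have hNC : ¬ Closed G c (fun e => e = s(y, b) ∨ e = s(x0, xi)) := by
    intro hC
    apply hL
    refine ⟨_, Or.inl rfl, ?_, ?_, hC⟩
    · intro p q h
      simp only [Sym2.eq_iff] at h
      have u1 : B1 G b d y y := Or.inl rfl
      have u2 : B1 G b d y x0 := Or.inr ⟨hz.1, x0A⟩
      have u3 : B1 G b d y xi := Or.inr ⟨hxi.1.symm, xiA⟩
      rcases h with (⟨rfl, -⟩ | ⟨rfl, -⟩) | (⟨rfl, -⟩ | ⟨rfl, -⟩) <;> tauto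
    · intro p q q' h1 h2
      simp only [Sym2.eq_iff] at h1 h2
      grind
  obtain ⟨u, v, hF, hW⟩ := not_closed hG hNC
  have hW' : Wit G c (fun e => e = s(y, b) ∨ e = s(x0, xi)) y b ∨
      Wit G c (fun e => e = s(y, b) ∨ e = s(x0, xi)) x0 xi := by
    rcases hF with hF | hF
    · left
      rcases Sym2.eq_iff.1 hF with ⟨rfl, rfl⟩ | ⟨rfl, rfl⟩
      · exact hW
      · exact wit_symm hW
    · right
      rcases Sym2.eq_iff.1 hF with ⟨rfl, rfl⟩ | ⟨rfl, rfl⟩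
      · exact hW
      · exact wit_symm hW
  clear hW hF
  rcases hW' with ⟨p, q, hk, w1, w2, w3, w4⟩ | ⟨p, q, hk, w1, w2, w3, w4⟩
  · exfalso
    have nF : ∀ s t, K4 G y b s t → (s = d ∨ t = d) →
        ((s(y, s) = s(y, b) ∨ s(y, s) = s(x0, xi)) ↔ (s(b, t) = s(y, b) ∨ s(b, t) = s(x0, xi))) := by
      intro s t ⟨k1, k2, k3, k4, k5, k6⟩ hd
      have m1 := k4.ne
      have m2 := k5.ne
      have m3 := k2.ne
      have m4 := k3.ne
      simp only [Sym2.eq_iff]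
      grind
    rcases hcl p q hk with ⟨h, h'⟩ | ⟨h, h'⟩ | ⟨rfl, h⟩ | ⟨rfl, h⟩
    · exact w3 ⟨h, nF p q hk h'⟩
    · obtain ⟨k1, k2, k3, k4, k5, k6⟩ := hk
      exact w4 ⟨h, nF q p ⟨k1, k3, k2, k5, k4, k6.symm⟩ h'.symm⟩
    · obtain rfl := in_unique hG h hxi
      exact w2 (Or.inr rfl)
    · obtain rfl := in_unique hG h hxi
      exact w2 (Or.inr Sym2.eq_swap)
  · -- main case
    clear w3 w4
    have main : ∀ p, K4 G x0 xi p d → c s(p, d) = c s(y, b) → p ≠ y → InA G b d p →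
        ∃ w, Gr G c b d idx y w := by
      intro p ⟨k1, k2, k3, k4, k5, k6⟩ e2 hpy hpA
      have m1 := k2.ne
      have m2 := k4.ne
      have o3 : Ou G c b d idx p x0 := by
        rcases tri hG idx hbd x0A hpA k2 with h | h | h
        · exact absurd (ze_unique hG h hz.symm) hpy
        · exact absurd (ou_unique hG h o2) m2.symm
        · exact h
      have z2 : Ze G c b d p xi := by
        rcases tri hG idx hbd xiA hpA k4 with h | h | h
        · exact h.symm
        · exact absurd (ou_unique hG h hxi) hpy
        · exact absurd (ou_unique hG h o3) nx.symm
      have hadj : ¬ G.Adj y p := by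
        intro hyp
        rcases tri hG idx hbd hyA hpA hyp with h | h | h
        · exact m1 (ze_unique hG hz h)
        · exact hmo _ h
        · exact m2 (in_unique hG hxi h)
      by_cases hZp : Z G b d p
      · exfalso
        refine bad_final hG hS hbd ?_ ?_ hpy.symm hadj hz hxi o2 o3 z2 e1 e2
        · intro x hx
          rcases hnb x hx with h | h | ⟨-, h | h⟩
          · exact Or.inl h
          · exact Or.inr (Or.inl h)
          · exact Or.inr (Or.inr (Or.inl h))
          · exact Or.inr (Or.inr (Or.inr (in_unique hG h hxi)))
        · intro x hx
          by_cases h1 : x = b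
          · exact Or.inl h1
          by_cases h2 : x = d
          · exact Or.inr (Or.inl h2)
          have hA : InA G b d x := by
            by_contra h
            exact hZp x ⟨h1, h2, h⟩ hx
          rcases tri hG idx hbd hpA hA hx with h | h | h
          · exact Or.inr (Or.inr (Or.inr (ze_unique hG h z2)))
          · exact Or.inr (Or.inr (Or.inl (ou_unique hG h o3)))
          · exfalso
            have := col_inj hG h.2.1.1 hyA.1 (h.2.2.2.2.1.trans e2)
            subst this
            exact hadj hx.symm
      · exact ⟨p, x0, xi, hz, hxi, o2, hZp, Or.inr ⟨e2, o3, z2⟩⟩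
    have hk0 := hk
    obtain ⟨k1, k2, k3, k4, k5, k6⟩ := hk
    have w1' : c s(y, b) = c s(p, q) := e1.trans w1
    have py : p ≠ y := by
      rintro rfl
      have := col_inj' hG hyA.1 k6 w1'
      subst this
      exact w2 (Or.inl rfl)
    have qy : q ≠ y := by
      rintro rfl
      rw [sw p] at w1'
      have := col_inj' hG hyA.1 k6.symm w1'
      subst this
      exact w2 (Or.inl Sym2.eq_swap)
    have pb : p ≠ b := by
      rintro rfl
      rw [sw p] at w1'
      have := col_inj hG hyA.1 k6.symm w1'
      exact qy this.symm
    have qb : q ≠ b := by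
      rintro rfl
      have := col_inj hG hyA.1 k6 w1'
      exact py this.symm
    have hp : p = d ∨ InA G b d p := by
      by_contra h
      push Not at h
      exact hZx0 p ⟨pb, h.1, h.2⟩ k2
    have hq : q = d ∨ InA G b d q := by
      by_contra h
      push Not at h
      exact hZx0 q ⟨qb, h.1, h.2⟩ k3
    have m6 := k6.ne
    rcases hp with rfl | hp
    · rcases hq with rfl | hq
      · exact absurd rfl m6
      · exact main q ⟨k1, k3, k2, k5, k4, k6.symm⟩ (by rw [w1', sw]) qy hq
    · rcases hq with rfl | hq
      · exact main p hk0 w1'.symm py hp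
      · exfalso
        have := deg_le hG hbd x0A
        have hsub : ({y, xi, p, q} : Finset V) ⊆
            Finset.univ.filter (fun p => G.Adj x0 p ∧ InA G b d p) := by
          intro t ht
          simp only [Finset.mem_insert, Finset.mem_singleton] at ht
          simp only [Finset.mem_filter, Finset.mem_univ, true_and]
          rcases ht with rfl | rfl | rfl | rfl
          · exact ⟨hz.1.symm, hyA⟩
          · exact ⟨hx0xi, xiA⟩
          · exact ⟨k2, hp⟩
          · exact ⟨k3, hq⟩
        have h4 : ({y, xi, p, q} : Finset V).card = 4 := by
          have := k4.ne
          have := k5.ne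
          rw [Finset.card_insert_of_notMem, Finset.card_insert_of_notMem,
            Finset.card_insert_of_notMem, Finset.card_singleton] <;> simp <;> grind
        have := Finset.card_le_card hsub
        omega

end RS

namespace RS
open Classical

variable {V : Type}

noncomputable def SA [Fintype V] (G : SimpleGraph V) (b d : V) : Finset V :=
  Finset.univ.filter (fun x => InA G b d x)

noncomputable def dR [Fintype V] (G : SimpleGraph V) (b d x : V) : ℕ :=
  (Finset.univ.filter (fun r => G.Adj x r ∧ InR G b d r)).card

noncomputable def dA [Fintype V] (G : SimpleGraph V) (b d x : V) : ℕ :=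
  (Finset.univ.filter (fun r => G.Adj x r ∧ InA G b d r)).card

lemma mem_SA [Fintype V] {G : SimpleGraph V} {b d x : V} : x ∈ SA G b d ↔ InA G b d x := by
  simp [SA]

lemma dR_pos [Fintype V] {G : SimpleGraph V} {b d x : V} (h : ¬ Z G b d x) : 0 < dR G b d x := by
  unfold Z at h
  push Not at h
  obtain ⟨r, h1, h2⟩ := h
  exact Finset.card_pos.2 ⟨r, by simp [h1, h2]⟩

lemma pt_of [Fintype V] {G : SimpleGraph V} {c : Sym2 V → ℕ} (hG : Good G c) {b d y : V}
    (idx : V → ℕ) (hbd : G.Adj b d) (hyA : InA G b d y) (hm0 : ∀ p, ¬ Ze G c b d y p)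
    (hmo : ∀ p, ¬ Ou G c b d idx y p) (hd : dR G b d y = 1)
    (hin : ∀ x, Ou G c b d idx x y → Z G b d x) : ∃ r, PT G c b d y r := by
  obtain ⟨r, hr⟩ := Finset.card_eq_one.1 hd
  have hr' : ∀ x, (G.Adj y x ∧ InR G b d x) ↔ x = r := by
    intro x
    have : x ∈ (Finset.univ.filter (fun r => G.Adj y r ∧ InR G b d r)) ↔ x ∈ ({r} : Finset V) := by
      rw [hr]
    simpa using this
  obtain ⟨hyr, hrR⟩ := (hr' r).2 rfl
  have hO : ∀ x, InA G b d x → G.Adj y x → Ou G c b d idx x y := by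
    intro x hx hyx
    rcases tri hG idx hbd hyA hx hyx with h | h | h
    · exact absurd h (hm0 x)
    · exact absurd h (hmo x)
    · exact h
  have hnb : ∀ x, G.Adj y x → x = b ∨ x = d ∨ x = r ∨ InA G b d x := by
    intro x hx
    by_contra h
    push Not at h
    exact h.2.2.1 ((hr' x).1 ⟨hx, h.1, h.2.1, h.2.2.2⟩)
  have hrA : ∀ x, InA G b d x → G.Adj y x → ¬ G.Adj r x := by
    intro x hx hyx hrx
    exact hin x (hO x hx hyx) r hrR hrx.symm
  have hnK : ∀ p q, ¬ K4 G y r p q := by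
    rintro p q ⟨k1, k2, k3, k4, k5, k6⟩
    have hp := hnb p k2
    have hq := hnb q k3
    have m4 := k4.ne
    have m5 := k5.ne
    have m6 := k6.ne
    have hb : ¬ (G.Adj r b ∧ G.Adj r d) := hrR.2.2
    have u1 := hrA p
    have u2 := hrA q
    grind
  refine ⟨r, hyA, hrR, hyr, hnb, ?_, hnK, ?_⟩
  · intro x hx hyx hc
    exact hm0 x ⟨hyx, hyA, hx, hc⟩
  · intro s t hk
    have sw : ∀ x y : V, c s(x, y) = c s(y, x) := fun x y => by rw [Sym2.eq_swap]
    have nr : ∀ x, InK y b s t x → x ≠ y → x ≠ r := by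
      rintro x hx hxy rfl
      obtain ⟨p, q, hk'⟩ := hk.re (Or.inl rfl) hx hxy.symm
      exact hnK p q hk'
    obtain ⟨k1, k2, k3, k4, k5, k6⟩ := hk
    have s1 := nr s (by simp [InK]) k2.ne.symm
    have s2 := nr t (by simp [InK]) k3.ne.symm
    rcases hnb s k2 with h | h | h | h
    · exact absurd h.symm k4.ne
    · rcases hnb t k3 with h' | h' | h' | h'
      · exact absurd h'.symm k5.ne
      · exact absurd (h.trans h'.symm) k6.ne
      · exact absurd h' s2
      · left; subst h; rw [sw b, (hO t h' k3).2.2.2.2.1]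
    · exact absurd h s1
    · rcases hnb t k3 with h' | h' | h' | h'
      · exact absurd h'.symm k5.ne
      · right; subst h'; rw [sw b, (hO s h k2).2.2.2.2.1]
      · exact absurd h' s2
      · exact absurd (in_unique hG (hO s h k2) (hO t h' k3)) k6.ne

noncomputable def ze [Fintype V] (G : SimpleGraph V) (c : Sym2 V → ℕ) (b d x : V) : ℕ :=
  if ∃ p, Ze G c b d x p then 1 else 0

noncomputable def ou [Fintype V] (G : SimpleGraph V) (c : Sym2 V → ℕ) (b d : V) (idx : V → ℕ)
    (x : V) : ℕ :=
  if ∃ p, Ou G c b d idx x p then 1 else 0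

lemma sum_ind {S T : Finset V} (h : T ⊆ S) : ∑ x ∈ S, (if x ∈ T then 1 else 0) = T.card := by
  rw [Finset.sum_boole, Finset.filter_mem_eq_inter, Finset.inter_eq_right.2 h]
  simp

lemma L2 [Fintype V] {G : SimpleGraph V} {c : Sym2 V → ℕ} (hG : Good G c) (hS : Sat G)
    {b d : V} (idx : V → ℕ) (hbd : G.Adj b d)
    (h2 : (N2 G c b d).card ≤ 64) (h4 : (N4 G c b d).card ≤ 64) :
    3 * (SA G b d).card ≤ ∑ x ∈ SA G b d, ze G c b d x + 2 * ∑ x ∈ SA G b d, ou G c b d idx x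
      + 2 * ∑ x ∈ SA G b d, dR G b d x + 384 := by
  let N1 : Finset V := Finset.univ.filter (fun y => InA G b d y ∧ Z G b d y ∧ ∀ p, ¬ Ze G c b d y p)
  let N3 : Finset V := Finset.univ.filter (fun y => InA G b d y ∧ Z G b d y ∧ (∃ p, Ze G c b d y p)
    ∧ (∀ p, ¬ Ou G c b d idx y p) ∧ ¬ Linkable G c b d y)
  let N5 : Finset V := Finset.univ.filter (fun y => InA G b d y ∧ (∀ p, ¬ Ze G c b d y p)
    ∧ (∀ p, ¬ Ou G c b d idx y p) ∧ ∃ x, Ou G c b d idx x y ∧ ¬ Z G b d x)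
  have mN1 : ∀ y, y ∈ N1 ↔ (InA G b d y ∧ Z G b d y ∧ ∀ p, ¬ Ze G c b d y p) := by simp [N1]
  have mN3 : ∀ y, y ∈ N3 ↔ (InA G b d y ∧ Z G b d y ∧ (∃ p, Ze G c b d y p)
    ∧ (∀ p, ¬ Ou G c b d idx y p) ∧ ¬ Linkable G c b d y) := by simp [N3]
  have mN5 : ∀ y, y ∈ N5 ↔ (InA G b d y ∧ (∀ p, ¬ Ze G c b d y p)
    ∧ (∀ p, ¬ Ou G c b d idx y p) ∧ ∃ x, Ou G c b d idx x y ∧ ¬ Z G b d x) := by simp [N5]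
  clear_value N1 N3 N5
  have c1 : N1.card ≤ 64 := by
    by_contra hcon
    push Not at hcon
    obtain ⟨y, hy⟩ := Finset.card_pos.1 (by omega : 0 < N1.card)
    have hy' := (mN1 y).1 hy
    obtain ⟨z, hz, hf⟩ := exists_far hG hbd hy'.1 N1 (fun z hz => ((mN1 z).1 hz).1) hcon
    have nz : ∀ y ∈ N1, NZ G c b d y := by
      intro y hy
      have hy' := (mN1 y).1 hy
      refine ⟨hy'.1, fun x hx hyx hc => hy'.2.2 x ⟨hyx, hy'.1, hx, hc⟩, ?_⟩
      intro r hr ha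
      exact absurd ha (hy'.2.1 r hr)
    refine zlink_a hG hS hbd hf.ne hf.nadj (nz y hy) (nz z hz) ?_
    intro p q h1 h2 h3 h4 h5
    have := far_common hf (Or.inl hy'.2.1) h1 h2
    have := far_common hf (Or.inl hy'.2.1) h3 h4
    have := h5.ne
    grind
  have hg : ∀ y, ∃ w, y ∈ N3 → Gr G c b d idx y w := by
    intro y
    by_cases hy : y ∈ N3
    · obtain ⟨a1, a2, ⟨x0, a3⟩, a4, a5⟩ := (mN3 y).1 hy
      obtain ⟨w, hw⟩ := bad_structure hG hS idx hbd a1 a2 a3 a4 a5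
      exact ⟨w, fun _ => hw⟩
    · exact ⟨y, fun h => absurd h hy⟩
  choose g hg using hg
  have hh : ∀ y, ∃ w, y ∈ N5 → Ou G c b d idx w y ∧ ¬ Z G b d w := by
    intro y
    by_cases hy : y ∈ N5
    · obtain ⟨a1, a2, a4, x, a5⟩ := (mN5 y).1 hy
      exact ⟨x, fun _ => a5⟩
    · exact ⟨y, fun h => absurd h hy⟩
  choose h hh using hh
  have ginj : Set.InjOn g N3 := by
    intro y hy y' hy' heq
    obtain ⟨x0, xi, r1, r2, r3, r4, r5⟩ := hg y hy
    obtain ⟨x0', xi', r1', r2', r3', r4', r5'⟩ := hg y' hy'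
    have hmo := ((mN3 y).1 hy).2.2.2.1
    have hmo' := ((mN3 y').1 hy').2.2.2.1
    have hyA := ((mN3 y).1 hy).1
    have hyA' := ((mN3 y').1 hy').1
    rw [← heq] at r5'
    rcases r5 with r5 | ⟨s1, s2, s3⟩ <;> rcases r5' with r5' | ⟨s1', s2', s3'⟩
    · rw [← r5] at r1
      rw [← r5'] at r1'
      exact ze_unique hG r1.symm r1'.symm
    · exfalso
      rw [← r5] at r1
      have := ze_unique hG r1.symm s3'
      subst this
      exact hmo _ r2'
    · exfalso
      rw [← r5'] at r1'
      have := ze_unique hG r1'.symm s3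
      subst this
      exact hmo' _ r2
    · exact col_inj hG hyA.1 hyA'.1 (s1.symm.trans s1')
  have hinj : Set.InjOn h N5 := by
    intro y hy y' hy' heq
    have r1 := (hh y hy).1
    have r2 := (hh y' hy').1
    rw [← heq] at r2
    exact ou_unique hG r1 r2
  have gim : ∀ w ∈ N3.image g, InA G b d w ∧ ¬ Z G b d w ∧ (∃ p, Ze G c b d w p) ∧
      ∃ p q, Ou G c b d idx w p ∧ Ou G c b d idx p q := by
    intro w hw
    obtain ⟨y, hy, rfl⟩ := Finset.mem_image.1 hw
    obtain ⟨x0, xi, r1, r2, r3, r4, r5⟩ := hg y hy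
    rcases r5 with r5 | ⟨s1, s2, s3⟩
    · rw [r5]
      rw [r5] at r4
      exact ⟨r1.2.2.1, r4, ⟨y, r1.symm⟩, xi, y, r3, r2⟩
    · exact ⟨s2.2.1, r4, ⟨_, s3⟩, x0, xi, s2, r3⟩
  have him : ∀ w ∈ N5.image h, InA G b d w ∧ ¬ Z G b d w ∧
      ∃ p, Ou G c b d idx w p ∧ ∀ q, ¬ Ou G c b d idx p q := by
    intro w hw
    obtain ⟨y, hy, rfl⟩ := Finset.mem_image.1 hw
    obtain ⟨r1, r2⟩ := hh y hy
    exact ⟨r1.2.1, r2, y, r1, ((mN5 y).1 hy).2.2.1⟩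
  have hdis : ∀ w, w ∈ N3.image g → w ∈ N5.image h → False := by
    intro w h1 h2
    obtain ⟨-, -, -, p, q, e1, e2⟩ := gim w h1
    obtain ⟨-, -, p', e1', e2'⟩ := him w h2
    have := ou_unique hG e1 e1'
    subst this
    exact e2' _ e2
  have pt : ∀ x ∈ SA G b d, 3 + 2 * (if x ∈ N3.image g then 1 else 0) + (if x ∈ N5.image h then 1 else 0)
      ≤ ze G c b d x + 2 * ou G c b d idx x + 2 * dR G b d x + 3 * (if x ∈ N1 then 1 else 0)
        + 2 * (if x ∈ N2 G c b d then 1 else 0) + (if x ∈ N4 G c b d then 1 else 0)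
        + 2 * (if x ∈ N3 then 1 else 0) + (if x ∈ N5 then 1 else 0) := by
    intro x hx
    rw [mem_SA] at hx
    have g1 := gim x
    have h1 := him x
    have hd := hdis x
    by_cases hZ : Z G b d x
    · have e1 : x ∉ N3.image g := fun h => (g1 h).2.1 hZ
      have e2 : x ∉ N5.image h := fun h => (h1 h).2.1 hZ
      rw [if_neg e1, if_neg e2]
      by_cases z0 : ∃ p, Ze G c b d x p
      · have : ze G c b d x = 1 := if_pos z0
        by_cases o0 : ∃ p, Ou G c b d idx x p
        · have : ou G c b d idx x = 1 := if_pos o0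
          omega
        · push Not at o0
          by_cases hL : Linkable G c b d x
          · have : x ∈ N2 G c b d := mem_N2.2 ⟨hx, hZ, hL⟩
            rw [if_pos this]; omega
          · have : x ∈ N3 := (mN3 x).2 ⟨hx, hZ, z0, o0, hL⟩
            rw [if_pos this]; omega
      · push Not at z0
        have : x ∈ N1 := (mN1 x).2 ⟨hx, hZ, z0⟩
        rw [if_pos this]; omega
    · have hp := dR_pos hZ
      by_cases e1 : x ∈ N3.image g
      · have e2 := hd e1
        obtain ⟨-, -, z0, p, q, o0, -⟩ := g1 e1
        have : ze G c b d x = 1 := if_pos z0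
        have : ou G c b d idx x = 1 := if_pos ⟨p, o0⟩
        rw [if_pos e1, if_neg e2]
        omega
      · by_cases e2 : x ∈ N5.image h
        · obtain ⟨-, -, p, o0, -⟩ := h1 e2
          have : ou G c b d idx x = 1 := if_pos ⟨p, o0⟩
          rw [if_neg e1, if_pos e2]
          omega
        · rw [if_neg e1, if_neg e2]
          by_cases z0 : ∃ p, Ze G c b d x p
          · have : ze G c b d x = 1 := if_pos z0
            omega
          · by_cases o0 : ∃ p, Ou G c b d idx x p
            · have : ou G c b d idx x = 1 := if_pos o0
              omega
            · push Not at z0 o0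
              by_cases hd1 : dR G b d x = 1
              · by_cases hin : ∃ w, Ou G c b d idx w x ∧ ¬ Z G b d w
                · have : x ∈ N5 := (mN5 x).2 ⟨hx, z0, o0, hin⟩
                  rw [if_pos this]; omega
                · push Not at hin
                  have : x ∈ N4 G c b d := mem_N4.2 (pt_of hG idx hbd hx z0 o0 hd1 hin)
                  rw [if_pos this]; omega
              · omega
  have hsum := Finset.sum_le_sum pt
  simp only [Finset.sum_add_distrib, ← Finset.mul_sum] at hsum
  rw [sum_ind (fun w hw => mem_SA.2 (gim w hw).1), sum_ind (fun w hw => mem_SA.2 (him w hw).1),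
    sum_ind (fun w hw => mem_SA.2 ((mN1 w).1 hw).1), sum_ind (fun w hw => mem_SA.2 (mem_N2.1 hw).1),
    sum_ind (fun w hw => mem_SA.2 ((mN3 w).1 hw).1), sum_ind (fun w hw => mem_SA.2 ((mN5 w).1 hw).1),
    sum_ind (fun w hw => mem_SA.2 (mem_N4.1 hw).choose_spec.1),
    Finset.card_image_of_injOn ginj, Finset.card_image_of_injOn hinj] at hsum
  simp only [Finset.sum_const, smul_eq_mul] at hsum
  omega

lemma L1 [Fintype V] {G : SimpleGraph V} {c : Sym2 V → ℕ}
    {b d : V} {idx : V → ℕ} (hi : Function.Injective idx) :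
    ∑ x ∈ SA G b d, ze G c b d x + 2 * ∑ x ∈ SA G b d, ou G c b d idx x
      ≤ ∑ x ∈ SA G b d, dA G b d x := by
  have e1 : ∀ x, ze G c b d x ≤ ∑ p ∈ SA G b d, (if Ze G c b d x p then 1 else 0) := by
    intro x
    unfold ze
    split_ifs with h
    · obtain ⟨p, hp⟩ := h
      have := Finset.single_le_sum (f := fun p => if Ze G c b d x p then 1 else 0)
        (fun i _ => Nat.zero_le _) (mem_SA.2 hp.2.2.1)
      simpa [hp] using this
    · simp
  have e2 : ∀ x, ou G c b d idx x ≤ ∑ p ∈ SA G b d, (if Ou G c b d idx x p then 1 else 0) := by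
    intro x
    unfold ou
    split_ifs with h
    · obtain ⟨p, hp⟩ := h
      have := Finset.single_le_sum (f := fun p => if Ou G c b d idx x p then 1 else 0)
        (fun i _ => Nat.zero_le _) (mem_SA.2 hp.2.2.1)
      simpa [hp] using this
    · simp
  have e3 : ∑ x ∈ SA G b d, ∑ p ∈ SA G b d, (if Ou G c b d idx x p then 1 else 0) =
      ∑ x ∈ SA G b d, ∑ p ∈ SA G b d, (if Ou G c b d idx p x then 1 else 0) := Finset.sum_comm
  have e4 : ∀ x, dA G b d x = ∑ p ∈ SA G b d, (if G.Adj x p then 1 else 0) := by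
    intro x
    rw [Finset.sum_boole]
    simp only [dA, SA, Finset.filter_filter, Nat.cast_id]
    congr 1
    ext p
    simp [and_comm]
  have e5 : ∀ x, ∑ p ∈ SA G b d, (if Ze G c b d x p then 1 else 0) +
      ∑ p ∈ SA G b d, (if Ou G c b d idx x p then 1 else 0) +
      ∑ p ∈ SA G b d, (if Ou G c b d idx p x then 1 else 0) ≤ dA G b d x := by
    intro x
    rw [e4, ← Finset.sum_add_distrib, ← Finset.sum_add_distrib]
    apply Finset.sum_le_sum
    intro p _
    have a1 : Ze G c b d x p → Ou G c b d idx x p → False := fun h h' => h'.2.2.2.1 h.2.2.2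
    have a2 : Ze G c b d x p → Ou G c b d idx p x → False := fun h h' => h'.2.2.2.1 h.symm.2.2.2
    have a3 : Ou G c b d idx x p → Ou G c b d idx p x → False := fun h h' => ou_asymm hi h h'
    have b1 : Ze G c b d x p → G.Adj x p := fun h => h.1
    have b2 : Ou G c b d idx x p → G.Adj x p := fun h => h.1
    have b3 : Ou G c b d idx p x → G.Adj x p := fun h => h.1.symm
    split_ifs <;> first | omega | (exfalso; tauto)
  have s1 := Finset.sum_le_sum (fun x (_ : x ∈ SA G b d) => e1 x)
  have s2 := Finset.sum_le_sum (fun x (_ : x ∈ SA G b d) => e2 x)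
  have s5 := Finset.sum_le_sum (fun x (_ : x ∈ SA G b d) => e5 x)
  simp only [Finset.sum_add_distrib] at s5
  omega

lemma L3 [Fintype V] {G : SimpleGraph V} {b d : V} (hbd : G.Adj b d) :
    2 + 4 * (SA G b d).card + ∑ x ∈ SA G b d, dA G b d x + 2 * ∑ x ∈ SA G b d, dR G b d x
      ≤ ∑ v, G.degree v := by
  have hdeg : ∀ v, G.degree v = (Finset.univ.filter (fun w => G.Adj v w)).card := by
    intro v
    rw [← SimpleGraph.card_neighborFinset_eq_degree, SimpleGraph.neighborFinset_eq_filter]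
  let R : Finset V := Finset.univ.filter (fun r => InR G b d r)
  have bA : b ∉ SA G b d := fun h => (mem_SA.1 h).1.ne rfl
  have dA' : d ∉ SA G b d := fun h => (mem_SA.1 h).2.ne rfl
  have bR : b ∉ R := fun h => (show InR G b d b by simpa [R] using h).1 rfl
  have dR' : d ∉ R := fun h => (show InR G b d d by simpa [R] using h).2.1 rfl
  have hdisj : Disjoint (SA G b d) R := by
    rw [Finset.disjoint_left]
    intro x h1 h2
    have h3 : InR G b d x := by simpa [R] using h2
    exact h3.2.2 (mem_SA.1 h1)
  have hsub : insert b (insert d (SA G b d ∪ R)) ⊆ Finset.univ := Finset.subset_univ _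
  have h0 := Finset.sum_le_sum_of_subset (f := fun v => G.degree v) hsub
  rw [Finset.sum_insert (by simp [bA, bR, hbd.ne]), Finset.sum_insert (by simp [dA', dR']),
    Finset.sum_union hdisj] at h0
  have hb : (SA G b d).card + 1 ≤ G.degree b := by
    rw [hdeg, ← Finset.card_insert_of_notMem dA']
    apply Finset.card_le_card
    intro x hx
    rcases Finset.mem_insert.1 hx with rfl | h
    · simp [hbd]
    · simp [(mem_SA.1 h).1.symm]
  have hd : (SA G b d).card + 1 ≤ G.degree d := by
    rw [hdeg, ← Finset.card_insert_of_notMem bA]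
    apply Finset.card_le_card
    intro x hx
    rcases Finset.mem_insert.1 hx with rfl | h
    · simp [hbd.symm]
    · simp [(mem_SA.1 h).2.symm]
  have hx : ∀ x ∈ SA G b d, 2 + dA G b d x + dR G b d x ≤ G.degree x := by
    intro x hx
    have hx := mem_SA.1 hx
    unfold dA dR
    rw [hdeg, add_assoc, ← Finset.card_union_of_disjoint]
    · have e : ({b, d} : Finset V).card = 2 := Finset.card_pair hbd.ne
      rw [← e, ← Finset.card_union_of_disjoint]
      · apply Finset.card_le_card
        intro w hw
        simp only [Finset.mem_union, Finset.mem_insert, Finset.mem_singleton, Finset.mem_filter,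
          Finset.mem_univ, true_and] at hw ⊢
        rcases hw with (rfl | rfl) | h | h
        · exact hx.1
        · exact hx.2
        · exact h.1
        · exact h.1
      · rw [Finset.disjoint_left]
        intro w h1 h2
        simp only [Finset.mem_union, Finset.mem_insert, Finset.mem_singleton, Finset.mem_filter,
          Finset.mem_univ, true_and] at h1 h2
        rcases h1 with rfl | rfl
        · rcases h2 with h | h
          · exact h.2.1.ne rfl
          · exact h.2.1 rfl
        · rcases h2 with h | h
          · exact h.2.2.ne rfl
          · exact h.2.2.1 rfl
    · rw [Finset.disjoint_left]
      intro w h1 h2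
      simp only [Finset.mem_filter, Finset.mem_univ, true_and] at h1 h2
      exact h2.2.2.2 h1.2
  have hR : ∑ x ∈ SA G b d, dR G b d x ≤ ∑ r ∈ R, G.degree r := by
    have e1 : ∀ x, dR G b d x = ∑ r ∈ R, (if G.Adj x r then 1 else 0) := by
      intro x
      rw [Finset.sum_boole]
      simp only [dR, R, Finset.filter_filter, Nat.cast_id]
      congr 1
      ext p
      simp [and_comm]
    simp only [e1]
    rw [Finset.sum_comm]
    apply Finset.sum_le_sum
    intro r _
    rw [Finset.sum_boole, hdeg, Nat.cast_id]
    apply Finset.card_le_card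
    intro w hw
    simp only [Finset.mem_filter, Finset.mem_univ, true_and] at hw ⊢
    exact hw.2.symm
  have hxs := Finset.sum_le_sum hx
  simp only [Finset.sum_add_distrib, Finset.sum_const, smul_eq_mul] at hxs
  omega

lemma caseI [Fintype V] {G : SimpleGraph V} {c : Sym2 V → ℕ} (hG : Good G c) (hS : Sat G)
    {b d : V} (hbd : G.Adj b d) : 2 + 7 * (SA G b d).card ≤ ∑ v, G.degree v + 384 := by
  obtain ⟨idx, hi⟩ : ∃ idx : V → ℕ, Function.Injective idx :=
    ⟨fun v => (Fintype.equivFin V v : ℕ), fun x y h => (Fintype.equivFin V).injective (Fin.ext h)⟩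
  rcases dich hG hS hbd with ⟨h2, h4⟩ | ⟨h2, h4⟩
  · have l1 := L1 (G := G) (c := c) (b := b) (d := d) hi
    have l2 := L2 hG hS idx hbd h2 h4
    have l3 := L3 hbd
    omega
  · have l1 := L1 (G := G) (c := c) (b := d) (d := b) hi
    have l2 := L2 hG hS idx hbd.symm h2 h4
    have l3 := L3 hbd.symm
    have : SA G d b = SA G b d := by
      ext x; rw [mem_SA, mem_SA, InA_swap]
    rw [this] at l1 l2 l3
    omega

end RS

namespace RS
open Classical

variable {V : Type}

noncomputable def NA [Fintype V] (G : SimpleGraph V) (L : ℕ) (v : V) : Finset V :=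
  (G.neighborFinset v).filter (fun x => G.degree x ≤ L)

noncomputable def NB [Fintype V] (G : SimpleGraph V) (L : ℕ) (v : V) : Finset V :=
  (G.neighborFinset v).filter (fun x => ¬ G.degree x ≤ L)

lemma NA_add_NB [Fintype V] (G : SimpleGraph V) (L : ℕ) (v : V) :
    (NA G L v).card + (NB G L v).card = G.degree v := by
  unfold NA NB
  rw [Finset.card_filter_add_card_filter_not, SimpleGraph.card_neighborFinset_eq_degree]

noncomputable def U [Fintype V] (G : SimpleGraph V) (v : V) : Finset V :=
  Finset.univ.filter (fun u => u ≠ v ∧ ¬ G.Adj v u)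

lemma card_U [Fintype V] (G : SimpleGraph V) (v : V) :
    (U G v).card + 1 + G.degree v = Fintype.card V := by
  have h : U G v = (insert v (G.neighborFinset v))ᶜ := by
    ext u
    simp [U]
  have h1 : (insert v (G.neighborFinset v)).card = G.degree v + 1 := by
    rw [Finset.card_insert_of_notMem (by simp), SimpleGraph.card_neighborFinset_eq_degree]
  have h2 := Finset.card_add_card_compl (insert v (G.neighborFinset v))
  rw [← h] at h2
  omega

lemma cover_card [Fintype V] {G : SimpleGraph V} {v x : V} (h : G.Adj v x) :
    ((U G v).filter (fun u => G.Adj x u)).card + 1 ≤ G.degree x := by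
  have : v ∉ (U G v).filter (fun u => G.Adj x u) := by simp [U]
  rw [← Finset.card_insert_of_notMem this, ← SimpleGraph.card_neighborFinset_eq_degree]
  apply Finset.card_le_card
  intro w hw
  simp only [Finset.mem_insert, Finset.mem_filter] at hw
  rw [SimpleGraph.mem_neighborFinset]
  rcases hw with rfl | hw
  · exact h.symm
  · exact hw.2

lemma cover_card2 [Fintype V] {G : SimpleGraph V} {v x p : V} (h : G.Adj v x) (hp : G.Adj v p)
    (hpx : G.Adj x p) :
    ((U G v).filter (fun u => G.Adj x u)).card + 2 ≤ G.degree x := by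
  have h1 : v ∉ insert p ((U G v).filter (fun u => G.Adj x u)) := by simp [U, hp.ne]
  have h2 : p ∉ ((U G v).filter (fun u => G.Adj x u)) := by simp [U, hp]
  have := Finset.card_insert_of_notMem h1
  rw [Finset.card_insert_of_notMem h2] at this
  have h3 : insert v (insert p ((U G v).filter (fun u => G.Adj x u))) ⊆ G.neighborFinset x := by
    intro w hw
    simp only [Finset.mem_insert, Finset.mem_filter] at hw
    rw [SimpleGraph.mem_neighborFinset]
    rcases hw with rfl | rfl | hw
    · exact h.symm
    · exact hpx
    · exact hw.2
  have := Finset.card_le_card h3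
  rw [SimpleGraph.card_neighborFinset_eq_degree] at this
  omega

lemma deficient [Fintype V] {G : SimpleGraph V} {c : Sym2 V → ℕ} (hG : Good G c) (hS : Sat G)
    (L : ℕ) (hN : 100 < Fintype.card V) (hL : 4 * L < Fintype.card V) (v : V)
    (hdef : (NA G L v).card + 2 * (NB G L v).card ≤ 6) :
    (∃ b d, G.Adj b d ∧ Fintype.card V ≤ (SA G b d).card + 2 + 2 * L) ∨
    (∃ p q s, Nb3 G v p q s ∧ ¬ G.degree p ≤ L ∧ ¬ G.degree q ≤ L ∧ ¬ G.degree s ≤ L) := by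
  have hdeg := NA_add_NB G L v
  have hU := card_U G v
  have hA : ∀ x, x ∈ NA G L v ↔ G.Adj v x ∧ G.degree x ≤ L := by simp [NA]
  have hB : ∀ x, x ∈ NB G L v ↔ G.Adj v x ∧ ¬ G.degree x ≤ L := by simp [NB]
  have hAB : ∀ x, G.Adj v x → x ∈ NA G L v ∨ x ∈ NB G L v := by
    intro x hx; rw [hA, hB]; tauto
  have hcom : ∀ u ∈ U G v, ∃ p q, G.Adj v p ∧ G.Adj v q ∧ G.Adj p u ∧ G.Adj q u ∧ G.Adj p q := by
    intro u hu
    have hu' : u ≠ v ∧ ¬ G.Adj v u := by simpa [U] using hu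
    obtain ⟨p, q, h1, h2, h3, h4, h5⟩ := common hG hS hu'.1.symm hu'.2
    exact ⟨p, q, h1, h2, h3.symm, h4.symm, h5⟩
  have hcases : (NB G L v).card = 0 ∨ (NB G L v).card = 1 ∨ (NB G L v).card = 2 ∨
    (NB G L v).card = 3 := by omega
  rcases hcases with h | h | h | h
  · exfalso
    have hBe := Finset.card_eq_zero.1 h
    have := Finset.card_mul_le_card_mul (s := U G v) (t := NA G L v) (fun u x => G.Adj x u)
      (m := 2) (n := L) ?_ ?_
    · have h6 : (NA G L v).card * L ≤ 6 * L := Nat.mul_le_mul_right _ (by omega)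
      omega
    · intro u hu
      obtain ⟨p, q, h1, h2, h3, h4, h5⟩ := hcom u hu
      rw [← Finset.card_pair h5.ne]
      apply Finset.card_le_card
      intro w hw
      rw [Finset.mem_bipartiteAbove]
      have hm : ∀ x, G.Adj v x → x ∈ NA G L v := by
        intro x hx
        rcases hAB x hx with h | h
        · exact h
        · rw [hBe] at h; simp at h
      simp only [Finset.mem_insert, Finset.mem_singleton] at hw
      rcases hw with rfl | rfl
      · exact ⟨hm _ h1, h3⟩
      · exact ⟨hm _ h2, h4⟩
    · intro x hx
      have := cover_card ((hA x).1 hx).1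
      have := ((hA x).1 hx).2
      change ((U G v).filter (fun u => G.Adj x u)).card ≤ L
      omega
  · exfalso
    obtain ⟨b, hb⟩ := Finset.card_eq_one.1 h
    have hsub : U G v ⊆ ((NA G L v).filter (fun x => ∃ p, G.Adj v p ∧ G.Adj x p)).biUnion
        (fun x => (U G v).filter (fun u => G.Adj x u)) := by
      intro u hu
      obtain ⟨p, q, h1, h2, h3, h4, h5⟩ := hcom u hu
      rw [Finset.mem_biUnion]
      rcases hAB p h1 with h | h
      · exact ⟨p, Finset.mem_filter.2 ⟨h, q, h2, h5⟩, Finset.mem_filter.2 ⟨hu, h3⟩⟩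
      · rcases hAB q h2 with h' | h'
        · exact ⟨q, Finset.mem_filter.2 ⟨h', p, h1, h5.symm⟩, Finset.mem_filter.2 ⟨hu, h4⟩⟩
        · rw [hb, Finset.mem_singleton] at h h'
          exact absurd (h.trans h'.symm) h5.ne
    have hbd : ∀ x ∈ (NA G L v).filter (fun x => ∃ p, G.Adj v p ∧ G.Adj x p),
        ((U G v).filter (fun u => G.Adj x u)).card ≤ L - 2 := by
      intro x hx
      obtain ⟨hx1, p, h1, h2⟩ := Finset.mem_filter.1 hx
      have hx' := (hA x).1 hx1
      have := cover_card2 hx'.1 h1 h2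
      have := hx'.2
      omega
    have h7 := Finset.card_le_card hsub
    have h8 := Finset.card_biUnion_le_card_mul _ _ _ hbd
    have h9 : ((NA G L v).filter (fun x => ∃ p, G.Adj v p ∧ G.Adj x p)).card ≤ 4 :=
      (Finset.card_filter_le _ _).trans (by omega)
    have h10 := Nat.mul_le_mul_right (L - 2) h9
    omega
  · obtain ⟨b, d, hne, hbd⟩ := Finset.card_eq_two.1 h
    have hcov : ∀ x ∈ NA G L v, ((U G v).filter (fun u => G.Adj x u)).card ≤ L - 1 := by
      intro x hx
      have := cover_card ((hA x).1 hx).1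
      have := ((hA x).1 hx).2
      omega
    have hsub : ∀ u ∈ U G v, u ∈ (NA G L v).biUnion
        (fun x => (U G v).filter (fun u => G.Adj x u)) ∨ (G.Adj b d ∧ u ∈ SA G b d) := by
      intro u hu
      obtain ⟨p, q, h1, h2, h3, h4, h5⟩ := hcom u hu
      rw [Finset.mem_biUnion]
      rcases hAB p h1 with h | h
      · exact Or.inl ⟨p, h, Finset.mem_filter.2 ⟨hu, h3⟩⟩
      · rcases hAB q h2 with h' | h'
        · exact Or.inl ⟨q, h', Finset.mem_filter.2 ⟨hu, h4⟩⟩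
        · right
          rw [hbd, Finset.mem_insert, Finset.mem_singleton] at h h'
          rw [mem_SA]
          rcases h with rfl | rfl <;> rcases h' with rfl | rfl
          · exact absurd rfl h5.ne
          · exact ⟨h5, h3.symm, h4.symm⟩
          · exact ⟨h5.symm, h4.symm, h3.symm⟩
          · exact absurd rfl h5.ne
    have h8 := Finset.card_biUnion_le_card_mul _ _ _ hcov
    have h9 : (NA G L v).card ≤ 2 := by omega
    have h10 := Nat.mul_le_mul_right (L - 1) h9
    by_cases hadj : G.Adj b d
    · left
      refine ⟨b, d, hadj, ?_⟩
      have hvb : G.Adj v b := ((hB b).1 (by simp [hbd])).1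
      have hvd : G.Adj v d := ((hB d).1 (by simp [hbd])).1
      have hall : (Finset.univ : Finset V) ⊆ SA G b d ∪ (NB G L v ∪ (NA G L v ∪
          (NA G L v).biUnion (fun x => (U G v).filter (fun u => G.Adj x u)))) := by
        intro u _
        simp only [Finset.mem_union]
        by_cases huv : u = v
        · left; rw [huv, mem_SA]; exact ⟨hvb, hvd⟩
        by_cases hav : G.Adj v u
        · rcases hAB u hav with h | h
          · exact Or.inr (Or.inr (Or.inl h))
          · exact Or.inr (Or.inl h)
        · rcases hsub u (by simp [U, huv, hav]) with h | h
          · exact Or.inr (Or.inr (Or.inr h))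
          · exact Or.inl h.2
      have e1 := Finset.card_le_card hall
      rw [Finset.card_univ] at e1
      have e2 := Finset.card_union_le (SA G b d) (NB G L v ∪ (NA G L v ∪
          (NA G L v).biUnion (fun x => (U G v).filter (fun u => G.Adj x u))))
      have e3 := Finset.card_union_le (NB G L v) (NA G L v ∪
          (NA G L v).biUnion (fun x => (U G v).filter (fun u => G.Adj x u)))
      have e4 := Finset.card_union_le (NA G L v)
          ((NA G L v).biUnion (fun x => (U G v).filter (fun u => G.Adj x u)))
      rcases Nat.eq_zero_or_pos L with h0 | h0
      · have : (NA G L v).card = 0 := by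
          rw [Finset.card_eq_zero, Finset.eq_empty_iff_forall_notMem]
          intro x hx
          have := cover_card ((hA x).1 hx).1
          have := ((hA x).1 hx).2
          omega
        omega
      · omega
    · exfalso
      have : U G v ⊆ (NA G L v).biUnion (fun x => (U G v).filter (fun u => G.Adj x u)) := by
        intro u hu
        rcases hsub u hu with h | h
        · exact h
        · exact absurd h.1 hadj
      have := Finset.card_le_card this
      omega
  · right
    obtain ⟨p, q, s, h1, h2, h3, he⟩ := Finset.card_eq_three.1 h
    have hA0 : (NA G L v).card = 0 := by omega
    rw [Finset.card_eq_zero] at hA0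
    have hp := (hB p).1 (by simp [he])
    have hq := (hB q).1 (by simp [he])
    have hs := (hB s).1 (by simp [he])
    refine ⟨p, q, s, ⟨h1, h2, h3, ?_⟩, hp.2, hq.2, hs.2⟩
    intro x
    constructor
    · intro hx
      rcases hAB x hx with h | h
      · rw [hA0] at h; simp at h
      · simpa [he] using h
    · rintro (rfl | rfl | rfl)
      · exact hp.1
      · exact hq.1
      · exact hs.1

end RS

namespace RS
open Classical

variable {V : Type}

lemma lemX [Fintype V] {G : SimpleGraph V} {c : Sym2 V → ℕ} (hG : Good G c) (hS : Sat G)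
    {b d : V} (hbd : G.Adj b d) {L : ℕ} {t : ℝ} (hLt : (L : ℝ) ≤ t) (ht : 220 < t)
    (h : Fintype.card V ≤ (SA G b d).card + 2 + 2 * L) :
    7 * (Fintype.card V : ℝ) - 16 * t ≤ ((∑ v, G.degree v : ℕ) : ℝ) := by
  have h1 := caseI hG hS hbd
  have h1' : (2 : ℝ) + 7 * (SA G b d).card ≤ ((∑ v, G.degree v : ℕ) : ℝ) + 384 := by
    exact_mod_cast h1
  have h2 : (Fintype.card V : ℝ) ≤ (SA G b d).card + 2 + 2 * L := by exact_mod_cast h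
  linarith

lemma big_alpha [Fintype V] {G : SimpleGraph V} {c : Sym2 V → ℕ} (hG : Good G c) (hS : Sat G)
    {t : ℝ} (ht : 220 < t) (hN : 100 < Fintype.card V)
    (h4 : (Fintype.card V : ℝ) ≤ 4 * t) :
    7 * (Fintype.card V : ℝ) - 16 * t ≤ ((∑ v, G.degree v : ℕ) : ℝ) := by
  by_cases h : ∃ v, G.degree v ≤ 2
  · obtain ⟨v, hv⟩ := h
    have hU := card_U G v
    have hpos : 0 < (U G v).card := by omega
    obtain ⟨u, hu⟩ := Finset.card_pos.1 hpos
    have hu' : u ≠ v ∧ ¬ G.Adj v u := by simpa [U] using hu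
    obtain ⟨p, q, h1, h2, h3, h4', h5⟩ := common hG hS hu'.1.symm hu'.2
    have hnb : ({p, q} : Finset V) = G.neighborFinset v := by
      apply Finset.eq_of_subset_of_card_le
      · intro x hx
        simp only [Finset.mem_insert, Finset.mem_singleton] at hx
        rw [SimpleGraph.mem_neighborFinset]
        rcases hx with rfl | rfl <;> assumption
      · rw [Finset.card_pair h5.ne, SimpleGraph.card_neighborFinset_eq_degree]; exact hv
    have hmem : ∀ x, G.Adj v x → x = p ∨ x = q := by
      intro x hx
      have : x ∈ G.neighborFinset v := by rwa [SimpleGraph.mem_neighborFinset]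
      rw [← hnb] at this
      simpa using this
    refine lemX hG hS h5 (L := 0) (by simp; linarith) ht ?_
    have hall : (Finset.univ : Finset V) ⊆ SA G p q ∪ {p, q} := by
      intro x _
      rw [Finset.mem_union, mem_SA]
      by_cases hxv : x = v
      · left; rw [hxv]; exact ⟨h1, h2⟩
      by_cases hav : G.Adj v x
      · right; simpa using hmem x hav
      · left
        obtain ⟨p', q', k1, k2, k3, k4, k5⟩ := common hG hS (Ne.symm hxv) hav
        rcases hmem p' k1 with rfl | rfl <;> rcases hmem q' k2 with rfl | rfl
        · exact absurd rfl k5.ne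
        · exact ⟨k3, k4⟩
        · exact ⟨k4, k3⟩
        · exact absurd rfl k5.ne
    have e1 := Finset.card_le_card hall
    rw [Finset.card_univ] at e1
    have e2 := Finset.card_union_le (SA G p q) {p, q}
    rw [Finset.card_pair h5.ne] at e2
    omega
  · push Not at h
    have : Fintype.card V * 3 ≤ ∑ v, G.degree v := by
      rw [← Finset.card_univ, ← smul_eq_mul]
      exact Finset.card_nsmul_le_sum _ _ _ (fun v _ => h v)
    have : (Fintype.card V : ℝ) * 3 ≤ ((∑ v, G.degree v : ℕ) : ℝ) := by exact_mod_cast this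
    linarith

lemma weight_sum [Fintype V] (G : SimpleGraph V) (L : ℕ) :
    ∑ v ∈ Finset.univ.filter (fun v => G.degree v ≤ L), ((NA G L v).card + 2 * (NB G L v).card)
      ≤ ∑ v, G.degree v := by
  have h1 : ∑ v ∈ Finset.univ.filter (fun v => G.degree v ≤ L), (NB G L v).card ≤
      ∑ v ∈ Finset.univ.filter (fun v => ¬ G.degree v ≤ L), G.degree v := by
    have := Finset.sum_card_bipartiteAbove_eq_sum_card_bipartiteBelow
      (s := Finset.univ.filter (fun v => G.degree v ≤ L))
      (t := Finset.univ.filter (fun v => ¬ G.degree v ≤ L)) (fun v x => G.Adj v x)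
    have e : ∀ v, (NB G L v) = Finset.bipartiteAbove (fun v x => G.Adj v x)
        (Finset.univ.filter (fun v => ¬ G.degree v ≤ L)) v := by
      intro v; ext x
      simp [NB, Finset.mem_bipartiteAbove, and_comm]
    simp only [e]
    rw [this]
    apply Finset.sum_le_sum
    intro x _
    rw [← SimpleGraph.card_neighborFinset_eq_degree]
    apply Finset.card_le_card
    intro y hy
    rw [Finset.mem_bipartiteBelow] at hy
    rw [SimpleGraph.mem_neighborFinset]
    exact hy.2.symm
  rw [← Finset.sum_filter_add_sum_filter_not Finset.univ (fun v => G.degree v ≤ L)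
    (fun v => G.degree v)]
  have h2 : ∑ v ∈ Finset.univ.filter (fun v => G.degree v ≤ L),
      ((NA G L v).card + 2 * (NB G L v).card) =
      ∑ v ∈ Finset.univ.filter (fun v => G.degree v ≤ L), G.degree v +
      ∑ v ∈ Finset.univ.filter (fun v => G.degree v ≤ L), (NB G L v).card := by
    rw [← Finset.sum_add_distrib]
    apply Finset.sum_congr rfl
    intro v _
    rw [← NA_add_NB G L v]; ring
  omega

lemma small_alpha [Fintype V] {G : SimpleGraph V} {c : Sym2 V → ℕ} (hG : Good G c) (hS : Sat G)
    {t : ℝ} (ht : 220 < t) (hN : 100 < Fintype.card V)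
    (h4 : 4 * t < (Fintype.card V : ℝ)) (h7 : 7 * (Fintype.card V : ℝ) ≤ t ^ 2) :
    7 * (Fintype.card V : ℝ) - 16 * t ≤ ((∑ v, G.degree v : ℕ) : ℝ) := by
  obtain ⟨L, hL1, hL2⟩ : ∃ L : ℕ, (L : ℝ) ≤ t ∧ t < L + 1 :=
    ⟨⌊t⌋₊, Nat.floor_le (by linarith), Nat.lt_floor_add_one t⟩
  have hL : 4 * L < Fintype.card V := by
    have : (4 : ℝ) * L < (Fintype.card V : ℝ) := by linarith
    exact_mod_cast this
  by_contra hcon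
  push Not at hcon
  have hdef : ∀ v, (NA G L v).card + 2 * (NB G L v).card ≤ 6 →
      ∃ p q s, Nb3 G v p q s ∧ ¬ G.degree p ≤ L ∧ ¬ G.degree q ≤ L ∧ ¬ G.degree s ≤ L := by
    intro v hv
    rcases deficient hG hS L hN hL v hv with ⟨b, d, hbd, h⟩ | h
    · exact absurd (lemX hG hS hbd hL1 ht h) (not_le.2 hcon)
    · exact h
  set A := Finset.univ.filter (fun v => G.degree v ≤ L) with hA
  set B := Finset.univ.filter (fun v => ¬ G.degree v ≤ L) with hB
  set T := A.filter (fun v => (NA G L v).card + 2 * (NB G L v).card ≤ 6) with hT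
  have hTc : T.card ≤ 3 := by
    apply lemT hG hS
    · intro v hv
      obtain ⟨p, q, s, h, _⟩ := hdef v (Finset.mem_filter.1 hv).2
      exact ⟨p, q, s, h⟩
    · intro v hv w hw hadj
      obtain ⟨p, q, s, h, k1, k2, k3⟩ := hdef v (Finset.mem_filter.1 hv).2
      have hwA : G.degree w ≤ L := by
        have := (Finset.mem_filter.1 hw).1
        simpa [hA] using this
      rcases (h.2.2.2 w).1 hadj with rfl | rfl | rfl
      · exact k1 hwA
      · exact k2 hwA
      · exact k3 hwA
  have hcard : A.card + B.card = Fintype.card V := by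
    rw [hA, hB, Finset.card_filter_add_card_filter_not, Finset.card_univ]
  have hBs : B.card * (L + 1) ≤ ∑ v, G.degree v := by
    refine le_trans ?_ (Finset.sum_le_sum_of_subset (Finset.subset_univ B))
    rw [← smul_eq_mul]
    apply Finset.card_nsmul_le_sum
    intro v hv
    have : ¬ G.degree v ≤ L := by simpa [hB] using hv
    omega
  have hW := weight_sum G L
  rw [← hA] at hW
  have h7s : 7 * A.card ≤ ∑ v ∈ A, ((NA G L v).card + 2 * (NB G L v).card) + 7 * T.card := by
    have e : ∑ v ∈ A, 7 ≤ ∑ v ∈ A, (((NA G L v).card + 2 * (NB G L v).card) +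
        if (NA G L v).card + 2 * (NB G L v).card ≤ 6 then 7 else 0) := by
      apply Finset.sum_le_sum
      intro v _
      split_ifs <;> omega
    rw [Finset.sum_add_distrib, ← Finset.sum_filter, ← hT] at e
    simp only [Finset.sum_const, smul_eq_mul] at e
    omega
  have f1 : (B.card : ℝ) * (L + 1) ≤ ((∑ v, G.degree v : ℕ) : ℝ) := by exact_mod_cast hBs
  have f2 : 7 * (Fintype.card V : ℝ) ≤ ((∑ v, G.degree v : ℕ) : ℝ) + 21 + 7 * B.card := by
    have : 7 * Fintype.card V ≤ (∑ v, G.degree v) + 21 + 7 * B.card := by omega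
    exact_mod_cast this
  have f3 : (B.card : ℝ) ≤ t := by
    by_contra hc
    push Not at hc
    have : t * t ≤ (B.card : ℝ) * (L + 1) :=
      mul_le_mul hc.le hL2.le (by linarith) (by linarith)
    nlinarith
  linarith

end RS

/-- Lower bound `(7/2)n - 8αn` for the number of edges of an `n`-vertex
rainbow `K_4`-saturated graph, when `0 < α < 1/2`, `α²n ≥ 7` and `αn > 220`. -/
theorem stmt_10 (α : ℝ) (hα0 : 0 < α) (hα : α < 1 / 2) (n : ℕ)
    (h1 : 7 ≤ α ^ 2 * (n : ℝ)) (h2 : 220 < α * (n : ℝ))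
    (G : SimpleGraph (Fin n))
    (hsat : IsRainbowSat G (⊤ : SimpleGraph (Fin 4))) :
    7 / 2 * (n : ℝ) - 8 * α * (n : ℝ) ≤ (G.edgeSet.ncard : ℝ) := by
  classical
  obtain ⟨⟨c, hG⟩, hS⟩ := RS.sat_of G hsat
  have hn : (440 : ℝ) < n := by
    have : (0 : ℝ) ≤ n := Nat.cast_nonneg n
    nlinarith
  have hN : 100 < Fintype.card (Fin n) := by
    rw [Fintype.card_fin]
    have : (100 : ℝ) < n := by linarith
    exact_mod_cast this
  have key : 7 * (Fintype.card (Fin n) : ℝ) - 16 * (α * n) ≤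
      ((∑ v, G.degree v : ℕ) : ℝ) := by
    rcases le_or_gt (Fintype.card (Fin n) : ℝ) (4 * (α * n)) with h | h
    · convert RS.big_alpha hG hS h2 hN h
    · have h7 : 7 * (Fintype.card (Fin n) : ℝ) ≤ (α * n) ^ 2 := by
        rw [Fintype.card_fin]
        have : (0 : ℝ) ≤ n := Nat.cast_nonneg n
        nlinarith
      convert RS.small_alpha hG hS h2 hN h h7
  rw [SimpleGraph.sum_degrees_eq_twice_card_edges, Fintype.card_fin] at key
  rw [Set.ncard_eq_toFinset_card']
  change _ ≤ ((G.edgeFinset.card : ℕ) : ℝ)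
  push_cast at key
  linarith
end

section
/- For every n ≥ 6 there exists an n-vertex rainbow K_4-saturated graph with at most (7/2)n edges. -/
open SimpleGraph

theorem rainbow_of_four {V : Type} {G : SimpleGraph V} {c : Sym2 V → ℕ}
    (hc : IsProperEdgeColoring G c) (p q r s : V)
    (hpq : G.Adj p q) (hpr : G.Adj p r) (hps : G.Adj p s)
    (hqr : G.Adj q r) (hqs : G.Adj q s) (hrs : G.Adj r s)
    (h1 : c s(p, q) ≠ c s(r, s)) (h2 : c s(p, r) ≠ c s(q, s)) (h3 : c s(p, s) ≠ c s(q, r)) :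
    HasRainbowCopy G (⊤ : SimpleGraph (Fin 4)) c := by
  have hadj : ∀ a b : Fin 4, a ≠ b → G.Adj (![p, q, r, s] a) (![p, q, r, s] b) := by
    intro a b hab
    fin_cases a <;> fin_cases b <;>
      first
      | exact absurd rfl hab
      | assumption
      | (apply SimpleGraph.Adj.symm; assumption)
  have hinj : Function.Injective ![p, q, r, s] := by
    intro a b hab
    by_contra hne
    exact (hadj a b hne).ne hab
  have hdis : ∀ a b a' b' : Fin 4, a ≠ b → a' ≠ b' → a ≠ a' → a ≠ b' → b ≠ a' → b ≠ b' →
      c s(![p, q, r, s] a, ![p, q, r, s] b) ≠ c s(![p, q, r, s] a', ![p, q, r, s] b') := by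
    have e1 := Sym2.eq_swap (a := p) (b := q)
    have e2 := Sym2.eq_swap (a := p) (b := r)
    have e3 := Sym2.eq_swap (a := p) (b := s)
    have e4 := Sym2.eq_swap (a := q) (b := r)
    have e5 := Sym2.eq_swap (a := q) (b := s)
    have e6 := Sym2.eq_swap (a := r) (b := s)
    intro a b a' b' n1 n2 n3 n4 n5 n6
    fin_cases a <;> fin_cases b <;> first | exact absurd rfl n1 | skip
    all_goals fin_cases a' <;> first | exact absurd rfl n3 | exact absurd rfl n5 | skip
    all_goals fin_cases b' <;>
      first
      | exact absurd rfl n2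
      | exact absurd rfl n4
      | exact absurd rfl n6
      | (clear n1 n2 n3 n4 n5 n6
         simp [← e1, ← e2, ← e3, ← e4, ← e5, ← e6]
         grind)
  refine ⟨![p, q, r, s], hinj, fun a b hab => hadj a b hab.ne, ?_⟩
  intro e₁ he₁ e₂ he₂ hne
  by_cases hv : ∃ v, v ∈ e₁ ∧ v ∈ e₂
  · obtain ⟨v, hv1, hv2⟩ := hv
    apply hc
    · induction e₁ with | _ a b => exact hadj a b (by simpa using he₁)
    · induction e₂ with | _ a b => exact hadj a b (by simpa using he₂)
    · exact fun h => hne (Sym2.map.injective hinj h)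
    · exact ⟨_, Sym2.mem_map.2 ⟨v, hv1, rfl⟩, Sym2.mem_map.2 ⟨v, hv2, rfl⟩⟩
  · induction e₁ with | _ a b =>
    induction e₂ with | _ a' b' =>
    simp only [Sym2.mem_iff, not_exists, not_and, not_or] at hv
    have ha := hv a (Or.inl rfl)
    have hb := hv b (Or.inr rfl)
    exact hdis a b a' b' (by simpa using he₁) (by simpa using he₂) ha.1 ha.2 hb.1 hb.2

/-- Counting lemma for `K₆`. -/
theorem six_core (d : Fin 6 → Fin 6 → ℕ) (hs : ∀ p q, d p q = d q p)
    (hp : ∀ p q r, p ≠ q → p ≠ r → q ≠ r → d p q ≠ d p r)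
    (h4 : ∀ p q r s, p < q → q < r → r < s →
      d p q = d r s ∨ d p r = d q s ∨ d p s = d q r) :
    d 0 1 = d 2 3 ∨ d 0 1 = d 2 4 ∨ d 0 1 = d 2 5 := by
  by_contra hcon
  simp only [not_or] at hcon
  obtain ⟨g1, g2, g3⟩ := hcon
  -- `X p q r s` is the indicator of equality of two colors
  obtain ⟨X, hX⟩ : ∃ X : Fin 6 → Fin 6 → Fin 6 → Fin 6 → ℕ,
      ∀ p q r s, X p q r s = if d p q = d r s then 1 else 0 := ⟨_, fun _ _ _ _ => rfl⟩
  have hX4 : ∀ p q r s, p < q → q < r → r < s → 1 ≤ X p q r s + X p r q s + X p s q r := by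
    intro p q r s a b c
    rw [hX, hX, hX]
    rcases h4 p q r s a b c with h | h | h <;> simp [h] <;> omega
  have hcomm : ∀ p q r s, X p q r s = X r s p q := by
    intro p q r s
    rw [hX, hX]
    simp only [eq_comm]
  have hle : ∀ k a b c : ℕ, a ≠ b → a ≠ c → b ≠ c →
      (if k = a then 1 else 0) + (if k = b then 1 else 0) + (if k = c then 1 else 0) ≤ 1 := by
    intro k a b c h1 h2 h3
    split_ifs <;> omega
  have hX2 : ∀ p q a b c e, a < b → b < c → c < e →
      X p q a b + X p q a c + X p q a e + X p q b c + X p q b e + X p q c e ≤ 2 := by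
    intro p q a b c e h1 h2 h3
    simp only [hX]
    have h4 := h1.trans h2
    have h5 := h2.trans h3
    have h6 := h4.trans h3
    have t1 := hle (d p q) _ _ _ (hp a b c h1.ne h4.ne h2.ne) (hp a b e h1.ne h6.ne h5.ne)
      (hp a c e h4.ne h6.ne h3.ne)
    have t2 := hle (d p q) (d b c) (d b e) (d c e) (hp b c e h2.ne h5.ne h3.ne)
      (by rw [hs b c]; exact hp c b e h2.ne' h3.ne h5.ne)
      (by rw [hs b e, hs c e]; exact hp e b c h5.ne' h3.ne' h2.ne)
    omega
  have z1 : X 0 1 2 3 = 0 := by rw [hX, if_neg g1]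
  have z2 : X 0 1 2 4 = 0 := by rw [hX, if_neg g2]
  have z3 : X 0 1 2 5 = 0 := by rw [hX, if_neg g3]
  have z4 : X 0 1 3 4 + X 0 1 3 5 + X 0 1 4 5 ≤ 1 := by
    simp only [hX]
    exact hle (d 0 1) (d 3 4) (d 3 5) (d 4 5) (hp 3 4 5 (by decide) (by decide) (by decide))
      (by rw [hs 3 4]; exact hp 4 3 5 (by decide) (by decide) (by decide))
      (by rw [hs 3 5, hs 4 5]; exact hp 5 3 4 (by decide) (by decide) (by decide))
  have k0 := hX4 0 1 2 3 (by decide) (by decide) (by decide)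
  have k1 := hX4 0 1 2 4 (by decide) (by decide) (by decide)
  have k2 := hX4 0 1 2 5 (by decide) (by decide) (by decide)
  have k3 := hX4 0 1 3 4 (by decide) (by decide) (by decide)
  have k4 := hX4 0 1 3 5 (by decide) (by decide) (by decide)
  have k5 := hX4 0 1 4 5 (by decide) (by decide) (by decide)
  have k6 := hX4 0 2 3 4 (by decide) (by decide) (by decide)
  have k7 := hX4 0 2 3 5 (by decide) (by decide) (by decide)
  have k8 := hX4 0 2 4 5 (by decide) (by decide) (by decide)
  have k9 := hX4 0 3 4 5 (by decide) (by decide) (by decide)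
  have k10 := hX4 1 2 3 4 (by decide) (by decide) (by decide)
  have k11 := hX4 1 2 3 5 (by decide) (by decide) (by decide)
  have k12 := hX4 1 2 4 5 (by decide) (by decide) (by decide)
  have k13 := hX4 1 3 4 5 (by decide) (by decide) (by decide)
  have k14 := hX4 2 3 4 5 (by decide) (by decide) (by decide)
  have e1 := hX2 0 2 1 3 4 5 (by decide) (by decide) (by decide)
  have e2 := hX2 0 3 1 2 4 5 (by decide) (by decide) (by decide)
  have e3 := hX2 0 4 1 2 3 5 (by decide) (by decide) (by decide)
  have e4 := hX2 0 5 1 2 3 4 (by decide) (by decide) (by decide)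
  have e5 := hX2 1 2 0 3 4 5 (by decide) (by decide) (by decide)
  rw [hcomm 1 2 0 3, hcomm 1 2 0 4, hcomm 1 2 0 5] at e5
  have e6 := hX2 1 3 0 2 4 5 (by decide) (by decide) (by decide)
  rw [hcomm 1 3 0 2, hcomm 1 3 0 4, hcomm 1 3 0 5] at e6
  have e7 := hX2 1 4 0 2 3 5 (by decide) (by decide) (by decide)
  rw [hcomm 1 4 0 2, hcomm 1 4 0 3, hcomm 1 4 0 5] at e7
  have e8 := hX2 1 5 0 2 3 4 (by decide) (by decide) (by decide)
  rw [hcomm 1 5 0 2, hcomm 1 5 0 3, hcomm 1 5 0 4] at e8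
  have e9 := hX2 2 3 0 1 4 5 (by decide) (by decide) (by decide)
  rw [hcomm 2 3 0 1, hcomm 2 3 0 4, hcomm 2 3 0 5, hcomm 2 3 1 4, hcomm 2 3 1 5] at e9
  have e10 := hX2 2 4 0 1 3 5 (by decide) (by decide) (by decide)
  rw [hcomm 2 4 0 1, hcomm 2 4 0 3, hcomm 2 4 0 5, hcomm 2 4 1 3, hcomm 2 4 1 5] at e10
  have e11 := hX2 2 5 0 1 3 4 (by decide) (by decide) (by decide)
  rw [hcomm 2 5 0 1, hcomm 2 5 0 3, hcomm 2 5 0 4, hcomm 2 5 1 3, hcomm 2 5 1 4] at e11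
  have e12 := hX2 3 4 0 1 2 5 (by decide) (by decide) (by decide)
  rw [hcomm 3 4 0 1, hcomm 3 4 0 2, hcomm 3 4 0 5, hcomm 3 4 1 2, hcomm 3 4 1 5, hcomm 3 4 2 5] at e12
  have e13 := hX2 3 5 0 1 2 4 (by decide) (by decide) (by decide)
  rw [hcomm 3 5 0 1, hcomm 3 5 0 2, hcomm 3 5 0 4, hcomm 3 5 1 2, hcomm 3 5 1 4, hcomm 3 5 2 4] at e13
  have e14 := hX2 4 5 0 1 2 3 (by decide) (by decide) (by decide)
  rw [hcomm 4 5 0 1, hcomm 4 5 0 2, hcomm 4 5 0 3, hcomm 4 5 1 2, hcomm 4 5 1 3, hcomm 4 5 2 3] at e14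
  omega

theorem six {V : Type} {G : SimpleGraph V} {c : Sym2 V → ℕ}
    (hc : IsProperEdgeColoring G c) (hno : ¬ HasRainbowCopy G (⊤ : SimpleGraph (Fin 4)) c)
    (b : Fin 6 → V) (hb : ∀ p q, p < q → G.Adj (b p) (b q)) :
    c s(b 0, b 1) = c s(b 2, b 3) ∨ c s(b 0, b 1) = c s(b 2, b 4) ∨
      c s(b 0, b 1) = c s(b 2, b 5) := by
  have hb' : ∀ p q, p ≠ q → G.Adj (b p) (b q) := by
    intro p q h
    rcases lt_or_gt_of_ne h with h | h
    · exact hb p q h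
    · exact (hb q p h).symm
  refine six_core (fun p q => c s(b p, b q)) (fun p q => by rw [Sym2.eq_swap]) ?_ ?_
  · intro p q r h1 h2 h3
    refine hc _ (hb' p q h1) _ (hb' p r h2) ?_ ⟨b p, by simp, by simp⟩
    intro h
    exact (hb' q r h3).ne (Sym2.congr_right.1 h)
  · intro p q r s h1 h2 h3
    by_contra hcon
    simp only [not_or] at hcon
    exact hno (rainbow_of_four hc _ _ _ _ (hb _ _ h1) (hb _ _ (h1.trans h2))
      (hb _ _ (h1.trans (h2.trans h3))) (hb _ _ h2) (hb _ _ (h2.trans h3)) (hb _ _ h3)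
      hcon.1 hcon.2.1 hcon.2.2)

/-- If `x, y` and `u` lie in a common `K₆` and `v` outside it is adjacent to all three, then
every proper coloring has a rainbow `K₄`. -/
theorem block_contra {V : Type} {G : SimpleGraph V} {c : Sym2 V → ℕ}
    (hc : IsProperEdgeColoring G c) (x y u w₁ w₂ w₃ v : V)
    (hxy : G.Adj x y) (hxu : G.Adj x u) (hyu : G.Adj y u)
    (hx1 : G.Adj x w₁) (hx2 : G.Adj x w₂) (hx3 : G.Adj x w₃)
    (hy1 : G.Adj y w₁) (hy2 : G.Adj y w₂) (hy3 : G.Adj y w₃)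
    (hu1 : G.Adj u w₁) (hu2 : G.Adj u w₂) (hu3 : G.Adj u w₃)
    (h12 : G.Adj w₁ w₂) (h13 : G.Adj w₁ w₃) (h23 : G.Adj w₂ w₃)
    (hxv : G.Adj x v) (hyv : G.Adj y v) (huv : G.Adj u v)
    (n1 : w₁ ≠ v) (n2 : w₂ ≠ v) (n3 : w₃ ≠ v) :
    HasRainbowCopy G (⊤ : SimpleGraph (Fin 4)) c := by
  by_contra hno
  have key : ∀ a w, w ≠ v → G.Adj a w → G.Adj a v → c s(a, w) ≠ c s(a, v) := by
    intro a w hw h1 h2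
    exact hc _ h1 _ h2 (fun h => hw (Sym2.congr_right.1 h)) ⟨a, by simp, by simp⟩
  have gen : ∀ a b e : V, G.Adj a b → G.Adj a e → G.Adj b e →
      G.Adj a w₁ → G.Adj a w₂ → G.Adj a w₃ → G.Adj b w₁ → G.Adj b w₂ → G.Adj b w₃ →
      G.Adj e w₁ → G.Adj e w₂ → G.Adj e w₃ → G.Adj e v → c s(a, b) ≠ c s(e, v) := by
    intro a b e hab hae hbe a1 a2 a3 b1 b2 b3 e1 e2 e3 ev heq
    have := six hc hno ![a, b, e, w₁, w₂, w₃] (by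
      intro p q hpq
      fin_cases p <;> fin_cases q <;> first | assumption | (exact absurd hpq (by decide)))
    have k1 := key e w₁ n1 e1 ev
    have k2 := key e w₂ n2 e2 ev
    have k3 := key e w₃ n3 e3 ev
    rcases this with h | h | h
    · exact k1 (h.symm.trans heq)
    · exact k2 (h.symm.trans heq)
    · exact k3 (h.symm.trans heq)
  refine hno (rainbow_of_four hc x y u v hxy hxu hxv hyu hyv huv ?_ ?_ ?_)
  · exact gen x y u hxy hxu hyu hx1 hx2 hx3 hy1 hy2 hy3 hu1 hu2 hu3 huv
  · exact gen x u y hxu hxy hyu.symm hx1 hx2 hx3 hu1 hu2 hu3 hy1 hy2 hy3 hyv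
  · exact (gen y u x hyu hxy.symm hxu.symm hy1 hy2 hy3 hu1 hu2 hu3 hx1 hx2 hx3 hxv).symm

/-- The graph `K₂ ∨ (K₄ ∪ ⋯ ∪ K₄ ∪ K_r)`. -/
def blockGraph (n : ℕ) : SimpleGraph (Fin n) where
  Adj i j := i ≠ j ∧ (i.1 < 2 ∨ j.1 < 2 ∨ (i.1 - 2) / 4 = (j.1 - 2) / 4)
  symm := ⟨fun i j h => ⟨h.1.symm, by omega⟩⟩
  loopless := ⟨fun i h => h.1 rfl⟩

theorem blockGraph_adj {n : ℕ} (i j : Fin n) : (blockGraph n).Adj i j ↔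
    i.1 ≠ j.1 ∧ (i.1 < 2 ∨ j.1 < 2 ∨ (i.1 - 2) / 4 = (j.1 - 2) / 4) := by
  have h : (i.1 ≠ j.1) ↔ i ≠ j := Fin.val_ne_iff
  rw [h]
  exact Iff.rfl

/-- One-factorization of `K₆`. -/
def tab (p q : ℕ) : ℕ :=
  if p = 0 then 2 * (q - 1) % 5 else if q = 0 then 2 * (p - 1) % 5 else (p + q - 2) % 5

/-- position in a block -/
def pos (i : ℕ) : ℕ := if i < 2 then i else (i - 2) % 4 + 2

/-- color of a pair of vertices -/
def col (i j : ℕ) : ℕ :=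
  if tab (pos i) (pos j) = 0 then 0
  else 5 * (max ((i - 2) / 4) ((j - 2) / 4)) + tab (pos i) (pos j)

theorem tab_comm (p q : ℕ) : tab p q = tab q p := by
  unfold tab
  split_ifs <;> first | (subst_vars; rfl) | rw [Nat.add_comm]

theorem col_comm (i j : ℕ) : col i j = col j i := by
  unfold col
  rw [tab_comm, max_comm]

theorem tab_lt (p q : ℕ) : tab p q < 5 := by
  unfold tab
  split_ifs <;> omega

theorem pos_lt (i : ℕ) : pos i < 6 := by
  unfold pos
  split_ifs <;> omega

theorem tab_inj : ∀ p < 6, ∀ q < 6, ∀ r < 6, p ≠ q → p ≠ r → tab p q = tab p r → q = r := by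
  have h : ∀ p q r : Fin 6, p.1 ≠ q.1 → p.1 ≠ r.1 → tab p.1 q.1 = tab p.1 r.1 → q.1 = r.1 := by
    decide +kernel
  exact fun p hp q hq r hr => h ⟨p, hp⟩ ⟨q, hq⟩ ⟨r, hr⟩

set_option synthInstance.maxSize 2000 in
set_option synthInstance.maxHeartbeats 400000 in
theorem tab_four : ∀ p < 6, ∀ q < 6, ∀ r < 6, ∀ s < 6,
    p ≠ q → p ≠ r → p ≠ s → q ≠ r → q ≠ s → r ≠ s →
    tab p q = tab r s ∨ tab p r = tab q s ∨ tab p s = tab q r := by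
  have h : ∀ p q r s : Fin 6, p.1 ≠ q.1 → p.1 ≠ r.1 → p.1 ≠ s.1 → q.1 ≠ r.1 → q.1 ≠ s.1 →
      r.1 ≠ s.1 → tab p.1 q.1 = tab r.1 s.1 ∨ tab p.1 r.1 = tab q.1 s.1 ∨
        tab p.1 s.1 = tab q.1 r.1 := by
    decide +kernel
  exact fun p hp q hq r hr s hs => h ⟨p, hp⟩ ⟨q, hq⟩ ⟨r, hr⟩ ⟨s, hs⟩

theorem tab_zero : ∀ p < 2, ∀ q < 6, p ≠ q → tab p q = 0 → q < 2 := by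
  decide

theorem tab_zero' : ∀ p < 2, ∀ q < 2, p ≠ q → tab p q = 0 := by
  decide

/-- adjacency of numbers -/
def NAdj (i j : ℕ) : Prop := i ≠ j ∧ (i < 2 ∨ j < 2 ∨ (i - 2) / 4 = (j - 2) / 4)

theorem pos_ne {i j : ℕ} (h : NAdj i j) : pos i ≠ pos j := by
  unfold NAdj at h
  unfold pos
  split_ifs <;> omega

theorem col_inj {v i j : ℕ} (hi : NAdj v i) (hj : NAdj v j) (h : col v i = col v j) :
    i = j := by
  have t1 := tab_inj _ (pos_lt v) _ (pos_lt i) _ (pos_lt j) (pos_ne hi) (pos_ne hj)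
  have l1 := tab_lt (pos v) (pos i)
  have l2 := tab_lt (pos v) (pos j)
  have p1 := pos_ne hi
  have p2 := pos_ne hj
  have hpos : tab (pos v) (pos i) = tab (pos v) (pos j) := by
    unfold col at h
    split_ifs at h <;> omega
  have hp := t1 hpos
  by_cases hv : v < 2
  · have hpv : pos v < 2 := by unfold pos; rw [if_pos hv]; exact hv
    have z1 := tab_zero _ hpv _ (pos_lt i) p1
    have z2 := tab_zero' _ hpv (pos i)
    unfold col at h
    rw [← hp] at h
    unfold NAdj at hi hj
    split_ifs at h with h0
    · have := z1 h0
      unfold pos at this hp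
      split_ifs at this hp <;> omega
    · have : ¬ pos i < 2 := fun hh => h0 (z2 hh p1)
      unfold pos at this hp
      split_ifs at this hp <;> omega
  · unfold NAdj at hi hj
    unfold pos at hp
    split_ifs at hp <;> omega

theorem col_val {i j g : ℕ} (h : NAdj i j) (hi : i < 2 ∨ (i - 2) / 4 = g)
    (hj : j < 2 ∨ (j - 2) / 4 = g) :
    col i j = if tab (pos i) (pos j) = 0 then 0 else 5 * g + tab (pos i) (pos j) := by
  unfold col
  by_cases h0 : tab (pos i) (pos j) = 0
  · simp [h0]
  · rw [if_neg h0, if_neg h0]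
    have : ¬ (i < 2 ∧ j < 2) := by
      rintro ⟨a, b⟩
      apply h0
      apply tab_zero' _ _ _ _ (pos_ne h) <;> unfold pos <;> split_ifs <;> omega
    have : max ((i - 2) / 4) ((j - 2) / 4) = g := by omega
    rw [this]

theorem col_four {p q r s : ℕ} (hpq : NAdj p q) (hpr : NAdj p r) (hps : NAdj p s)
    (hqr : NAdj q r) (hqs : NAdj q s) (hrs : NAdj r s) :
    col p q = col r s ∨ col p r = col q s ∨ col p s = col q r := by
  obtain ⟨g, hp, hq, hr, hs⟩ : ∃ g, (p < 2 ∨ (p - 2) / 4 = g) ∧ (q < 2 ∨ (q - 2) / 4 = g) ∧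
      (r < 2 ∨ (r - 2) / 4 = g) ∧ (s < 2 ∨ (s - 2) / 4 = g) := by
    unfold NAdj at *
    refine ⟨max (max ((p - 2) / 4) ((q - 2) / 4)) (max ((r - 2) / 4) ((s - 2) / 4)), ?_⟩
    omega
  rw [col_val hpq hp hq, col_val hrs hr hs, col_val hpr hp hr, col_val hqs hq hs,
    col_val hps hp hs, col_val hqr hq hr]
  rcases tab_four _ (pos_lt p) _ (pos_lt q) _ (pos_lt r) _ (pos_lt s) (pos_ne hpq) (pos_ne hpr)
    (pos_ne hps) (pos_ne hqr) (pos_ne hqs) (pos_ne hrs) with h | h | h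
  · left; rw [h]
  · right; left; rw [h]
  · right; right; rw [h]

/-- the coloring -/
def blockCol (n : ℕ) : Sym2 (Fin n) → ℕ :=
  Sym2.lift ⟨fun i j => col i.1 j.1, fun i j => col_comm i.1 j.1⟩

theorem blockCol_proper (n : ℕ) : IsProperEdgeColoring (blockGraph n) (blockCol n) := by
  rintro e₁ h1 e₂ h2 hne ⟨v, hv1, hv2⟩ heq
  obtain ⟨i, rfl⟩ := hv1
  obtain ⟨j, rfl⟩ := hv2
  have h1' := (blockGraph_adj v i).1 h1
  have h2' := (blockGraph_adj v j).1 h2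
  have : i = j := Fin.ext (col_inj h1' h2' heq)
  exact hne (by rw [this])

theorem blockCol_free (n : ℕ) :
    ¬ HasRainbowCopy (blockGraph n) (⊤ : SimpleGraph (Fin 4)) (blockCol n) := by
  rintro ⟨f, hf, hadj, hr⟩
  have ha : ∀ a b : Fin 4, a ≠ b → NAdj (f a).1 (f b).1 := fun a b hab =>
    (blockGraph_adj _ _).1 (hadj a b hab)
  have hr' : ∀ a b a' b' : Fin 4, a ≠ b → a' ≠ b' → s(a, b) ≠ s(a', b') →
      col (f a).1 (f b).1 ≠ col (f a').1 (f b').1 := fun a b a' b' h1 h2 h3 =>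
    hr s(a, b) h1 s(a', b') h2 h3
  rcases col_four (ha 0 1 (by decide)) (ha 0 2 (by decide)) (ha 0 3 (by decide))
    (ha 1 2 (by decide)) (ha 1 3 (by decide)) (ha 2 3 (by decide)) with h | h | h
  · exact hr' 0 1 2 3 (by decide) (by decide) (by decide) h
  · exact hr' 0 2 1 3 (by decide) (by decide) (by decide) h
  · exact hr' 0 3 1 2 (by decide) (by decide) (by decide) h

theorem block_sat_aux {n : ℕ} (G : SimpleGraph (Fin n)) (hG : blockGraph n ≤ G) (u v : Fin n)
    (huv : G.Adj u v) (hlt : u.1 < v.1) (hn : ¬ (blockGraph n).Adj u v)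
    (c : Sym2 (Fin n) → ℕ) (hc : IsProperEdgeColoring G c) :
    HasRainbowCopy G (⊤ : SimpleGraph (Fin 4)) c := by
  rw [blockGraph_adj] at hn
  have hv := v.2
  obtain ⟨w, hw⟩ : ∃ w : ℕ → ℕ, ∀ k, w k = u.1 - (u.1 - 2) % 4 + ((u.1 - 2) % 4 + k) % 4 :=
    ⟨_, fun _ => rfl⟩
  have hw1 := hw 1
  have hw2 := hw 2
  have hw3 := hw 3
  have b1 : w 1 < n := by omega
  have b2 : w 2 < n := by omega
  have b3 : w 3 < n := by omega
  have b0 : 0 < n := by omega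
  have b0' : 1 < n := by omega
  refine block_contra hc ⟨0, b0⟩ ⟨1, b0'⟩ u ⟨w 1, b1⟩ ⟨w 2, b2⟩ ⟨w 3, b3⟩ v
    ?_ ?_ ?_ ?_ ?_ ?_ ?_ ?_ ?_ ?_ ?_ ?_ ?_ ?_ ?_ ?_ ?_ huv ?_ ?_ ?_
  all_goals first
    | (apply hG; rw [blockGraph_adj]; simp only; omega)
    | (rw [← Fin.val_ne_iff]; simp only; omega)

theorem blockGraph_sat (n : ℕ) : IsRainbowSat (blockGraph n) (⊤ : SimpleGraph (Fin 4)) := by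
  refine ⟨⟨blockCol n, blockCol_proper n, blockCol_free n⟩, ?_⟩
  intro u v hne hn c hc
  have hle : blockGraph n ≤ blockGraph n ⊔ SimpleGraph.fromEdgeSet {s(u, v)} := le_sup_left
  have hadj : (blockGraph n ⊔ SimpleGraph.fromEdgeSet {s(u, v)}).Adj u v := by
    simp [hne]
  rcases lt_or_gt_of_ne (Fin.val_ne_iff.2 hne) with h | h
  · exact block_sat_aux _ hle u v hadj h hn c hc
  · exact block_sat_aux _ hle v u hadj.symm h (fun h => hn h.symm) c hc

/-- Edge bound by the degree sum: vertices outside the first two have degree at most 5. -/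
theorem blockGraph_card (n : ℕ) (hn : 6 ≤ n) :
    2 * (blockGraph n).edgeSet.ncard ≤ 7 * n := by
  classical
  have hsum := (blockGraph n).sum_degrees_eq_twice_card_edges
  have hcard : (blockGraph n).edgeSet.ncard = (blockGraph n).edgeFinset.card := by
    rw [← SimpleGraph.coe_edgeFinset, Set.ncard_coe_finset]
  rw [hcard, ← hsum]
  have hdeg : ∀ i : Fin n, (blockGraph n).degree i ≤ if i.1 < 2 then n - 1 else 5 := by
    intro i
    split_ifs with h
    · have := (blockGraph n).degree_lt_card_verts i
      rw [Fintype.card_fin] at this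
      omega
    · rw [← SimpleGraph.card_neighborFinset_eq_degree]
      have hsub : ((blockGraph n).neighborFinset i).image Fin.val ⊆
          insert 0 (insert 1 ((Finset.Ico (i.1 - (i.1 - 2) % 4) (i.1 - (i.1 - 2) % 4 + 4)).erase i.1)) := by
        intro k hk
        simp only [Finset.mem_image, SimpleGraph.mem_neighborFinset, blockGraph_adj] at hk
        obtain ⟨j, hj, rfl⟩ := hk
        simp only [Finset.mem_insert, Finset.mem_erase, Finset.mem_Ico]
        omega
      have h1 := Finset.card_le_card hsub
      rw [Finset.card_image_of_injective _ Fin.val_injective] at h1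
      have h2 := Finset.card_insert_le 0 (insert 1 ((Finset.Ico (i.1 - (i.1 - 2) % 4) (i.1 - (i.1 - 2) % 4 + 4)).erase i.1))
      have h3 := Finset.card_insert_le 1 ((Finset.Ico (i.1 - (i.1 - 2) % 4) (i.1 - (i.1 - 2) % 4 + 4)).erase i.1)
      have h4 : ((Finset.Ico (i.1 - (i.1 - 2) % 4) (i.1 - (i.1 - 2) % 4 + 4)).erase i.1).card = 3 := by
        rw [Finset.card_erase_of_mem (by simp only [Finset.mem_Ico]; omega), Nat.card_Ico]
        omega
      omega
  refine (Finset.sum_le_sum fun i _ => hdeg i).trans ?_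
  rw [Fin.sum_univ_eq_sum_range (fun i => if i < 2 then n - 1 else 5) n]
  obtain ⟨m, rfl⟩ : ∃ m, n = m + 2 := ⟨n - 2, by omega⟩
  rw [Finset.sum_range_succ', Finset.sum_range_succ']
  simp
  omega

/-- For every `n ≥ 6` there is an `n`-vertex rainbow `K_4`-saturated
graph with at most `(7/2)n` edges. -/
theorem stmt_11 (n : ℕ) (hn : 6 ≤ n) :
    ∃ G : SimpleGraph (Fin n),
      IsRainbowSat G (⊤ : SimpleGraph (Fin 4)) ∧
      (G.edgeSet.ncard : ℝ) ≤ 7 / 2 * (n : ℝ) := by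
  refine ⟨blockGraph n, blockGraph_sat n, ?_⟩
  have h : (2 : ℝ) * ((blockGraph n).edgeSet.ncard : ℝ) ≤ 7 * (n : ℝ) := by
    exact_mod_cast blockGraph_card n hn
  linarith
end

section
/- Let k ≥ 5. If a graph G is rainbow P_k-saturated, then G has at most one connected component that is acyclic. Consequently, every n-vertex rainbow P_k-saturated graph has at least n − 1 edges. -/
open SimpleGraph

/-- In an acyclic connected graph, a vertex has at most one neighbour at most as far from a
root as itself. -/
lemma tree_parent_unique {W : Type} {H : SimpleGraph W} (hc : H.Connected) (ha : H.IsAcyclic)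
    (r x a b : W) (hxa : H.Adj x a) (hxb : H.Adj x b) (hda : H.dist r a ≤ H.dist r x)
    (hdb : H.dist r b ≤ H.dist r x) : a = b := by
  classical
  have key : ∀ a, H.Adj x a → H.dist r a ≤ H.dist r x →
      ∃ p : H.Walk r x, p.IsPath ∧ p.penultimate = a := by
    intro a hxa hda
    obtain ⟨p, hp, hpl⟩ := hc.exists_path_of_dist r a
    have hx : x ∉ p.support := by
      intro hx
      have h1 := SimpleGraph.dist_le (p.takeUntil x hx)
      have h2 := Walk.length_takeUntil_lt hx hxa.ne
      omega
    exact ⟨p.concat hxa.symm, hp.concat hx hxa.symm, by simp⟩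
  obtain ⟨p, hp, hpa⟩ := key a hxa hda
  obtain ⟨q, hq, hqb⟩ := key b hxb hdb
  have := congrArg Subtype.val (ha.path_unique ⟨p, hp⟩ ⟨q, hq⟩)
  simp only at this
  rw [← hpa, ← hqb, this]

/-- A finite tree has a leaf whose neighbour has at most one non-leaf neighbour. -/
lemma tree_good_leaf {W : Type} [Finite W] {H : SimpleGraph W} (hc : H.Connected)
    (ha : H.IsAcyclic) : ∃ v, (∀ a b, H.Adj v a → H.Adj v b → a = b) ∧
      ∀ y w z w' z', H.Adj v y → H.Adj y w → H.Adj w z → z ≠ y →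
        H.Adj y w' → H.Adj w' z' → z' ≠ y → w = w' := by
  have := hc.nonempty
  obtain ⟨r⟩ := hc.nonempty
  obtain ⟨v, hv⟩ := Finite.exists_max (fun v => H.dist r v)
  refine ⟨v, fun a b h1 h2 => tree_parent_unique hc ha r v a b h1 h2 (hv a) (hv b), ?_⟩
  intro y w z w' z' hvy hyw hwz hzy hyw' hwz' hzy'
  have h1 : H.dist r v ≤ H.dist r y + 1 := by
    have := hc.dist_triangle (u := r) (v := y) (w := v)
    rwa [SimpleGraph.dist_eq_one_iff_adj.2 hvy.symm] at this
  have key : ∀ w z, H.Adj y w → H.Adj w z → z ≠ y → H.dist r w ≤ H.dist r y := by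
    intro w z hyw hwz hzy
    by_contra hlt
    have h2 := hv z
    exact hzy (tree_parent_unique hc ha r w z y hwz hyw.symm (by omega) (by omega))
  exact tree_parent_unique hc ha r y w w' hyw hyw' (key w z hyw hwz hzy) (key w' z' hyw' hwz' hzy')

/-- Coloured version of the good leaf, inside an acyclic component. -/
lemma comp_good_leaf {V : Type} [Finite V] {G : SimpleGraph V} {c : Sym2 V → ℕ}
    (hp : IsProperEdgeColoring G c) (C : G.ConnectedComponent)
    (ha : (G.induce C.supp).IsAcyclic) : ∃ v ∈ C.supp, ∃ α β : ℕ, α ≠ β ∧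
      (∀ y, G.Adj v y → c s(v, y) = α) ∧
      ∀ y w z, G.Adj v y → G.Adj y w → w ≠ v → G.Adj w z → z ≠ y → c s(y, w) = β := by
  obtain ⟨⟨v, hv⟩, h1, h2⟩ := tree_good_leaf (C.connected_toSimpleGraph) ha
  have h1' : ∀ a b, G.Adj v a → G.Adj v b → a = b := by
    intro a b hva hvb
    have := h1 ⟨a, C.mem_supp_of_adj_mem_supp hv hva⟩ ⟨b, C.mem_supp_of_adj_mem_supp hv hvb⟩ hva hvb
    exact congrArg Subtype.val this
  have h2' : ∀ y w z w' z', G.Adj v y → G.Adj y w → G.Adj w z → z ≠ y →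
        G.Adj y w' → G.Adj w' z' → z' ≠ y → w = w' := by
    intro y w z w' z' hvy hyw hwz hzy hyw' hwz' hzy'
    have my := C.mem_supp_of_adj_mem_supp hv hvy
    have mw := C.mem_supp_of_adj_mem_supp my hyw
    have mw' := C.mem_supp_of_adj_mem_supp my hyw'
    have mz := C.mem_supp_of_adj_mem_supp mw hwz
    have mz' := C.mem_supp_of_adj_mem_supp mw' hwz'
    have := h2 ⟨y, my⟩ ⟨w, mw⟩ ⟨z, mz⟩ ⟨w', mw'⟩ ⟨z', mz'⟩ hvy hyw hwz
      (fun h => hzy (congrArg Subtype.val h)) hyw' hwz' (fun h => hzy' (congrArg Subtype.val h))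
    exact congrArg Subtype.val this
  refine ⟨v, hv, ?_⟩
  by_cases hy : ∃ y, G.Adj v y
  · obtain ⟨y, hy⟩ := hy
    by_cases hw : ∃ w z, G.Adj y w ∧ w ≠ v ∧ G.Adj w z ∧ z ≠ y
    · obtain ⟨w, z, hyw, hwv, hwz, hzy⟩ := hw
      refine ⟨c s(v, y), c s(y, w), ?_, ?_, ?_⟩
      · apply hp _ hy _ hyw
        · intro h
          rw [Sym2.eq_iff] at h
          rcases h with ⟨h, -⟩ | ⟨h, -⟩
          · exact hy.ne h
          · exact hwv h.symm
        · exact ⟨y, by simp, by simp⟩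
      · intro y' hy'
        rw [h1' y' y hy' hy]
      · intro y' w' z' hy' hyw' hwv' hwz' hzy'
        obtain rfl := h1' y' y hy' hy
        rw [h2' y' w' z' w z hy' hyw' hwz' hzy' hyw hwz hzy]
    · refine ⟨c s(v, y), c s(v, y) + 1, by omega, ?_, ?_⟩
      · intro y' hy'
        rw [h1' y' y hy' hy]
      · intro y' w' z' hy' hyw' hwv' hwz' hzy'
        obtain rfl := h1' y' y hy' hy
        exact absurd ⟨w', z', hyw', hwv', hwz', hzy'⟩ hw
  · exact ⟨0, 1, by omega, fun y h => absurd ⟨y, h⟩ hy, fun y w z h => absurd ⟨y, h⟩ hy⟩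

lemma exists_color_perm (a b a' b' : ℕ) (h : a ≠ b) (h' : a' ≠ b') :
    ∃ σ : Equiv.Perm ℕ, σ a = a' ∧ σ b = b' := by
  refine ⟨(Equiv.swap a a').trans (Equiv.swap (Equiv.swap a a' b) b'), ?_, ?_⟩
  · have : a' ≠ Equiv.swap a a' b := by
      intro e
      have := congrArg (Equiv.swap a a') e
      simp at this
      exact h this
    simp [Equiv.swap_apply_of_ne_of_ne this h']
  · simp

/-- No rainbow path uses the new edge in the given orientation. -/
lemma no_rainbow_through {V : Type} {G : SimpleGraph V} {c : Sym2 V → ℕ} {k : ℕ} (hk : 5 ≤ k)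
    {u v : V} {α β : ℕ} (huv : c s(u, v) = β)
    (hu : ∀ a, a ≠ v → G.Adj u a → c s(u, a) = α)
    (hv : ∀ a, a ≠ u → G.Adj v a → c s(v, a) = α)
    (hu2 : ∀ y w z, y ≠ v → w ≠ v → z ≠ v → w ≠ u → z ≠ u → z ≠ y → G.Adj u y → G.Adj y w →
      G.Adj w z → c s(y, w) = β)
    (hv2 : ∀ y w z, y ≠ u → w ≠ u → z ≠ u → w ≠ v → z ≠ v → z ≠ y → G.Adj v y → G.Adj y w →
      G.Adj w z → c s(y, w) = β)
    (f : Fin k → V) (hf : Function.Injective f)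
    (hadj : ∀ a b, (pathGraph k).Adj a b → G.Adj (f a) (f b))
    (hr : ∀ e₁ ∈ (pathGraph k).edgeSet, ∀ e₂ ∈ (pathGraph k).edgeSet, e₁ ≠ e₂ →
      c (Sym2.map f e₁) ≠ c (Sym2.map f e₂))
    (i : ℕ) (hi : i + 1 < k) (h1 : f ⟨i, Nat.lt_of_succ_lt hi⟩ = u) (h2 : f ⟨i + 1, hi⟩ = v) : False := by
  have ne : ∀ (i j : ℕ) (hi : i < k) (hj : j < k), i ≠ j → f ⟨i, hi⟩ ≠ f ⟨j, hj⟩ := by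
    intro i j hi hj hij h
    exact hij (congrArg Fin.val (hf h))
  have ad : ∀ (i j : ℕ) (hi : i < k) (hj : j < k), (i + 1 = j ∨ j + 1 = i) →
      G.Adj (f ⟨i, hi⟩) (f ⟨j, hj⟩) := by
    intro i j hi hj hij
    exact hadj _ _ (pathGraph_adj.2 hij)
  have rb : ∀ (i j a b : ℕ) (hi : i < k) (hj : j < k) (ha : a < k) (hb : b < k),
      (i + 1 = j ∨ j + 1 = i) → (a + 1 = b ∨ b + 1 = a) → ¬ (i = a ∧ j = b) → ¬ (i = b ∧ j = a) →
      c s(f ⟨i, hi⟩, f ⟨j, hj⟩) ≠ c s(f ⟨a, ha⟩, f ⟨b, hb⟩) := by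
    intro i j a b hi hj ha hb h1 h2 h3 h4
    have := hr s(⟨i, hi⟩, ⟨j, hj⟩) (pathGraph_adj.2 h1) s(⟨a, ha⟩, ⟨b, hb⟩) (pathGraph_adj.2 h2)
      (by
        intro h
        rw [Sym2.eq_iff] at h
        simp only [Fin.mk.injEq] at h
        tauto)
    simpa using this
  subst h1 h2
  by_cases h0 : i = 0
  · subst h0
    refine rb 0 1 2 3 (by omega) (by omega) (by omega) (by omega) (by omega) (by omega) (by omega)
      (by omega) ?_
    refine huv.trans (hv2 (f ⟨2, by omega⟩) (f ⟨3, by omega⟩) (f ⟨4, by omega⟩) ?_ ?_ ?_ ?_ ?_ ?_ ?_ ?_ ?_).symm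
    all_goals first
      | exact ne _ _ _ _ (by omega)
      | exact ad _ _ _ _ (by omega)
  · by_cases h3 : i + 2 = k
    · refine rb i (i+1) (i-1) (i-2) (by omega) (by omega) (by omega) (by omega) (by omega)
        (by omega) (by omega) (by omega) ?_
      refine huv.trans (hu2 (f ⟨i-1, by omega⟩) (f ⟨i-2, by omega⟩) (f ⟨i-3, by omega⟩) ?_ ?_ ?_ ?_ ?_ ?_ ?_ ?_ ?_).symm
      all_goals first
        | exact ne _ _ _ _ (by omega)
        | exact ad _ _ _ _ (by omega)
    · refine rb i (i-1) (i+1) (i+2) (by omega) (by omega) (by omega) (by omega) (by omega)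
        (by omega) (by omega) (by omega) ?_
      rw [hu _ (ne _ _ _ _ (by omega)) (ad _ _ _ _ (by omega)),
        hv _ (ne _ _ _ _ (by omega)) (ad _ _ _ _ (by omega))]

lemma acyclic_comp_unique (k n : ℕ) (hk : 5 ≤ k) (G : SimpleGraph (Fin n))
    (hsat : IsRainbowSat G (SimpleGraph.pathGraph k)) (c₁ c₂ : G.ConnectedComponent)
    (ha₁ : (G.induce c₁.supp).IsAcyclic) (ha₂ : (G.induce c₂.supp).IsAcyclic) : c₁ = c₂ := by
  classical
  by_contra hne
  obtain ⟨⟨c, hc, hfree⟩, hs⟩ := hsat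
  obtain ⟨u, hu, α, β, hαβ, hu1, hu2⟩ := comp_good_leaf hc c₁ ha₁
  obtain ⟨v, hv, α', β', hαβ', hv1, hv2⟩ := comp_good_leaf hc c₂ ha₂
  obtain ⟨σ, hσa, hσb⟩ := exists_color_perm α' β' α β hαβ' hαβ
  have hu' : u ∉ c₂.supp := by
    intro h
    rw [ConnectedComponent.mem_supp_iff] at h hu
    exact hne (hu.symm.trans h)
  have huv : u ≠ v := by
    rintro rfl
    exact hu' hv
  have hnadj : ¬ G.Adj u v := fun h => hu' (c₂.mem_supp_of_adj_mem_supp hv h.symm)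
  have hcl : ∀ {a b}, G.Adj a b → (a ∈ c₂.supp ↔ b ∈ c₂.supp) := fun h => c₂.mem_supp_congr_adj h
  have hs' := hs u v huv hnadj
  set G' := G ⊔ SimpleGraph.fromEdgeSet {s(u, v)} with hG'
  have hG'adj : ∀ a b, G'.Adj a b ↔ G.Adj a b ∨ s(a, b) = s(u, v) := by
    intro a b
    simp only [hG', SimpleGraph.sup_adj, SimpleGraph.fromEdgeSet_adj, Set.mem_singleton_iff]
    constructor
    · tauto
    · rintro (h | h)
      · exact Or.inl h
      · refine Or.inr ⟨h, ?_⟩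
        rintro rfl
        rw [Sym2.eq_iff] at h
        grind
  have hGG' : ∀ {a b}, G'.Adj a b → a ≠ u ∨ b ≠ v → a ≠ v ∨ b ≠ u → G.Adj a b := by
    intro a b h h1 h2
    rcases (hG'adj a b).1 h with h | h
    · exact h
    · rw [Sym2.eq_iff] at h
      grind
  let d : Sym2 (Fin n) → ℕ := fun e =>
    if e = s(u, v) then β else if ∀ x ∈ e, x ∈ c₂.supp then σ (c e) else c e
  have d_uv : d s(u, v) = β := by simp [d]
  have d_in : ∀ a b, a ∈ c₂.supp → b ∈ c₂.supp → d s(a, b) = σ (c s(a, b)) := by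
    intro a b h1 h2
    have h3 : s(a, b) ≠ s(u, v) := by
      intro h
      rw [Sym2.eq_iff] at h
      rcases h with ⟨rfl, -⟩ | ⟨-, rfl⟩
      · exact hu' h1
      · exact hu' h2
    simp only [d, if_neg h3]
    rw [if_pos]
    intro x hx
    rcases Sym2.mem_iff.1 hx with rfl | rfl <;> assumption
  have d_out : ∀ a b, s(a, b) ≠ s(u, v) → a ∉ c₂.supp → d s(a, b) = c s(a, b) := by
    intro a b h3 h1
    simp only [d, if_neg h3]
    rw [if_neg]
    intro h
    exact h1 (h a (by simp))
  have ne_uv : ∀ {a b}, G.Adj a b → s(a, b) ≠ s(u, v) := by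
    intro a b hab h
    rw [Sym2.eq_iff] at h
    rcases h with ⟨rfl, rfl⟩ | ⟨rfl, rfl⟩
    · exact hnadj hab
    · exact hnadj hab.symm
  have du1 : ∀ a, G.Adj u a → d s(u, a) = α := fun a h => by
    rw [d_out u a (ne_uv h) hu', hu1 a h]
  have dv1 : ∀ a, G.Adj v a → d s(v, a) = α := fun a h => by
    rw [d_in v a hv ((hcl h).1 hv), hv1 a h, hσa]
  have hprop : IsProperEdgeColoring G' d := by
    have key : ∀ x a b, a ≠ b → G'.Adj x a → G'.Adj x b → d s(x, a) ≠ d s(x, b) := by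
      have key1 : ∀ x a b, s(x, a) = s(u, v) → a ≠ b → G.Adj x b → d s(x, a) ≠ d s(x, b) := by
        intro x a b h hab hxb
        rw [h, d_uv]
        rw [Sym2.eq_iff] at h
        rcases h with ⟨rfl, rfl⟩ | ⟨rfl, rfl⟩
        · rw [du1 b hxb]; exact hαβ.symm
        · rw [dv1 b hxb]; exact hαβ.symm
      intro x a b hab hxa hxb
      rcases (hG'adj x a).1 hxa with h1 | h1 <;> rcases (hG'adj x b).1 hxb with h2 | h2
      · have hcc : c s(x, a) ≠ c s(x, b) := by
          apply hc _ h1 _ h2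
          · intro h
            rw [Sym2.congr_right] at h
            exact hab h
          · exact ⟨x, by simp, by simp⟩
        by_cases hx : x ∈ c₂.supp
        · rw [d_in x a hx ((hcl h1).1 hx), d_in x b hx ((hcl h2).1 hx)]
          exact fun h => hcc (σ.injective h)
        · rw [d_out x a (ne_uv h1) hx, d_out x b (ne_uv h2) hx]
          exact hcc
      · exact (key1 x b a h2 hab.symm h1).symm
      · exact key1 x a b h1 hab h2
      · exact absurd (Sym2.congr_right.1 (h1.trans h2.symm)) hab
    rintro e₁ h1 e₂ h2 hne ⟨x, hx1, hx2⟩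
    obtain ⟨a, rfl⟩ := Sym2.mem_iff_exists.1 hx1
    obtain ⟨b, rfl⟩ := Sym2.mem_iff_exists.1 hx2
    exact key x a b (by rintro rfl; exact hne rfl) h1 h2
  obtain ⟨f, hf, hadj, hr⟩ := hs' d hprop
  have du1' : ∀ a, a ≠ v → G'.Adj u a → d s(u, a) = α := fun a ha h =>
    du1 a (hGG' h (Or.inr ha) (Or.inl huv))
  have dv1' : ∀ a, a ≠ u → G'.Adj v a → d s(v, a) = α := fun a ha h =>
    dv1 a (hGG' h (Or.inl huv.symm) (Or.inr ha))
  have du2 : ∀ y w z, y ≠ v → w ≠ v → z ≠ v → w ≠ u → z ≠ u → z ≠ y → G'.Adj u y → G'.Adj y w →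
      G'.Adj w z → d s(y, w) = β := by
    intro y w z h1 h2 h3 h4 h5 h6 a1 a2 a3
    have b1 := hGG' a1 (Or.inr h1) (Or.inl huv)
    have b2 := hGG' a2 (Or.inr h2) (Or.inr h4)
    have b3 := hGG' a3 (Or.inr h3) (Or.inr h5)
    rw [d_out y w (ne_uv b2) (fun h => hu' ((hcl b1).2 h)), hu2 y w z b1 b2 h4 b3 h6]
  have dv2 : ∀ y w z, y ≠ u → w ≠ u → z ≠ u → w ≠ v → z ≠ v → z ≠ y → G'.Adj v y → G'.Adj y w →
      G'.Adj w z → d s(y, w) = β := by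
    intro y w z h1 h2 h3 h4 h5 h6 a1 a2 a3
    have b1 := hGG' a1 (Or.inl huv.symm) (Or.inr h1)
    have b2 := hGG' a2 (Or.inr h4) (Or.inr h2)
    have b3 := hGG' a3 (Or.inr h5) (Or.inr h3)
    have my := (hcl b1).1 hv
    rw [d_in y w my ((hcl b2).1 my), hv2 y w z b1 b2 h4 b3 h6, hσb]
  have d_vu : d s(v, u) = β := by rw [Sym2.eq_swap]; exact d_uv
  have A := no_rainbow_through hk d_uv du1' dv1' du2 dv2 f hf hadj hr
  have B := no_rainbow_through hk d_vu dv1' du1' dv2 du2 f hf hadj hr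
  have hstep : ∀ (i j : Fin k), (pathGraph k).Adj i j → G.Adj (f i) (f j) := by
    intro i j hij
    rcases (hG'adj _ _).1 (hadj i j hij) with h | h
    · exact h
    · exfalso
      rw [Sym2.eq_iff] at h
      obtain ⟨i, hi⟩ := i
      obtain ⟨j, hj⟩ := j
      rcases pathGraph_adj.1 hij with e | e <;> simp only at e <;> subst e
      · rcases h with ⟨h1, h2⟩ | ⟨h1, h2⟩
        · exact A i hj h1 h2
        · exact B i hj h1 h2
      · rcases h with ⟨h1, h2⟩ | ⟨h1, h2⟩
        · exact B j hi h2 h1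
        · exact A j hi h2 h1
  apply hfree
  refine ⟨f, hf, hstep, ?_⟩
  have hall : ∀ i j : Fin k, f i ∈ c₂.supp ↔ f j ∈ c₂.supp := by
    intro i j
    obtain ⟨p⟩ := pathGraph_preconnected k i j
    induction p with
    | nil => rfl
    | cons h _ ih => exact (hcl (hstep _ _ h)).trans ih
  intro e₁ h1 e₂ h2 hne
  have := hr e₁ h1 e₂ h2 hne
  induction e₁ with | _ a b
  induction e₂ with | _ a' b'
  simp only [Sym2.map_mk] at this ⊢
  by_cases hx : f a ∈ c₂.supp
  · rw [d_in _ _ hx ((hall _ _).1 hx), d_in _ _ ((hall _ _).1 hx) ((hall _ _).1 hx)] at this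
    exact fun h => this (congrArg σ h)
  · rw [d_out _ _ (ne_uv (hstep _ _ h1)) hx,
      d_out _ _ (ne_uv (hstep _ _ h2)) (fun h => hx ((hall _ _).1 h))] at this
    exact this

lemma card_le_edges_of_not_acyclic {W : Type} [Finite W] {H : SimpleGraph W} (hc : H.Connected)
    (ha : ¬ H.IsAcyclic) : Nat.card W ≤ Nat.card H.edgeSet := by
  rw [isAcyclic_iff_forall_adj_isBridge] at ha
  push Not at ha
  obtain ⟨x, y, hxy, hb⟩ := ha
  have h1 := (hc.connected_delete_edge_of_not_isBridge hb).card_vert_le_card_edgeSet_add_one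
  have h2 : Nat.card (H.deleteEdges {s(x, y)}).edgeSet < Nat.card H.edgeSet := by
    apply Set.ncard_lt_ncard _ (Set.toFinite _)
    rw [edgeSet_deleteEdges]
    exact Set.diff_singleton_ssubset.2 hxy
  omega

lemma card_edges_of_unique {n : ℕ} (G : SimpleGraph (Fin n))
    (h : ∀ c₁ c₂ : G.ConnectedComponent,
      (G.induce c₁.supp).IsAcyclic → (G.induce c₂.supp).IsAcyclic → c₁ = c₂) :
    n - 1 ≤ G.edgeSet.ncard := by
  classical
  have hV : n = ∑ C : G.ConnectedComponent, Nat.card C.supp := by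
    have e : (Σ C : G.ConnectedComponent, C.supp) ≃ Fin n :=
      Equiv.sigmaFiberEquiv (G.connectedComponentMk)
    have := Nat.card_congr e
    rw [Nat.card_sigma, Nat.card_fin] at this
    exact this.symm
  have hE : ∑ C : G.ConnectedComponent, Nat.card (G.induce C.supp).edgeSet ≤ G.edgeSet.ncard := by
    rw [← Nat.card_sigma]
    let F : (Σ C : G.ConnectedComponent, (G.induce C.supp).edgeSet) → G.edgeSet := fun x =>
      ⟨x.2.1.map Subtype.val, by
        obtain ⟨C, e, he⟩ := x
        induction e with | _ a b
        exact he⟩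
    have hF : Function.Injective F := by
      rintro ⟨C, e, he⟩ ⟨C', e', he'⟩ hh
      have hh' : e.map Subtype.val = e'.map Subtype.val := congrArg Subtype.val hh
      have : C = C' := by
        induction e with | _ a b
        have ha : a.1 ∈ Sym2.map Subtype.val e' := by rw [← hh']; simp
        obtain ⟨a', -, ha'⟩ := Sym2.mem_map.1 ha
        have h1 := a.2
        have h2 := a'.2
        rw [ConnectedComponent.mem_supp_iff] at h1 h2
        rw [← h1, ← h2, ha']
      subst this
      have := Sym2.map.injective Subtype.val_injective hh'
      subst this
      rfl
    exact Nat.card_le_card_of_injective F hF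
  have hle : ∑ C : G.ConnectedComponent, Nat.card C.supp ≤
      ∑ C : G.ConnectedComponent, (Nat.card (G.induce C.supp).edgeSet +
        if (G.induce C.supp).IsAcyclic then 1 else 0) := by
    apply Finset.sum_le_sum
    intro C _
    split_ifs with ha
    · exact C.connected_toSimpleGraph.card_vert_le_card_edgeSet_add_one
    · exact card_le_edges_of_not_acyclic C.connected_toSimpleGraph ha
  rw [Finset.sum_add_distrib] at hle
  have h1 : ∑ C : G.ConnectedComponent, (if (G.induce C.supp).IsAcyclic then 1 else 0) ≤ 1 := by
    rw [← Finset.card_filter]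
    apply Finset.card_le_one.2
    intro a ha b hb
    simp only [Finset.mem_filter, Finset.mem_univ, true_and] at ha hb
    exact h a b ha hb
  omega

/-- A rainbow `P_k`-saturated graph (`k ≥ 5`) has at most one acyclic
connected component; consequently it has at least `n - 1` edges. -/
theorem stmt_12 (k n : ℕ) (hk : 5 ≤ k) (G : SimpleGraph (Fin n))
    (hsat : IsRainbowSat G (SimpleGraph.pathGraph k)) :
    (∀ c₁ c₂ : G.ConnectedComponent,
      (G.induce c₁.supp).IsAcyclic → (G.induce c₂.supp).IsAcyclic → c₁ = c₂) ∧
    n - 1 ≤ G.edgeSet.ncard := by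
  have h := acyclic_comp_unique k n hk G hsat
  exact ⟨h, card_edges_of_unique G h⟩
end
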